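/- arXiv:math/0512190 — 5 statements merged into one kernel-verified Lean document; each statement's English description precedes it below -/
import Mathlib

section
/- Let q be a power of a prime, and let f_1, ..., f_r be nonconstant polynomials in F_q[x_1, ..., x_n] of total degrees d_1 ≥ d_2 ≥ ... ≥ d_r ≥ 1. Set b = max{0, ⌈(n − (d_1 + d_2 + ... + d_r))/d_1⌉}. Then q^b divides the cardinality of the common zero set {x ∈ F_q^n : f_1(x) = f_2(x) = ... = f_r(x) = 0}. -/
/-!
The proof counts zeros `p`-adically with Witt vectors. Let `q = p ^ e`, let `T` be the Teichmüller
map from `Fq` to its ring `W` of Witt vectors, and lift each `f i` to `F i (x) = ∑ T(c_w) T(x)^w`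
(`liftEval`). With `M = p ^ K * (q - 1)`, the power `F i (x) ^ M` is congruent modulo `p ^ K` to
`0` or `1` according to whether `f i` vanishes at `x` (`mk_liftEval_pow`), so modulo `p ^ K` the
number of common zeros is `∑ x, ∏ i, (1 - F i (x) ^ M)`. Expanding the product, it suffices to
treat `∑ x, ∏ i ∈ S, F i (x) ^ M` for each set `S` of indices (`pow_dvd_sum_prod_liftEval`).

The multinomial theorem turns this into a sum over families of exponents `k i w` with
`∑ w, k i w = M`. The sum over `x` of the resulting monomial in the `T(x_t)` vanishes unless
`q - 1` divides all its exponents, and it is divisible by `q` once for each variable with exponent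
`0`. By Legendre's formula the multinomial coefficients have total `p`-adic valuation at least
`(∑ s(k i w)) / (p - 1) - e * |S|`, where `s` is the sum of the base `p` digits; here it is used
that `s(M) ≤ e * (p - 1)`.

The remaining inequality (`pow_dvd_coefficient`) follows from the digit estimate
`(q - 1) * s(j) ≥ (p - 1) * ∑ l < e, ρ (p ^ l * j)` (`cycSum_le_digitSum`), where `ρ` is the least
positive residue modulo `q - 1`, with `ρ 0 = 0`. For each `l` separately, the numbers
`ρ (p ^ l * k i w)` satisfy the same congruences modulo `q - 1` as the `k i w`, and comparing
degrees gives an inequality between integers (`degree_count`); this is where the ceiling in `b`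
comes from. Adding the `e` inequalities gives divisibility by `p ^ (e * b) = q ^ b`.
-/

open Finset

/-! ### Least positive residues and sums of digits -/

/-- The least positive residue of `j` modulo `m` when `j > 0`, so a positive multiple of `m` has
residue `m` and not `0`; the residue of `0` is `0`. -/
def posRes (m j : ℕ) : ℕ := if j = 0 then 0 else (j - 1) % m + 1

lemma posRes_zero (m : ℕ) : posRes m 0 = 0 := by simp [posRes]

lemma posRes_pos {m j : ℕ} (hj : 0 < j) : 0 < posRes m j := by
  simp [posRes, hj.ne']

lemma posRes_le (m j : ℕ) : posRes m j ≤ j := by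
  unfold posRes
  split_ifs with h
  · omega
  · have := Nat.mod_le (j - 1) m
    omega

lemma posRes_modEq (m j : ℕ) : posRes m j ≡ j [MOD m] := by
  unfold posRes
  split_ifs with h
  · subst h; rfl
  · have h1 : (j - 1) % m + 1 ≡ (j - 1) + 1 [MOD m] := (Nat.mod_modEq _ _).add_right 1
    rwa [Nat.sub_add_cancel (Nat.pos_of_ne_zero h)] at h1

lemma posRes_congr {m a b : ℕ} (ha : 0 < a) (hb : 0 < b) (h : a ≡ b [MOD m]) :
    posRes m a = posRes m b := by
  have h1 : (a - 1) + 1 ≡ (b - 1) + 1 [MOD m] := by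
    rwa [Nat.sub_add_cancel ha, Nat.sub_add_cancel hb]
  have h2 : (a - 1) % m = (b - 1) % m := Nat.ModEq.add_right_cancel' 1 h1
  simp [posRes, ha.ne', hb.ne', h2]

lemma posRes_add_le (m a b : ℕ) : posRes m (a + b) ≤ posRes m a + posRes m b := by
  rcases Nat.eq_zero_or_pos (a + b) with h | h
  · rw [h, posRes_zero]; exact Nat.zero_le _
  · have hpos : 0 < posRes m a + posRes m b := by
      rcases Nat.eq_zero_or_pos a with ha | ha
      · have := posRes_pos (m := m) (j := b) (by omega); omega
      · have := posRes_pos (m := m) ha; omega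
    rw [← posRes_congr hpos h ((posRes_modEq m a).add (posRes_modEq m b))]
    exact posRes_le _ _

/-- The sum of the least positive residues of `p ^ l * j` modulo `p ^ e - 1`, for `l < e`. For
`0 ≤ j < p ^ e` these are the cyclic shifts of the `e` base `p` digits of `j`. -/
def cycSum (p e j : ℕ) : ℕ := ∑ l ∈ range e, posRes (p ^ e - 1) (p ^ l * j)

lemma cycSum_add_le (p e a b : ℕ) : cycSum p e (a + b) ≤ cycSum p e a + cycSum p e b := by
  unfold cycSum
  rw [← sum_add_distrib]
  refine sum_le_sum fun l _ => ?_
  rw [mul_add]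
  exact posRes_add_le _ _ _

lemma cycSum_mul_p {p : ℕ} (hp : 0 < p) (e j : ℕ) : cycSum p e (p * j) = cycSum p e j := by
  rcases Nat.eq_zero_or_pos j with rfl | hj
  · simp
  have h : ∀ l, p ^ l * (p * j) = p ^ (l + 1) * j := fun l => by ring
  have hwrap : posRes (p ^ e - 1) (p ^ e * j) = posRes (p ^ e - 1) (p ^ 0 * j) := by
    refine posRes_congr (by positivity) (by positivity) ?_
    refine Nat.ModEq.mul_right j ?_
    have h1 : p ^ e - 1 + 1 = p ^ e := Nat.sub_add_cancel (Nat.pow_pos hp)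
    rw [pow_zero]
    conv_lhs => rw [← h1]
    simp [Nat.ModEq]
  unfold cycSum
  simp_rw [h]
  -- Both splittings of the sum over `l ≤ e` agree, so shifting `l` only moves a term around.
  have h2 := sum_range_succ (fun l => posRes (p ^ e - 1) (p ^ l * j)) e
  rw [sum_range_succ'] at h2
  omega

lemma cycSum_le_mul {p : ℕ} (hp : 0 < p) (e d : ℕ) : (p - 1) * cycSum p e d ≤ (p ^ e - 1) * d := by
  have h : cycSum p e d ≤ ∑ l ∈ range e, p ^ l * d := sum_le_sum fun l _ => posRes_le _ _
  rw [← sum_mul] at h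
  calc (p - 1) * cycSum p e d ≤ (p - 1) * ((∑ l ∈ range e, p ^ l) * d) :=
        Nat.mul_le_mul_left _ h
    _ = (p ^ e - 1) * d := by rw [← mul_assoc, mul_comm (p - 1), geom_sum_mul_of_one_le (by omega)]

/-- By subadditivity and invariance under multiplication by `p`, the bound on single digits extends
to all numbers. -/
lemma cycSum_le_digitSum {p : ℕ} (hp : 1 < p) (e j : ℕ) :
    (p - 1) * cycSum p e j ≤ (p ^ e - 1) * (p.digits j).sum := by
  induction j using Nat.strong_induction_on with
  | _ j ih =>
    rcases Nat.eq_zero_or_pos j with rfl | hj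
    · simp [cycSum, posRes_zero]
    · rw [Nat.digits_def' hp hj, List.sum_cons, mul_add]
      have h1 : cycSum p e j ≤ cycSum p e (j % p) + cycSum p e (j / p) := by
        conv_lhs => rw [← Nat.mod_add_div j p]
        refine (cycSum_add_le _ _ _ _).trans ?_
        rw [cycSum_mul_p (by omega)]
      calc (p - 1) * cycSum p e j
          ≤ (p - 1) * (cycSum p e (j % p) + cycSum p e (j / p)) := Nat.mul_le_mul_left _ h1
        _ = (p - 1) * cycSum p e (j % p) + (p - 1) * cycSum p e (j / p) := mul_add _ _ _
        _ ≤ _ := add_le_add (cycSum_le_mul (by omega) _ _) (ih _ (Nat.div_lt_self hj hp))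

lemma digitSum_le_of_lt_pow {p : ℕ} (hp : 1 < p) :
    ∀ (e m : ℕ), m < p ^ e → (p.digits m).sum ≤ e * (p - 1)
  | 0, m, h => by
    have : m = 0 := by simpa using h
    simp [this]
  | e + 1, m, h => by
    rcases Nat.eq_zero_or_pos m with rfl | hm
    · simp
    · rw [Nat.digits_def' hp hm, List.sum_cons]
      have h1 := digitSum_le_of_lt_pow hp e (m / p)
        (Nat.div_lt_of_lt_mul (by rwa [pow_succ'] at h))
      have h2 := Nat.mod_lt m (show 0 < p by omega)
      rw [add_mul]
      omega

/-- The exponent `p ^ K * (q - 1)` to which the lifts are raised has digit sum at most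
`e * (p - 1)`, independently of `K`. -/
lemma digitSum_exponent_le {p : ℕ} (hp : 1 < p) {e : ℕ} (he : 0 < e) (K : ℕ) :
    (p.digits (p ^ K * (p ^ e - 1))).sum ≤ e * (p - 1) := by
  have h1 : 1 < p ^ e := Nat.one_lt_pow he.ne' hp
  rw [Nat.digits_base_pow_mul hp (by omega), List.sum_append]
  simpa using digitSum_le_of_lt_pow hp e (p ^ e - 1) (by omega)

lemma padicValNat_finset_prod {α : Type*} (p : ℕ) [Fact p.Prime] (S : Finset α) (g : α → ℕ)
    (hg : ∀ w ∈ S, g w ≠ 0) : padicValNat p (∏ w ∈ S, g w) = ∑ w ∈ S, padicValNat p (g w) := by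
  classical
  induction S using Finset.induction_on with
  | empty => simp
  | insert x S hx ih =>
    rw [prod_insert hx, sum_insert hx,
      padicValNat.mul (hg x (mem_insert_self _ _))
        (prod_ne_zero_iff.2 fun w hw => hg w (mem_insert_of_mem hw)),
      ih fun w hw => hg w (mem_insert_of_mem hw)]

/-- Legendre's formula for multinomial coefficients, as a lower bound for the valuation. -/
lemma sum_digitSum_le {α : Type*} (p : ℕ) [hp : Fact p.Prime] (S : Finset α) (k : α → ℕ) :
    ∑ w ∈ S, (p.digits (k w)).sum ≤
      (p - 1) * padicValNat p (Nat.multinomial S k) + (p.digits (∑ w ∈ S, k w)).sum := by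
  have hspec := congrArg (padicValNat p) (Nat.multinomial_spec S k)
  rw [padicValNat.mul (prod_ne_zero_iff.2 fun w _ => Nat.factorial_ne_zero _)
      (Nat.multinomial_pos S k).ne', padicValNat_finset_prod p _ _
      fun w _ => Nat.factorial_ne_zero _] at hspec
  have h2 := congrArg (fun x => (p - 1) * x) hspec
  simp only [mul_add, mul_sum, sub_one_mul_padicValNat_factorial] at h2
  have h3 : ∑ w ∈ S, (k w - (p.digits (k w)).sum) + ∑ w ∈ S, (p.digits (k w)).sum
      = ∑ w ∈ S, k w := by
    rw [← sum_add_distrib]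
    exact sum_congr rfl fun w _ => Nat.sub_add_cancel (Nat.digit_sum_le p _)
  have h4 := Nat.digit_sum_le p (∑ w ∈ S, k w)
  omega

/-! ### The valuation of a term of the expansion -/

/-- The degree comparison. Let `S i` be the exponent vectors of polynomials of degree at most
`d i ≤ D`, taken with multiplicities `a i w`, such that the multiplicities of each polynomial sum to
a positive multiple of `Q`, and the exponents of each variable to a multiple of `Q`, positive for
the variables outside `Z`. Writing
`∑ w, a i w = Q * (k i + 1)`, the total degree gives
`n - #Z ≤ ∑ (k i + 1) * d i ≤ ∑ d i + D * ∑ k i`, hence `b ≤ ∑ k i + #Z`. -/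
lemma degree_count {ι : Type*} [Fintype ι] {n Q b D : ℕ} (hQ : 0 < Q) (hD : 0 < D)
    (S : ι → Finset (Fin n →₀ ℕ)) (d : ι → ℕ) (hd : ∀ i, d i ≤ D)
    (hdeg : ∀ i, ∀ w ∈ S i, ∑ t, w t ≤ d i)
    (hb : ∀ c, n ≤ ∑ i, d i + c * D → b ≤ c)
    (a : ι → (Fin n →₀ ℕ) → ℕ)
    (ha : ∀ i, Q ∣ ∑ w ∈ S i, a i w) (hpos : ∀ i, 0 < ∑ w ∈ S i, a i w)
    (hx : ∀ t, Q ∣ ∑ i, ∑ w ∈ S i, a i w * w t)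
    (Z : Finset (Fin n)) (hZ : ∀ t ∉ Z, 0 < ∑ i, ∑ w ∈ S i, a i w * w t) :
    Q * (b + Fintype.card ι) ≤ ∑ i, ∑ w ∈ S i, a i w + Q * #Z := by
  have hk : ∀ i, ∃ k, ∑ w ∈ S i, a i w = Q * (k + 1) := fun i => by
    obtain ⟨k, hk⟩ := ha i
    refine ⟨k - 1, ?_⟩
    have : 0 < k := Nat.pos_of_ne_zero fun h => by
      have := hpos i
      simp [hk, h] at this
    rw [hk, Nat.sub_add_cancel this]
  choose k hk using hk
  have hsum : ∑ i, ∑ w ∈ S i, a i w = Q * (∑ i, k i + Fintype.card ι) := by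
    simp_rw [hk, ← mul_sum, sum_add_distrib]
    simp
  have h1 : Q * (n - #Z) ≤ ∑ t, ∑ i, ∑ w ∈ S i, a i w * w t := by
    calc Q * (n - #Z) = ∑ t ∈ Zᶜ, Q := by simp [card_compl, mul_comm]
      _ ≤ ∑ t ∈ Zᶜ, ∑ i, ∑ w ∈ S i, a i w * w t :=
          sum_le_sum fun t ht => Nat.le_of_dvd (hZ t (by simpa using ht)) (hx t)
      _ ≤ _ := sum_le_sum_of_subset (subset_univ _)
  have h2 : ∑ t, ∑ i, ∑ w ∈ S i, a i w * w t ≤ Q * ∑ i, (k i + 1) * d i := by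
    rw [sum_comm, mul_sum]
    refine sum_le_sum fun i _ => ?_
    rw [sum_comm, ← mul_assoc, ← hk, sum_mul]
    refine sum_le_sum fun w hw => ?_
    rw [← mul_sum]
    exact Nat.mul_le_mul_left _ (hdeg i w hw)
  have h3 : n - #Z ≤ ∑ i, (k i + 1) * d i := Nat.le_of_mul_le_mul_left (h1.trans h2) hQ
  have h4 : ∑ i, (k i + 1) * d i ≤ (∑ i, k i) * D + ∑ i, d i := by
    rw [sum_mul, ← sum_add_distrib]
    refine sum_le_sum fun i _ => ?_
    rw [add_mul, one_mul]
    exact add_le_add_left (Nat.mul_le_mul_left _ (hd i)) _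
  have h5 : #Z ≤ #Z * D := Nat.le_mul_of_pos_right _ hD
  have h6 : b ≤ ∑ i, k i + #Z := hb _ (by rw [add_mul]; omega)
  rw [hsum, ← mul_add]
  exact Nat.mul_le_mul_left _ (by omega)

/-- Scaling by `c` and passing to residues preserves the weighted congruences. -/
lemma posRes_sum_modEq {α : Type*} (m : ℕ) (S : Finset α) (k v : α → ℕ) (c : ℕ) :
    ∑ w ∈ S, posRes m (c * k w) * v w ≡ c * ∑ w ∈ S, k w * v w [MOD m] := by
  classical
  rw [mul_sum]
  induction S using Finset.induction_on with
  | empty => rfl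
  | insert x S hx ih =>
    rw [sum_insert hx, sum_insert hx, ← mul_assoc]
    exact ((posRes_modEq m _).mul_right _).add ih

lemma sum_modEq {α : Type*} (m : ℕ) (S : Finset α) (g h : α → ℕ)
    (H : ∀ i ∈ S, g i ≡ h i [MOD m]) : ∑ i ∈ S, g i ≡ ∑ i ∈ S, h i [MOD m] := by
  unfold Nat.ModEq
  rw [sum_nat_mod, sum_nat_mod S m h]
  exact congrArg (· % m) (sum_congr rfl H)

/-- The divisibility of one term in the expansion of `∑ x, ∏ i, F i (x) ^ M`: the product of its
multinomial coefficients, times one factor `q` for every variable that does not occur in it, is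
divisible by `q ^ b`. -/
lemma pow_dvd_coefficient {ι : Type*} [Fintype ι] {p : ℕ} [hp : Fact p.Prime] {e n K b D : ℕ}
    (he : 0 < e) (hD : 0 < D)
    (S : ι → Finset (Fin n →₀ ℕ)) (d : ι → ℕ) (hd : ∀ i, d i ≤ D)
    (hdeg : ∀ i, ∀ w ∈ S i, ∑ t, w t ≤ d i)
    (hb : ∀ c, n ≤ ∑ i, d i + c * D → b ≤ c)
    (k : ι → (Fin n →₀ ℕ) → ℕ) (hk : ∀ i, ∑ w ∈ S i, k i w = p ^ K * (p ^ e - 1))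
    (hx : ∀ t, p ^ e - 1 ∣ ∑ i, ∑ w ∈ S i, k i w * w t)
    (Z : Finset (Fin n)) (hZ : ∀ t ∉ Z, 0 < ∑ i, ∑ w ∈ S i, k i w * w t) :
    p ^ (e * b) ∣ (∏ i, Nat.multinomial (S i) (k i)) * (p ^ e) ^ #Z := by
  have hp1 : 1 < p := hp.out.one_lt
  have hQ : 0 < p ^ e - 1 := by have := Nat.one_lt_pow he.ne' hp1; omega
  set Q := p ^ e - 1 with hQdef
  set V : ι → ℕ := fun i => padicValNat p (Nat.multinomial (S i) (k i)) with hV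
  have hdig : ∀ i, ∑ w ∈ S i, (p.digits (k i w)).sum ≤ (p - 1) * (V i + e) := fun i => by
    have h1 := sum_digitSum_le p (S i) (k i)
    have h2 := digitSum_exponent_le hp1 he K
    rw [hk i] at h1
    rw [mul_add, mul_comm (p - 1) e]
    exact h1.trans (add_le_add_right h2 _)
  -- For each `l`, the residues of `p ^ l * k i w` satisfy the hypotheses of the degree comparison.
  have hblock : ∀ l ∈ range e, Q * (b + Fintype.card ι) ≤
      ∑ i, ∑ w ∈ S i, posRes Q (p ^ l * k i w) + Q * #Z := fun l _ => by
    have hpl : 0 < p ^ l := Nat.pow_pos hp.out.pos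
    refine degree_count hQ hD S d hd hdeg hb (fun i w => posRes Q (p ^ l * k i w)) ?_ ?_ ?_ Z ?_
    · intro i
      have h := posRes_sum_modEq Q (S i) (k i) (fun _ => 1) (p ^ l)
      simp only [mul_one] at h
      rw [hk i] at h
      exact (h.dvd_iff dvd_rfl).2 (Dvd.intro_left _ (mul_assoc _ _ _))
    · intro i
      have : 0 < ∑ w ∈ S i, k i w := by rw [hk i]; positivity
      obtain ⟨w, hw, hw0⟩ := exists_ne_zero_of_sum_ne_zero this.ne'
      exact sum_pos' (fun _ _ => Nat.zero_le _)
        ⟨w, hw, posRes_pos (Nat.mul_pos hpl (Nat.pos_of_ne_zero hw0))⟩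
    · intro t
      have h := sum_modEq Q univ _ _ fun i _ => posRes_sum_modEq Q (S i) (k i) (fun w => w t) (p ^ l)
      rw [← mul_sum] at h
      exact (h.dvd_iff dvd_rfl).2 (Dvd.dvd.mul_left (hx t) _)
    · intro t ht
      obtain ⟨i, hi, hi0⟩ := exists_ne_zero_of_sum_ne_zero (hZ t ht).ne'
      obtain ⟨w, hw, hw0⟩ := exists_ne_zero_of_sum_ne_zero hi0
      refine sum_pos' (fun _ _ => Nat.zero_le _) ⟨i, hi, sum_pos' (fun _ _ => Nat.zero_le _)
        ⟨w, hw, Nat.mul_pos (posRes_pos (Nat.mul_pos hpl ?_)) ?_⟩⟩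
      · exact Nat.pos_of_ne_zero (left_ne_zero_of_mul hw0)
      · exact Nat.pos_of_ne_zero (right_ne_zero_of_mul hw0)
  have hsum := sum_le_sum hblock
  rw [sum_const, card_range, smul_eq_mul, sum_add_distrib, sum_const, card_range, smul_eq_mul]
    at hsum
  have hswap : ∑ l ∈ range e, ∑ i, ∑ w ∈ S i, posRes Q (p ^ l * k i w)
      = ∑ i, ∑ w ∈ S i, cycSum p e (k i w) := by
    rw [sum_comm]
    refine sum_congr rfl fun i _ => ?_
    rw [sum_comm]
    rfl
  rw [hswap] at hsum
  have hcyc : (p - 1) * ∑ i, ∑ w ∈ S i, cycSum p e (k i w)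
      ≤ (p - 1) * (Q * (∑ i, V i + Fintype.card ι * e)) := by
    calc (p - 1) * ∑ i, ∑ w ∈ S i, cycSum p e (k i w)
        = ∑ i, ∑ w ∈ S i, (p - 1) * cycSum p e (k i w) := by simp_rw [mul_sum]
      _ ≤ ∑ i, ∑ w ∈ S i, Q * (p.digits (k i w)).sum :=
          sum_le_sum fun i _ => sum_le_sum fun w _ => cycSum_le_digitSum hp1 e _
      _ = ∑ i, Q * ∑ w ∈ S i, (p.digits (k i w)).sum := by simp_rw [mul_sum]
      _ ≤ ∑ i, Q * ((p - 1) * (V i + e)) :=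
          sum_le_sum fun i _ => Nat.mul_le_mul_left _ (hdig i)
      _ = (p - 1) * (Q * (∑ i, V i + Fintype.card ι * e)) := by
          simp_rw [← mul_sum, sum_add_distrib]
          simp
          ring
  have hcyc' := Nat.le_of_mul_le_mul_left hcyc (by omega)
  have hfin : Q * (e * b + e * Fintype.card ι) ≤
      Q * (∑ i, V i + e * #Z + e * Fintype.card ι) := by
    calc Q * (e * b + e * Fintype.card ι) = e * (Q * (b + Fintype.card ι)) := by ring
      _ ≤ _ := hsum
      _ ≤ Q * (∑ i, V i + Fintype.card ι * e) + e * (Q * #Z) := add_le_add_left hcyc' _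
      _ = _ := by ring
  have hfin' := Nat.le_of_mul_le_mul_left hfin hQ
  have hle : e * b ≤ ∑ i, V i + e * #Z := by omega
  refine (pow_dvd_pow p hle).trans ?_
  rw [pow_add, pow_mul, ← prod_pow_eq_pow_sum]
  exact mul_dvd_mul_right (prod_dvd_prod_of_dvd _ _ fun i _ => pow_padicValNat_dvd) _

/-! ### Teichmüller lifts and the expansion -/

/-- Divisibility of a natural number by a power of `p` can be tested in the Witt vectors, which are a
domain of characteristic zero with residue field `F` of characteristic `p`. -/
lemma natCast_dvd_of_witt {F : Type} [Field F] [Finite F] {p : ℕ} [hp : Fact p.Prime] [CharP F p] :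
    ∀ (m N : ℕ), ((p : WittVector p F) ^ m ∣ (N : WittVector p F)) → p ^ m ∣ N
  | 0, N, _ => by simp
  | m + 1, N, h => by
    have h0 : WittVector.constantCoeff (N : WittVector p F) = 0 := by
      obtain ⟨x, hx⟩ := h
      rw [hx, map_mul, map_pow, map_natCast, CharP.cast_eq_zero, zero_pow (by omega), zero_mul]
    rw [map_natCast, CharP.cast_eq_zero_iff F p] at h0
    obtain ⟨N', rfl⟩ := h0
    rw [pow_succ', Nat.cast_mul] at h
    rw [pow_succ']
    exact mul_dvd_mul_left p
      (natCast_dvd_of_witt m N' ((mul_dvd_mul_iff_left (WittVector.p_nonzero p F)).1 h))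

lemma sum_teichmuller_pow_eq_zero {F : Type} [Field F] [Fintype F] {p : ℕ} [hp : Fact p.Prime]
    [CharP F p] {m : ℕ} (hm : ¬ Fintype.card F - 1 ∣ m) :
    ∑ y : F, WittVector.teichmuller p y ^ m = 0 := by
  rw [← FiniteField.forall_pow_eq_one_iff (K := F)] at hm
  push Not at hm
  obtain ⟨u, hu⟩ := hm
  have hu' : WittVector.teichmuller p (u : F) ^ m ≠ 1 := fun h => hu <| by
    have := congrArg WittVector.constantCoeff h
    rw [map_pow, map_one] at this
    change (WittVector.teichmuller p (u : F)).coeff 0 ^ m = 1 at this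
    rw [WittVector.teichmuller_coeff_zero] at this
    exact Units.ext (by simpa using this)
  have h1 : ∑ y : F, WittVector.teichmuller p y ^ m =
      WittVector.teichmuller p (u : F) ^ m * ∑ y : F, WittVector.teichmuller p y ^ m := by
    rw [mul_sum, ← Equiv.sum_comp (Equiv.mulLeft₀ (u : F) u.ne_zero)]
    refine sum_congr rfl fun y _ => ?_
    rw [show Equiv.mulLeft₀ (u : F) u.ne_zero y = u * y from rfl, map_mul, mul_pow]
  have h2 : (WittVector.teichmuller p (u : F) ^ m - 1) *
      ∑ y : F, WittVector.teichmuller p y ^ m = 0 := by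
    rw [sub_mul, one_mul, ← h1, sub_self]
  exact (mul_eq_zero.1 h2).resolve_left (sub_ne_zero.2 hu')

/-- The value at the Teichmüller point `T(x)` of the polynomial obtained from `f` by replacing each
coefficient by its Teichmüller representative. -/
noncomputable def liftEval {F : Type} [Field F] (p : ℕ) [Fact p.Prime] {n : ℕ}
    (f : MvPolynomial (Fin n) F) (x : Fin n → F) : WittVector p F :=
  ∑ w ∈ f.support, WittVector.teichmuller p (f.coeff w) *
    ∏ t, WittVector.teichmuller p (x t) ^ w t

lemma constantCoeff_liftEval {F : Type} [Field F] (p : ℕ) [Fact p.Prime] {n : ℕ}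
    (f : MvPolynomial (Fin n) F) (x : Fin n → F) :
    WittVector.constantCoeff (liftEval p f x) = MvPolynomial.eval x f := by
  have hT : ∀ a : F, WittVector.constantCoeff (WittVector.teichmuller p a) = a :=
    fun a => WittVector.teichmuller_coeff_zero p a
  simp only [liftEval, map_sum, map_mul, map_prod, map_pow, hT, MvPolynomial.eval_eq']

lemma p_dvd_of_constantCoeff {F : Type} [Field F] [Finite F] {p : ℕ} [Fact p.Prime] [CharP F p]
    {x : WittVector p F} (hx : WittVector.constantCoeff x = 0) : (p : WittVector p F) ∣ x :=
  Ideal.mem_span_singleton.1 ((WittVector.mem_span_p_iff_coeff_zero_eq_zero x).2 hx)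

/-- Modulo `p ^ K`, the power with exponent `p ^ K * (q - 1)` of the lifted value is the indicator
of `f` not vanishing at `x`. -/
lemma mk_liftEval_pow {F : Type} [Field F] [Fintype F] {p : ℕ} [hp : Fact p.Prime] [CharP F p]
    {n : ℕ} (f : MvPolynomial (Fin n) F) (x : Fin n → F) (K : ℕ)
    [Decidable (MvPolynomial.eval x f = 0)] :
    Ideal.Quotient.mk (Ideal.span {(p : WittVector p F) ^ K})
      (liftEval p f x ^ (p ^ K * (Fintype.card F - 1))) =
        if MvPolynomial.eval x f = 0 then 0 else 1 := by
  have hq : 0 < Fintype.card F - 1 := by have := Fintype.one_lt_card (α := F); omega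
  split_ifs with h
  · rw [Ideal.Quotient.eq_zero_iff_mem, Ideal.mem_span_singleton]
    have h1 := p_dvd_of_constantCoeff ((constantCoeff_liftEval p f x).trans h)
    refine (pow_dvd_pow _ ?_).trans (pow_dvd_pow_of_dvd h1 _)
    exact (Nat.lt_pow_self hp.out.one_lt).le.trans (Nat.le_mul_of_pos_right _ hq)
  · rw [← map_one (Ideal.Quotient.mk (Ideal.span {(p : WittVector p F) ^ K})), Ideal.Quotient.eq,
      Ideal.mem_span_singleton, mul_comm (p ^ K), pow_mul]
    have h1 : (p : WittVector p F) ∣ liftEval p f x ^ (Fintype.card F - 1) - 1 := by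
      refine p_dvd_of_constantCoeff ?_
      rw [map_sub, map_pow, constantCoeff_liftEval, map_one,
        FiniteField.pow_card_sub_one_eq_one _ h, sub_self]
    have h2 := dvd_sub_pow_of_dvd_sub h1 K
    rw [one_pow] at h2
    exact (pow_dvd_pow _ (Nat.le_succ K)).trans h2

/-- Every product of powers of lifted values, summed over all points, is divisible by `q ^ b`. The
hypothesis `hb` says that `b` is at most the ceiling of `(n - ∑ deg f i) / D`, or `0` if that is
negative. -/
lemma pow_dvd_sum_prod_liftEval {F : Type} [Field F] [Fintype F] {p : ℕ} [hp : Fact p.Prime]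
    [CharP F p] {e : ℕ} (he : 0 < e) (hcard : Fintype.card F = p ^ e)
    {ι : Type*} [Fintype ι] {n b D : ℕ} (K : ℕ) (hD : 0 < D)
    (f : ι → MvPolynomial (Fin n) F) (hd : ∀ i, (f i).totalDegree ≤ D)
    (hb : ∀ c, n ≤ ∑ i, (f i).totalDegree + c * D → b ≤ c) :
    (p : WittVector p F) ^ (e * b) ∣
      ∑ x : Fin n → F, ∏ i, liftEval p (f i) x ^ (p ^ K * (Fintype.card F - 1)) := by
  classical
  simp_rw [liftEval, sum_pow_eq_sum_piAntidiag, prod_univ_sum]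
  rw [sum_comm]
  refine dvd_sum fun k hk => ?_
  rw [Fintype.mem_piFinset] at hk
  have hk' : ∀ i, ∑ w ∈ (f i).support, k i w = p ^ K * (p ^ e - 1) := fun i => by
    rw [← hcard]; exact (mem_piAntidiag.1 (hk i)).1
  set E : Fin n → ℕ := fun t => ∑ i, ∑ w ∈ (f i).support, k i w * w t with hE
  have hterm : ∀ x : Fin n → F,
      ∏ i, (((Nat.multinomial (f i).support (k i) : ℕ) : WittVector p F) *
        ∏ w ∈ (f i).support, (WittVector.teichmuller p ((f i).coeff w) *
          ∏ t, WittVector.teichmuller p (x t) ^ w t) ^ k i w) =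
      (∏ i, ∏ w ∈ (f i).support, WittVector.teichmuller p ((f i).coeff w) ^ k i w) *
      (((∏ i, Nat.multinomial (f i).support (k i) : ℕ) : WittVector p F) *
        ∏ t, WittVector.teichmuller p (x t) ^ E t) := by
    intro x
    have h1 : ∏ t, WittVector.teichmuller p (x t) ^ E t =
        ∏ i, ∏ w ∈ (f i).support, (∏ t, WittVector.teichmuller p (x t) ^ w t) ^ k i w := by
      simp_rw [hE, ← prod_pow_eq_pow_sum, ← prod_pow, ← pow_mul]
      rw [prod_comm]
      refine prod_congr rfl fun i _ => ?_
      rw [prod_comm]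
      simp_rw [mul_comm]
    rw [h1]
    simp_rw [mul_pow, prod_mul_distrib, Nat.cast_prod]
    ring
  simp_rw [hterm]
  rw [← mul_sum, ← mul_sum]
  refine Dvd.dvd.mul_left ?_ _
  have hsum : ∑ x : Fin n → F, ∏ t, WittVector.teichmuller p (x t) ^ E t =
      ∏ t, ∑ y : F, WittVector.teichmuller p y ^ E t := by
    rw [prod_univ_sum, Fintype.piFinset_univ]
  rw [hsum]
  -- The character sum vanishes as soon as some exponent is not a multiple of `q - 1`.
  by_cases hx : ∀ t, p ^ e - 1 ∣ E t
  · set Z : Finset (Fin n) := {t | E t = 0} with hZ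
    have hdvd := pow_dvd_coefficient (p := p) he hD (fun i => (f i).support)
      (fun i => (f i).totalDegree) hd
      (fun i w hw => by
        have := MvPolynomial.le_totalDegree hw
        rwa [Finsupp.sum_fintype _ _ fun _ => rfl] at this)
      hb k hk' hx Z (fun t ht => Nat.pos_of_ne_zero fun h0 => ht (mem_filter.2 ⟨mem_univ t, h0⟩))
    have hdvd' := (Nat.castRingHom (WittVector p F)).map_dvd hdvd
    simp only [map_mul, map_pow] at hdvd'
    refine hdvd'.trans (mul_dvd_mul_left _ ?_)
    rw [← prod_mul_prod_compl Z]
    refine Dvd.dvd.mul_right (dvd_of_eq ?_) _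
    rw [← prod_const]
    refine prod_congr rfl fun t ht => ?_
    have : E t = 0 := (mem_filter.1 ht).2
    simp [this, hcard]
  · push Not at hx
    obtain ⟨t, ht⟩ := hx
    rw [prod_eq_zero (mem_univ t) (sum_teichmuller_pow_eq_zero (by rwa [hcard])), mul_zero]
    exact dvd_zero _


/-- **The Ax–Katz theorem.** Let `Fq` be a finite field with `q` elements (`q` a prime
power), and let `f 0, …, f (r-1)` be nonconstant polynomials in `Fq[x₁, …, xₙ]` of total
degrees `d₁ ≥ d₂ ≥ … ≥ d_r ≥ 1` (the degrees are weakly decreasing in the index).  Set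
`b = max {0, ⌈(n − (d₁ + … + d_r)) / d₁⌉}`.  Then `q ^ b` divides the number of common
zeros of the `f i` in `Fq ^ n`. -/
theorem ax_katz_affine (Fq : Type) [Field Fq] [Fintype Fq]
    (n r : ℕ) (hr : 0 < r)
    (f : Fin r → MvPolynomial (Fin n) Fq)
    (hnonconst : ∀ i, 0 < (f i).totalDegree)
    (hsorted : ∀ i j : Fin r, i ≤ j → (f j).totalDegree ≤ (f i).totalDegree)
    (b : ℕ)
    (hb : (b : ℤ) = max 0
      ⌈((n : ℚ) - ∑ i, ((f i).totalDegree : ℚ)) / ((f ⟨0, hr⟩).totalDegree : ℚ)⌉) :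
    (Fintype.card Fq) ^ b ∣
      Nat.card {x : Fin n → Fq // ∀ i, MvPolynomial.eval x (f i) = 0} := by
  classical
  obtain ⟨p, hchar⟩ := CharP.exists Fq
  obtain ⟨⟨e, he⟩, hprime, hcard⟩ := FiniteField.card Fq p
  replace hcard : Fintype.card Fq = p ^ e := hcard
  have : Fact p.Prime := ⟨hprime⟩
  set D := (f ⟨0, hr⟩).totalDegree with hDdef
  have hD : 0 < D := hnonconst _
  have hle : ∀ i, (f i).totalDegree ≤ D := fun i => hsorted _ _ (Nat.zero_le _)
  have hb' : ∀ c, n ≤ ∑ i, (f i).totalDegree + c * D → b ≤ c := fun c hc => by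
    have hc' : (n : ℚ) ≤ ∑ i, ((f i).totalDegree : ℚ) + c * D := by exact_mod_cast hc
    have h1 : ⌈((n : ℚ) - ∑ i, ((f i).totalDegree : ℚ)) / (D : ℚ)⌉ ≤ (c : ℤ) := by
      rw [Int.ceil_le, div_le_iff₀ (by exact_mod_cast hD)]
      push_cast
      linarith
    have h2 : (b : ℤ) ≤ c := hb.trans_le (max_le (Int.natCast_nonneg c) h1)
    exact_mod_cast h2
  rw [hcard, ← pow_mul]
  refine natCast_dvd_of_witt (F := Fq) _ _ ?_
  rw [← Ideal.mem_span_singleton, ← Ideal.Quotient.eq_zero_iff_mem]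
  set π := Ideal.Quotient.mk (Ideal.span {(p : WittVector p Fq) ^ (e * b)}) with hπ
  set M := p ^ (e * b) * (Fintype.card Fq - 1) with hM
  have hcount : π ((Nat.card {x : Fin n → Fq // ∀ i, MvPolynomial.eval x (f i) = 0} : ℕ)) =
      π (∑ x : Fin n → Fq, ∏ i, (1 + -liftEval p (f i) x ^ M)) := by
    rw [Nat.card_eq_fintype_card, Fintype.card_subtype, map_natCast, map_sum, card_filter,
      Nat.cast_sum]
    refine sum_congr rfl fun x _ => ?_
    simp_rw [map_prod, map_add, map_neg, map_one, hπ, hM, mk_liftEval_pow]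
    split_ifs with h
    · simp [h]
    · push Not at h
      obtain ⟨i, hi⟩ := h
      rw [prod_eq_zero (mem_univ i) (by simp [hi])]
      simp
  rw [hcount, Ideal.Quotient.eq_zero_iff_mem, Ideal.mem_span_singleton]
  simp_rw [prod_add, prod_const_one, one_mul]
  rw [sum_comm]
  refine dvd_sum fun S _ => ?_
  simp_rw [prod_neg, ← mul_sum]
  refine Dvd.dvd.mul_left ?_ _
  simp_rw [← prod_coe_sort (univ \ S)]
  refine pow_dvd_sum_prod_liftEval he hcard (e * b) hD
    (fun i : ↥(univ \ S) => f i) (fun i => hle i) fun c hc => hb' c (hc.trans ?_)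
  refine add_le_add_left ?_ _
  rw [sum_coe_sort (univ \ S) (fun i => (f i).totalDegree)]
  exact sum_le_sum_of_subset (subset_univ _)
end

section
/- Let q be a power of a prime, and let f_1, ..., f_r be nonzero homogeneous polynomials in F_q[x_0, ..., x_n] of degrees d_1 ≥ d_2 ≥ ... ≥ d_r ≥ 1. Let X(F_q) denote the set of points of the projective space P^n(F_q) (one-dimensional linear subspaces of F_q^{n+1}) on whose nonzero representatives all the f_i vanish. Set κ = max{0, ⌊(n − d_2 − ... − d_r)/d_1⌋} (for r = 1 this is ⌊n/d_1⌋). Then |X(F_q)| ≡ 1 + q + q² + ... + q^n (mod q^κ), i.e. the number of F_q-rational points of the projective zero locus X is congruent to |P^n(F_q)| modulo q^κ. -/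
/-!
Let `q = p ^ a = |F|`. The affine cone over `X` has `N = 1 + (q - 1) |X(F)|` points, and
`(q - 1) |ℙⁿ(F)| = q ^ (n + 1) - 1`, so the congruence for `|X(F)|` modulo `q ^ κ` is equivalent to
`q ^ κ ∣ N` (here `κ ≤ n + 1`). Thus the affine theorem (`AxKatz.affine`) is what has to be shown.

It is proved by means of Stickelberger's estimate for Gauss sums. One works in the integral closure
of the Witt vectors `W(F)` in an algebraic closure of their fraction field, with the Teichmüller
character `T`, a primitive `p`-th root of unity `ζ`, and the additive character `ψ = ζ ^ Tr`
(`exists_lift`, `exists_addChar`). By orthogonality (`expSum_eq_card`),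
`q ^ r * N = ∑ ψ (∑ i, y i * f i x)`, the sum being over all `(y, x) ∈ F ^ r × F ^ (n + 1)`.

Write `ψ = ∑ m < q, c m * T ^ m`. Stickelberger's bound (`gauss_dvd`) says that `c m` is divisible by
`(ζ - 1) ^ k`, where `k = k m` is the least number of powers of `p` whose sum is `m` modulo `q - 1`.
To see this, expand `ψ t = (1 + (ζ - 1)) ^ n t` binomially, `n t` being a natural number close to
the lifted trace `∑ T t ^ p ^ i`: the `j`-th binomial moment is, up to `j!` and a negligible error,
a combination of moments of powers of the lifted trace of exponents at most `j`, and for `j < k`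
these vanish by orthogonality of multiplicative characters (`moment_eq_zero`).

Inserting this expansion for each monomial of `∑ i, y i * f i x` and summing over `(y, x)`, only
those systems of exponents `m` survive for which every variable has total weight divisible by
`q - 1`, and a variable of weight zero contributes a factor `q` (`dvd_expSum`). It remains to bound
`∑ j, k (m j)` from below. Multiplying each `m j`, written as a sum of `k (m j)` powers of `p`, by
`p ^ l` modulo `q - 1` for `l < a` gives `a` systems with the same divisibility
(`exists_shifts`); comparing weights of the `y i` and of the `x v` by means of the degrees
(`weight_ineq`) for each, and adding up, yields `shifted_weight_ineq`. As `p` divides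
`(ζ - 1) ^ (p - 1)`, every surviving term is divisible by `q ^ (r + κ)`, hence so is `q ^ r * N`,
first in the ring of integers and then in `ℤ` (`pow_dvd_of_cast_dvd`).
-/

namespace AxKatz

open Finset

/-! ### Teichmüller lifts and roots of unity in characteristic zero -/

section Witt

variable {p : ℕ} [hp : Fact p.Prime] {F : Type} [Field F] [Fintype F] [CharP F p]

theorem p_dvd_of_coeff_zero (x : WittVector p F) (hx : x.coeff 0 = 0) :
    (p : WittVector p F) ∣ x := by
  by_cases h0 : x = 0
  · simp [h0]
  obtain ⟨m, b, hb, hxb⟩ := WittVector.exists_eq_pow_p_mul x h0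
  rcases m with _ | m
  · simp only [pow_zero, one_mul] at hxb
    exact absurd (hxb ▸ hx) hb
  · rw [hxb, pow_succ', mul_assoc]
    exact dvd_mul_right _ _

/-- Frobenius-invariant Witt vectors lie in `ℤ_p`, so natural numbers approximate them. -/
theorem exists_nat_approx (L : ℕ) : ∀ x : WittVector p F, WittVector.frobenius x = x →
    ∃ n : ℕ, (p : WittVector p F) ^ L ∣ x - n := by
  induction L with
  | zero => intro x _; exact ⟨0, by simp⟩
  | succ L ih =>
    intro x hx
    have h0 : x.coeff 0 ^ p = x.coeff 0 := by
      rw [← WittVector.coeff_frobenius_charP, hx]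
    obtain ⟨n₀, hn₀⟩ : ∃ n₀ : ℕ, (n₀ : F) = x.coeff 0 := by
      rw [← Subfield.mem_bot_iff_pow_eq_self, ← ZMod.fieldRange_castHom_eq_bot p] at h0
      obtain ⟨z, hz⟩ := h0
      exact ⟨z.val, by rw [← hz]; simp⟩
    obtain ⟨y, hy⟩ : (p : WittVector p F) ∣ x - n₀ := by
      apply p_dvd_of_coeff_zero
      change WittVector.constantCoeff (x - (n₀ : WittVector p F)) = 0
      rw [map_sub, map_natCast, hn₀]
      exact sub_self _
    have hyF : WittVector.frobenius y = y := by
      have h := congrArg WittVector.frobenius hy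
      rw [map_sub, map_mul, map_natCast, map_natCast, hx, hy] at h
      exact (mul_left_cancel₀ (WittVector.p_nonzero p F) h).symm
    obtain ⟨n₁, hn₁⟩ := ih y hyF
    refine ⟨n₀ + p * n₁, ?_⟩
    have : x - ((n₀ + p * n₁ : ℕ) : WittVector p F) = p * (y - n₁) := by
      push_cast; rw [mul_sub, ← hy]; ring
    rw [this, pow_succ']
    exact mul_dvd_mul_left _ hn₁

end Witt

/-- Characteristic zero data for `F` on a ring `R` (a domain in all uses) in which `p` is neither zero
nor invertible, while the natural numbers prime to `p` are invertible: an injective multiplicative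
(Teichmüller) map `T : F → R`, a primitive `p`-th root of unity `ζ`, and, for every precision `L`,
natural numbers `n L t` which represent the trace `∑ i < a, t ^ p ^ i` in `F` and approximate the
lifted trace `∑ i < a, T t ^ p ^ i` modulo `p ^ L`. -/
structure Lift (p a : ℕ) (F : Type) [Field F] (R : Type) [CommRing R] where
  T : F →* R
  n : ℕ → F → ℕ
  ζ : R
  T_zero : T 0 = 0
  T_inj : Function.Injective T
  n_trace : ∀ L t, (n L t : F) = ∑ i ∈ range a, t ^ p ^ i
  n_approx : ∀ L t, (p : R) ^ L ∣ (∑ i ∈ range a, T t ^ p ^ i) - n L t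
  ζ_prim : IsPrimitiveRoot ζ p
  unit : ∀ m : ℕ, ¬ p ∣ m → IsUnit (m : R)
  p_ne : (p : R) ≠ 0
  p_not_unit : ¬ IsUnit (p : R)

/-- The integral closure of the Witt vectors `W(F)` in an algebraic closure of their fraction
field carries such data. -/
theorem exists_lift (p a : ℕ) [hp : Fact p.Prime] (F : Type) [Field F] [Fintype F] [CharP F p]
    (hq : Fintype.card F = p ^ a) :
    ∃ (R : Type) (_ : CommRing R) (_ : IsDomain R), Nonempty (Lift p a F R) := by
  let A := WittVector p F
  let K := AlgebraicClosure (FractionRing A)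
  let R := integralClosure A K
  have hinjK : Function.Injective (algebraMap A K) := by
    rw [IsScalarTower.algebraMap_eq A (FractionRing A) K]
    exact (algebraMap (FractionRing A) K).injective.comp (IsFractionRing.injective A _)
  have hinj : Function.Injective (algebraMap A R) := by
    intro x y h
    exact hinjK (congrArg (algebraMap R K) h)
  have : IsLocalHom (algebraMap A R) :=
    RingHom.IsIntegral.isLocalHom (algebraMap_isIntegral_iff.mpr inferInstance) hinj
  have hpA : (p : A) ≠ 0 := WittVector.p_nonzero p F
  have hpK : NeZero ((p : ℕ) : FractionRing A) := ⟨WittVector.FractionRing.p_nonzero p F⟩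
  obtain ⟨z, hz⟩ := HasEnoughRootsOfUnity.exists_primitiveRoot K p
  have hzint : z ∈ integralClosure A K :=
    IsIntegral.of_pow hp.out.pos (by rw [hz.pow_eq_one]; exact isIntegral_one)
  have hfix (t : F) : WittVector.frobenius (∑ i ∈ range a, WittVector.teichmuller p t ^ p ^ i)
      = ∑ i ∈ range a, WittVector.teichmuller p t ^ p ^ i := by
    rw [map_sum, ← add_right_cancel_iff (a := WittVector.teichmuller p t ^ p ^ 0)]
    have (i : ℕ) : WittVector.frobenius (WittVector.teichmuller p t ^ p ^ i)
        = WittVector.teichmuller p t ^ p ^ (i + 1) := by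
      rw [map_pow, WittVector.frobenius_eq_map_frobenius, WittVector.map_teichmuller,
        frobenius_def, map_pow, ← pow_mul, pow_succ']
    simp_rw [this]
    rw [← Finset.sum_range_succ' (fun i => WittVector.teichmuller p t ^ p ^ i),
      Finset.sum_range_succ, ← hq, ← map_pow, FiniteField.pow_card, pow_zero, pow_one]
  -- Precision `L + 1` rather than `L`, so that the residue modulo `p` is correct even for `L = 0`.
  choose n hn using fun (L : ℕ) (t : F) => exists_nat_approx (L + 1) _ (hfix t)
  refine ⟨R, inferInstance, inferInstance, ⟨{
    T := (algebraMap A R : A →* R).comp (WittVector.teichmuller p)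
    n := n
    ζ := ⟨z, hzint⟩
    T_zero := ?_
    T_inj := ?_
    n_trace := ?_
    n_approx := ?_
    ζ_prim := ?_
    unit := ?_
    p_ne := ?_
    p_not_unit := ?_ }⟩⟩
  · change algebraMap A R (WittVector.teichmuller p 0) = 0
    rw [WittVector.teichmuller_zero, map_zero]
  · intro x y h
    have h1 := congrArg (fun w : WittVector p F => w.coeff 0) (hinj h)
    exact (WittVector.teichmuller_coeff_zero p x).symm.trans
      (h1.trans (WittVector.teichmuller_coeff_zero p y))
  · intro L t
    obtain ⟨y, hy⟩ := hn L t
    have h := congrArg WittVector.constantCoeff hy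
    rw [map_sub, map_sum, map_mul, map_pow, map_natCast, map_natCast, CharP.cast_eq_zero F p,
      zero_pow L.succ_ne_zero, zero_mul, sub_eq_zero] at h
    rw [← h]
    refine Finset.sum_congr rfl fun i _ => ?_
    rw [map_pow]
    congr 1
  · intro L t
    have h := map_dvd (algebraMap A R) ((pow_dvd_pow _ L.le_succ).trans (hn L t))
    rw [map_pow, map_sub, map_sum, map_natCast, map_natCast] at h
    simp_rw [map_pow] at h
    exact h
  · exact IsPrimitiveRoot.of_map_of_injective (f := algebraMap R K) hz Subtype.val_injective
  · intro m hm
    have : IsUnit (m : A) := by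
      apply WittVector.isUnit_of_coeff_zero_ne_zero
      change WittVector.constantCoeff (m : WittVector p F) ≠ 0
      rw [map_natCast]
      exact fun h => hm ((CharP.cast_eq_zero_iff F p m).mp h)
    have h := this.map (algebraMap A R)
    rwa [map_natCast] at h
  · rw [← map_natCast (algebraMap A R)]
    exact (map_ne_zero_iff _ hinj).mpr hpA
  · rw [← map_natCast (algebraMap A R)]
    intro h
    exact (WittVector.irreducible (k := F) p).not_isUnit (isUnit_of_map_unit _ _ h)

/-! ### Expansion of the additive character in powers of the Teichmüller character -/

/-- `m` is, modulo `p ^ a - 1`, a sum of `k` powers of `p`. The least such `k` plays the role of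
the digit sum of `m` in base `p`. -/
def IsPowSum (p a m k : ℕ) : Prop :=
  ∃ g : Fin k → ℕ, ∑ u, p ^ g u ≡ m [MOD p ^ a - 1]

section Lift

variable {p a : ℕ} [hp : Fact p.Prime] {F : Type} [Field F] {R : Type} [CommRing R] [IsDomain R]

theorem pi_dvd_p (ℓ : Lift p a F R) : ℓ.ζ - 1 ∣ (p : R) := by
  have h := Polynomial.sub_dvd_eval_sub ℓ.ζ 1 (Polynomial.cyclotomic p R)
  rw [Polynomial.eval_one_cyclotomic_prime,
    (ℓ.ζ_prim.isRoot_cyclotomic hp.out.pos).eq_zero, zero_sub, dvd_neg] at h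
  exact h

/-- Modulo `p`, the `p`-th cyclotomic polynomial is `(X - 1) ^ (p - 1)`. -/
theorem p_dvd_pi_pow (ℓ : Lift p a F R) : (p : R) ∣ (ℓ.ζ - 1) ^ (p - 1) := by
  obtain ⟨Q, hQ⟩ : Polynomial.C (p : ℤ) ∣
      (Polynomial.X - 1) ^ (p - 1) - Polynomial.cyclotomic p ℤ := by
    rw [Polynomial.C_dvd_iff_dvd_coeff]
    intro i
    rw [← ZMod.intCast_zmod_eq_zero_iff_dvd, ← eq_intCast (Int.castRingHom (ZMod p)), ← Polynomial.coeff_map]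
    have h := Polynomial.cyclotomic_mul_prime_eq_pow_of_not_dvd (ZMod p) (p := p) (n := 1)
      hp.out.not_dvd_one
    rw [one_mul, Polynomial.cyclotomic_one] at h
    simp [h]
  have h := congrArg (Polynomial.aeval ℓ.ζ) hQ
  have h0 : Polynomial.aeval ℓ.ζ (Polynomial.cyclotomic p ℤ) = 0 := by
    rw [Polynomial.aeval_def, ← Polynomial.eval_map, Polynomial.map_cyclotomic]
    exact ℓ.ζ_prim.isRoot_cyclotomic hp.out.pos
  rw [map_sub, h0, map_mul] at h
  simp only [map_pow, map_sub, Polynomial.aeval_X, map_one, sub_zero, map_natCast] at h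
  exact ⟨_, h⟩

/-- Divisibility by powers of `p` descends from `R` to the natural numbers, since `p` is not a unit
in `R`. -/
theorem pow_dvd_of_cast_dvd (ℓ : Lift p a F R) (B N : ℕ) (h : (p : R) ^ B ∣ (N : R)) :
    p ^ B ∣ N := by
  by_cases hN : N = 0
  · simp [hN]
  obtain ⟨e, u, hu, rfl⟩ := Nat.exists_eq_pow_mul_and_not_dvd hN p hp.out.ne_one
  by_cases heB : B ≤ e
  · exact dvd_mul_of_dvd_left (pow_dvd_pow _ heB) _
  exfalso
  push Not at heB
  obtain ⟨c, rfl⟩ := Nat.exists_eq_add_of_lt heB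
  push_cast at h
  rw [add_assoc, pow_add] at h
  have h2 := (mul_dvd_mul_iff_left (pow_ne_zero e ℓ.p_ne)).mp h
  exact ℓ.p_not_unit (isUnit_of_dvd_unit ((dvd_pow_self _ c.succ_ne_zero).trans h2) (ℓ.unit u hu))

end Lift

/-- The binomial expansion of `(1 + x) ^ n` truncated at order `K`, with no relation between `n` and
`K` assumed. -/
theorem one_add_pow_sub_dvd {R : Type} [CommRing R] (x : R) (K n : ℕ) :
    x ^ K ∣ (1 + x) ^ n - ∑ k ∈ range K, (n.choose k : R) * x ^ k := by
  have : (1 + x) ^ n = ∑ k ∈ range (K + n + 1), (n.choose k : R) * x ^ k := by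
    rw [add_comm 1 x, add_pow, Finset.range_eq_Ico, Finset.range_eq_Ico,
      ← Finset.sum_Ico_consecutive _ (Nat.zero_le (n + 1)) (by omega : n + 1 ≤ K + n + 1)]
    rw [Finset.sum_eq_zero (s := Finset.Ico (n + 1) (K + n + 1)), add_zero]
    · exact Finset.sum_congr rfl fun k _ => by simp [mul_comm]
    · intro k hk
      rw [Nat.choose_eq_zero_of_lt (by simp at hk; omega)]; simp
  rw [this, Finset.range_eq_Ico, Finset.range_eq_Ico,
    ← Finset.sum_Ico_consecutive _ (Nat.zero_le K) (by omega : K ≤ K + n + 1), add_sub_cancel_left]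
  refine Finset.dvd_sum fun k hk => ?_
  exact dvd_mul_of_dvd_right (pow_dvd_pow _ (Finset.mem_Ico.mp hk).1) _

section Expansion

variable {p a : ℕ} {F : Type} [Field F] [Fintype F] [DecidableEq F]
  {R : Type} [CommRing R] [IsDomain R]

theorem Lift.sum_units (ℓ : Lift p a F R) (w : ℕ) :
    ∑ t : Fˣ, ℓ.T t ^ w
      = if Fintype.card F - 1 ∣ w then ((Fintype.card F - 1 : ℕ) : R) else 0 := by
  classical
  let φ : Fˣ →* R := (powMonoidHom w).comp (ℓ.T.comp (Units.coeHom F))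
  have h := sum_hom_units φ
  have hφ : φ = 1 ↔ Fintype.card F - 1 ∣ w := by
    rw [← FiniteField.forall_pow_eq_one_iff, DFunLike.ext_iff]
    refine forall_congr' fun t => ?_
    change ℓ.T (t : F) ^ w = 1 ↔ _
    rw [← map_pow, ← map_one ℓ.T, ℓ.T_inj.eq_iff, Units.ext_iff]
    simp
  simp only [hφ, Fintype.card_units] at h
  rw [Nat.cast_ite, Nat.cast_zero] at h
  rw [← h]
  rfl

/-- The exponent `0` is exceptional because `0 ^ 0 = 1`. -/
theorem Lift.sum_field (ℓ : Lift p a F R) (w : ℕ) :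
    ∑ t : F, ℓ.T t ^ w
      = if w = 0 then (Fintype.card F : R) else
          if Fintype.card F - 1 ∣ w then ((Fintype.card F - 1 : ℕ) : R) else 0 := by
  split_ifs with h0 h1
  · simp [h0]
  all_goals
    rw [← Finset.add_sum_erase _ _ (Finset.mem_univ (0 : F)), ℓ.T_zero, zero_pow h0, zero_add]
    have h := ℓ.sum_units w
    simp only [h1, if_true, if_false] at h
    rw [← h]
    rw [Finset.sum_subtype (Finset.univ.erase (0 : F)) (p := fun x => x ≠ 0) (by simp)]
    exact (Fintype.sum_equiv unitsEquivNeZero _ _ fun t => rfl).symm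

/-- The `j`-th power of the lifted trace is a sum of powers of `T t` whose exponents are sums of `j`
powers of `p`, so it is orthogonal to `T t ^ (-m)` unless `m` is such a sum modulo `q - 1`. -/
theorem moment_eq_zero (ℓ : Lift p a F R) (hq : Fintype.card F = p ^ a) {m j : ℕ}
    (hm : m ≤ p ^ a - 1) (h : ¬ IsPowSum p a m j) :
    ∑ t : Fˣ, (∑ i ∈ range a, ℓ.T t ^ p ^ i) ^ j * ℓ.T t ^ (p ^ a - 1 - m) = 0 := by
  classical
  have key (t : Fˣ) : (∑ i ∈ range a, ℓ.T t ^ p ^ i) ^ j * ℓ.T t ^ (p ^ a - 1 - m)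
      = ∑ g : Fin j → Fin a, ℓ.T t ^ ((∑ u, p ^ (g u : ℕ)) + (p ^ a - 1 - m)) := by
    rw [Finset.sum_range, Fintype.sum_pow, Finset.sum_mul]
    refine Finset.sum_congr rfl fun g _ => ?_
    rw [pow_add, Finset.prod_pow_eq_pow_sum]
  simp_rw [key]
  rw [Finset.sum_comm]
  refine Finset.sum_eq_zero fun g _ => ?_
  rw [ℓ.sum_units, if_neg]
  rw [hq]
  intro hd
  refine h ⟨fun u => g u, ?_⟩
  have h1 : (∑ u, p ^ (g u : ℕ)) + (p ^ a - 1 - m) ≡ m + (p ^ a - 1 - m) [MOD p ^ a - 1] := by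
    rw [Nat.add_sub_of_le hm]
    exact ((Nat.modEq_zero_iff_dvd).mpr hd).trans
      ((Nat.modEq_zero_iff_dvd).mpr dvd_rfl).symm
  exact Nat.ModEq.add_right_cancel' _ h1

variable [hp : Fact p.Prime]

/-- If `m` is not a sum of at most `k` powers of `p` modulo `q - 1`, then the binomial moment
`∑ t, (n t choose k) * T t ^ (-m)` is divisible by any prescribed power of `p`, provided that the
precision `L` is large: after multiplication by `k!` it is congruent modulo `p ^ L` to a combination
of power moments of the lifted trace, which vanish. -/
theorem choose_moment_dvd (ℓ : Lift p a F R) (hq : Fintype.card F = p ^ a) {m K k : ℕ}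
    (hm : m ≤ p ^ a - 1) (hk : 1 ≤ k) (h : ∀ j, 1 ≤ j → j ≤ k → ¬ IsPowSum p a m j)
    {L : ℕ} (hL : K + k.factorial ≤ L) :
    (p : R) ^ K ∣ ∑ t : Fˣ, ((ℓ.n L t).choose k : R) * ℓ.T t ^ (p ^ a - 1 - m) := by
  set S := ∑ t : Fˣ, ((ℓ.n L t).choose k : R) * ℓ.T t ^ (p ^ a - 1 - m) with hS
  have h1 : (k.factorial : R) * S
      = ∑ t : Fˣ, (descPochhammer R k).eval ((ℓ.n L t : ℕ) : R) * ℓ.T t ^ (p ^ a - 1 - m) := by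
    rw [hS, Finset.mul_sum]
    refine Finset.sum_congr rfl fun t _ => ?_
    rw [descPochhammer_eval_eq_descFactorial, Nat.descFactorial_eq_factorial_mul_choose]
    push_cast; ring
  have h2 : ∑ t : Fˣ, (descPochhammer R k).eval (∑ i ∈ range a, ℓ.T t ^ p ^ i)
      * ℓ.T t ^ (p ^ a - 1 - m) = 0 := by
    simp_rw [Polynomial.eval_eq_sum_range, Finset.sum_mul]
    rw [Finset.sum_comm]
    refine Finset.sum_eq_zero fun j hj => ?_
    rw [descPochhammer_natDegree, Finset.mem_range] at hj
    simp_rw [mul_assoc]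
    rw [← Finset.mul_sum]
    rcases Nat.eq_zero_or_pos j with rfl | hj0
    · rw [Polynomial.coeff_zero_eq_eval_zero, descPochhammer_ne_zero_eval_zero R (by omega),
        zero_mul]
    · rw [moment_eq_zero ℓ hq hm (h j hj0 (by omega)), mul_zero]
  have h3 : (p : R) ^ L ∣ (k.factorial : R) * S := by
    rw [h1, ← sub_zero (∑ t : Fˣ, _), ← h2, ← Finset.sum_sub_distrib]
    refine Finset.dvd_sum fun t _ => ?_
    rw [← sub_mul]
    refine dvd_mul_of_dvd_left ?_ _
    rw [dvd_sub_comm]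
    exact (ℓ.n_approx L t).trans (Polynomial.sub_dvd_eval_sub _ _ _)
  obtain ⟨e, u, hu, heu⟩ := Nat.exists_eq_pow_mul_and_not_dvd k.factorial_ne_zero p hp.out.ne_one
  have he : e ≤ k.factorial := by
    have : p ^ e ≤ k.factorial := Nat.le_of_dvd k.factorial_pos ⟨u, heu⟩
    exact (Nat.lt_pow_self hp.out.one_lt).le.trans this
  have h4 : (p : R) ^ e * (p : R) ^ K ∣ (p : R) ^ e * ((u : R) * S) := by
    rw [← pow_add, ← mul_assoc]
    have : (p : R) ^ e * u = k.factorial := by rw [heu]; push_cast; ring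
    rw [this]
    exact (pow_dvd_pow _ (by omega)).trans h3
  exact (ℓ.unit u hu).dvd_mul_left.mp ((mul_dvd_mul_iff_left (pow_ne_zero e ℓ.p_ne)).mp h4)

/-- Stickelberger's lower bound for Gauss sums: if `m` is not a sum of fewer than `K` powers of
`p` modulo `q - 1`, then the `m`-th coefficient of `ψ - 1` is divisible by `(ζ - 1) ^ K`. -/
theorem gauss_dvd (ℓ : Lift p a F R) (hq : Fintype.card F = p ^ a) (ψ : F → R)
    (hψ : ∀ L t, ψ t = ℓ.ζ ^ ℓ.n L t) {m K : ℕ}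
    (hm : m ≤ p ^ a - 1) (h : ∀ j, 1 ≤ j → j < K → ¬ IsPowSum p a m j) :
    (ℓ.ζ - 1) ^ K ∣ ∑ t : Fˣ, (ψ t - 1) * ℓ.T t ^ (p ^ a - 1 - m) := by
  -- The precision leaves room for cancelling `k!` for every `k < K`.
  set L := K + K.factorial
  rcases Nat.eq_zero_or_pos K with rfl | hK
  · simp
  have hsplit : ∑ t : Fˣ, (ψ t - 1) * ℓ.T t ^ (p ^ a - 1 - m)
      = ∑ t : Fˣ, (((1 + (ℓ.ζ - 1)) ^ ℓ.n L t -
          ∑ k ∈ range K, ((ℓ.n L t).choose k : R) * (ℓ.ζ - 1) ^ k) * ℓ.T t ^ (p ^ a - 1 - m))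
        + ∑ k ∈ Finset.Ico 1 K, (ℓ.ζ - 1) ^ k *
            ∑ t : Fˣ, ((ℓ.n L t).choose k : R) * ℓ.T t ^ (p ^ a - 1 - m) := by
    simp_rw [Finset.mul_sum]
    rw [Finset.sum_comm, ← Finset.sum_add_distrib]
    refine Finset.sum_congr rfl fun t _ => ?_
    rw [hψ L t, Finset.range_eq_Ico, Finset.sum_eq_sum_Ico_succ_bot hK, add_sub_cancel,
      Nat.choose_zero_right, Nat.cast_one, pow_zero, zero_add, mul_one]
    have : ∑ k ∈ Finset.Ico 1 K, (ℓ.ζ - 1) ^ k *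
        (((ℓ.n L t).choose k : R) * ℓ.T t ^ (p ^ a - 1 - m))
        = (∑ k ∈ Finset.Ico 1 K, ((ℓ.n L t).choose k : R) * (ℓ.ζ - 1) ^ k)
          * ℓ.T t ^ (p ^ a - 1 - m) := by
      rw [Finset.sum_mul]
      exact Finset.sum_congr rfl fun k _ => by ring
    rw [this]; ring
  rw [hsplit]
  refine dvd_add (Finset.dvd_sum fun t _ => dvd_mul_of_dvd_left (one_add_pow_sub_dvd _ _ _) _)
    (Finset.dvd_sum fun k hk => dvd_mul_of_dvd_right ?_ _)
  rw [Finset.mem_Ico] at hk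
  refine (pow_dvd_pow_of_dvd (pi_dvd_p ℓ) K).trans ?_
  exact choose_moment_dvd ℓ hq hm hk.1 (fun j h1 h2 => h j h1 (by omega))
    (Nat.add_le_add_left (Nat.factorial_le hk.2.le) _)

omit hp in
/-- Orthogonality for the powers of the Teichmüller character, in the form used for Fourier inversion
on the group of units. -/
theorem sum_T_pow_mul (ℓ : Lift p a F R) (s t : Fˣ) :
    ∑ i ∈ range (Fintype.card F - 1),
        ℓ.T s ^ (i + 1) * ℓ.T t ^ (Fintype.card F - 1 - (i + 1))
      = if t = s then ((Fintype.card F - 1 : ℕ) : R) else 0 := by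
  have h1 (x : Fˣ) : ℓ.T x ^ (Fintype.card F - 1) = 1 := by
    rw [← map_pow, FiniteField.pow_card_sub_one_eq_one _ x.ne_zero, map_one]
  split_ifs with h
  · subst h
    rw [Finset.sum_congr rfl (g := fun _ => (1 : R))]
    · simp
    · intro i hi
      rw [← pow_add, Nat.add_sub_of_le (by simpa using hi), h1]
  · have h2 := geom_sum₂_mul (ℓ.T s) (ℓ.T t) (Fintype.card F - 1)
    rw [h1, h1, sub_self] at h2
    have h3 : ℓ.T s - ℓ.T t ≠ 0 := by
      rw [sub_ne_zero]
      exact fun h' => h (Units.ext (ℓ.T_inj h')).symm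
    have h4 := (mul_eq_zero.mp h2).resolve_right h3
    rw [← mul_zero (ℓ.T s), ← h4, Finset.mul_sum]
    refine Finset.sum_congr rfl fun i _ => ?_
    rw [pow_succ', mul_assoc]
    congr 3
    omega

/-- The additive character `ψ` as a polynomial of degree `< q` in the Teichmüller character; the
coefficients `c m` with `m ≠ 0` are normalised Gauss sums. In the proof `k 0 = 0`, and for `m ≠ 0`
`k m` is the least positive number of powers of `p` with sum `m` modulo `q - 1`. -/
theorem exists_expansion (ℓ : Lift p a F R) (hq : Fintype.card F = p ^ a) (ψ : F → R)
    (hψ0 : ψ 0 = 1) (hψ : ∀ L t, ψ t = ℓ.ζ ^ ℓ.n L t) :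
    ∃ (c : ℕ → R) (k : ℕ → ℕ),
      (∀ t, ψ t = ∑ m ∈ range (p ^ a), c m * ℓ.T t ^ m) ∧
      (∀ m < p ^ a, (ℓ.ζ - 1) ^ k m ∣ c m) ∧
      (∀ m, IsPowSum p a m (k m)) ∧ ∀ m, k m = 0 ↔ m = 0 := by
  classical
  have hex (m : ℕ) (hm : m ≠ 0) : ∃ k, 1 ≤ k ∧ IsPowSum p a m k :=
    ⟨m, Nat.one_le_iff_ne_zero.mpr hm, fun _ => 0, by simp [Nat.ModEq.refl]⟩
  have hq1 : 1 < p ^ a := hq ▸ Fintype.one_lt_card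
  have ha : a ≠ 0 := by rintro rfl; simp at hq1
  obtain ⟨u, hu⟩ : ∃ u : R, u * ((p ^ a - 1 : ℕ) : R) = 1 := by
    refine (ℓ.unit (p ^ a - 1) fun h => ?_).exists_left_inv
    exact hp.out.not_dvd_one ((Nat.dvd_sub_iff_right hq1.le (dvd_pow_self p ha)).mp h)
  refine ⟨fun m => if m = 0 then 1 else
      u * ∑ t : Fˣ, (ψ t - 1) * ℓ.T t ^ (p ^ a - 1 - m),
    fun m => if h : m = 0 then 0 else Nat.find (hex m h), ?_, ?_, ?_, ?_⟩
  · intro s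
    have hr : range (p ^ a) = range ((p ^ a - 1) + 1) := by
      rw [Nat.sub_add_cancel hq1.le]
    rw [hr, Finset.sum_range_succ']
    simp only [Nat.succ_ne_zero, if_false, if_true, pow_zero, mul_one]
    rcases eq_or_ne s 0 with rfl | hs
    · simp [ℓ.T_zero, hψ0]
    obtain ⟨s, rfl⟩ := (isUnit_iff_ne_zero.mpr hs)
    have : ∑ i ∈ range (p ^ a - 1),
        (u * ∑ t : Fˣ, (ψ t - 1) * ℓ.T t ^ (p ^ a - 1 - (i + 1))) * ℓ.T s ^ (i + 1)
        = u * ∑ t : Fˣ, (ψ t - 1) * ∑ i ∈ range (p ^ a - 1),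
            ℓ.T s ^ (i + 1) * ℓ.T t ^ (p ^ a - 1 - (i + 1)) := by
      simp_rw [Finset.mul_sum, Finset.sum_mul]
      rw [Finset.sum_comm]
      refine Finset.sum_congr rfl fun t _ => Finset.sum_congr rfl fun i _ => by ring
    rw [this]
    have h2 := sum_T_pow_mul ℓ s
    rw [hq] at h2
    simp_rw [h2]
    simp only [mul_ite, mul_zero, Finset.sum_ite_eq', Finset.mem_univ, if_true]
    rw [mul_comm (ψ s - 1), ← mul_assoc, hu]
    ring
  · intro m hm
    by_cases h : m = 0
    · simp [h]
    · simp only [h, if_false, dif_neg, not_false_eq_true]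
      refine dvd_mul_of_dvd_right (gauss_dvd ℓ hq ψ hψ (by omega) fun j h1 h2 h3 => ?_) _
      exact Nat.find_min (hex m h) h2 ⟨h1, h3⟩
  · intro m
    by_cases h : m = 0
    · simp only [h, dif_pos]
      exact ⟨fun _ => 0, by simp [Nat.ModEq.refl]⟩
    · simp only [h, dif_neg, not_false_eq_true]
      exact (Nat.find_spec (hex m h)).2
  · intro m
    by_cases h : m = 0
    · simp [h]
    · simp only [h, dif_neg, not_false_eq_true, iff_false]
      have := (Nat.find_spec (hex m h)).1
      omega

omit [DecidableEq F] [IsDomain R] in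
/-- The additive character `ζ ^ Tr`. -/
theorem exists_addChar [CharP F p] (ℓ : Lift p a F R) (hq : Fintype.card F = p ^ a) :
    ∃ ψ : AddChar F R, ψ.IsPrimitive ∧ ∀ L t, ψ t = ℓ.ζ ^ ℓ.n L t := by
  let : Algebra (ZMod p) F := ZMod.algebra F p
  have hfin : Module.finrank (ZMod p) F = a := by
    have h := Module.card_eq_pow_finrank (K := ZMod p) (V := F)
    rw [ZMod.card, hq] at h
    exact (Nat.pow_right_injective hp.out.two_le h).symm
  have htr (L : ℕ) (t : F) : Algebra.trace (ZMod p) F t = (ℓ.n L t : ZMod p) := by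
    apply (algebraMap (ZMod p) F).injective
    rw [FiniteField.algebraMap_trace_eq_sum_pow, map_natCast, ℓ.n_trace, hfin, Nat.card_zmod]
  let ψ : AddChar F R := (AddChar.zmodChar p ℓ.ζ_prim.pow_eq_one).compAddMonoidHom
    (Algebra.trace (ZMod p) F).toAddMonoidHom
  have hψ (L : ℕ) (t : F) : ψ t = ℓ.ζ ^ ℓ.n L t := by
    change AddChar.zmodChar p ℓ.ζ_prim.pow_eq_one (Algebra.trace (ZMod p) F t) = _
    rw [htr L, AddChar.zmodChar_apply']
  refine ⟨ψ, AddChar.IsPrimitive.of_ne_one ?_, hψ⟩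
  intro h
  obtain ⟨t, ht⟩ := Algebra.trace_surjective (ZMod p) F 1
  have h1 : ψ t = 1 := by rw [h]; rfl
  rw [hψ 0, ℓ.ζ_prim.pow_eq_one_iff_dvd, ← ZMod.natCast_eq_zero_iff, ← htr 0, ht] at h1
  exact one_ne_zero h1

omit hp in
/-- Expanding every factor `ψ (b j * ∏ v, z v ^ E j v)` in powers of the Teichmüller character
and summing over `z`, only the exponent systems all of whose weights are divisible by `q - 1`
survive, and each variable of weight zero contributes a factor `q`. -/
theorem dvd_expSum (ℓ : Lift p a F R) (hq : Fintype.card F = p ^ a) (ψ : F → R)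
    {c : ℕ → R} {k : ℕ → ℕ}
    (hψ : ∀ t, ψ t = ∑ m ∈ range (p ^ a), c m * ℓ.T t ^ m)
    (hc : ∀ m < p ^ a, (ℓ.ζ - 1) ^ k m ∣ c m)
    {J V : Type} [Fintype J] [DecidableEq J] [Fintype V] [DecidableEq V]
    (b : J → F) (E : J → V → ℕ) (B : ℕ)
    (h : ∀ m : J → ℕ, (∀ v, p ^ a - 1 ∣ ∑ j, E j v * m j) →
      (p : R) ^ B ∣ (ℓ.ζ - 1) ^ (∑ j, k (m j)) *
        ((p ^ a : ℕ) : R) ^ #{v | ∑ j, E j v * m j = 0}) :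
    (p : R) ^ B ∣ ∑ z : V → F, ∏ j, ψ (b j * ∏ v, z v ^ E j v) := by
  have hexp : ∑ z : V → F, ∏ j, ψ (b j * ∏ v, z v ^ E j v)
      = ∑ m ∈ Fintype.piFinset (fun _ : J => range (p ^ a)),
          (∏ j, c (m j) * ℓ.T (b j) ^ m j) * ∏ v, ∑ t : F, ℓ.T t ^ (∑ j, E j v * m j) := by
    simp_rw [hψ, Finset.prod_univ_sum]
    rw [Finset.sum_comm]
    refine Finset.sum_congr rfl fun m _ => ?_
    rw [Fintype.piFinset_univ, Finset.mul_sum]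
    refine Finset.sum_congr rfl fun z _ => ?_
    simp_rw [map_mul, map_prod, map_pow, mul_pow, ← Finset.prod_pow, ← pow_mul]
    rw [Finset.prod_congr rfl fun j _ => (mul_assoc _ _ _).symm, Finset.prod_mul_distrib,
      Finset.prod_comm]
    congr 1
    exact Finset.prod_congr rfl fun v _ => Finset.prod_pow_eq_pow_sum _ _ _
  rw [hexp]
  refine Finset.dvd_sum fun m hm => ?_
  rw [Fintype.mem_piFinset] at hm
  by_cases hw : ∀ v, p ^ a - 1 ∣ ∑ j, E j v * m j
  · refine (h m hw).trans (mul_dvd_mul ?_ ?_)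
    · rw [← Finset.prod_pow_eq_pow_sum]
      exact Finset.prod_dvd_prod_of_dvd _ _ fun j _ =>
        dvd_mul_of_dvd_left (hc _ (Finset.mem_range.mp (hm j))) _
    · rw [← Finset.prod_filter_mul_prod_filter_not Finset.univ
        (fun v => ∑ j, E j v * m j = 0)]
      refine dvd_mul_of_dvd_left ?_ _
      rw [← Finset.prod_const]
      refine Finset.prod_dvd_prod_of_dvd _ _ fun v hv => ?_
      rw [ℓ.sum_field, if_pos (Finset.mem_filter.mp hv).2, hq]
  · push Not at hw
    obtain ⟨v, hv⟩ := hw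
    rw [Finset.prod_eq_zero (Finset.mem_univ v), mul_zero]
    · exact dvd_zero _
    · rw [ℓ.sum_field, if_neg, if_neg]
      · rwa [hq]
      · intro h0; rw [h0] at hv; exact hv (dvd_zero _)

end Expansion

/-! ### The weight inequality -/

theorem pow_mod_modEq {p : ℕ} (hp : 0 < p) (a s : ℕ) : p ^ (s % a) ≡ p ^ s [MOD p ^ a - 1] := by
  have h0 : 1 ≤ p ^ a := Nat.one_le_pow _ _ hp
  have h1 : p ^ a ≡ 1 [MOD p ^ a - 1] := ((Nat.modEq_iff_dvd' h0).mpr dvd_rfl).symm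
  conv_rhs => rw [← Nat.mod_add_div s a, pow_add, pow_mul]
  simpa using ((h1.pow (s / a)).mul_left (p ^ (s % a))).symm

/-- Multiplying exponents by `p ^ l` modulo `q - 1` for `l < a` produces `a` exponent systems, all
with weights divisible by `q - 1`, whose total is governed by the number of powers of `p` used. -/
theorem exists_shifts {p a : ℕ} (hp : 1 < p) (ha : 0 < a) {J V : Type} [Fintype J]
    (E : J → V → ℕ) (m k : J → ℕ) (hk : ∀ j, IsPowSum p a (m j) (k j))
    (hw : ∀ v, p ^ a - 1 ∣ ∑ j, E j v * m j) :
    ∃ M : Fin a → J → ℕ, (∀ l j, M l j = 0 ↔ k j = 0) ∧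
      (∀ l v, p ^ a - 1 ∣ ∑ j, E j v * M l j) ∧
      ∀ j, (p - 1) * ∑ l, M l j = k j * (p ^ a - 1) := by
  choose g hg using hk
  refine ⟨fun l j => ∑ u, p ^ ((g j u + l) % a), ?_, ?_, ?_⟩
  · intro l j
    rw [Finset.sum_eq_zero_iff]
    constructor
    · intro h
      by_contra hne
      have := h ⟨0, Nat.pos_of_ne_zero hne⟩ (Finset.mem_univ _)
      exact absurd this (by positivity)
    · intro h u
      exact absurd u.2 (by omega)
  · intro l v
    rw [← Nat.modEq_zero_iff_dvd]
    have h1 (j : J) : ∑ u, p ^ ((g j u + l) % a) ≡ p ^ (l : ℕ) * m j [MOD p ^ a - 1] := by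
      refine Nat.ModEq.trans ?_ ((hg j).mul_left (p ^ (l : ℕ)))
      rw [Finset.mul_sum]
      refine Nat.ModEq.sum fun u _ => ?_
      rw [← pow_add, add_comm (l : ℕ)]
      exact pow_mod_modEq (by omega) a _
    have h2 : ∑ j, E j v * ∑ u, p ^ ((g j u + l) % a)
        ≡ ∑ j, E j v * (p ^ (l : ℕ) * m j) [MOD p ^ a - 1] :=
      Nat.ModEq.sum fun j _ => (h1 j).mul_left _
    refine h2.trans ((Nat.modEq_zero_iff_dvd).mpr ?_)
    have h3 : ∑ j, E j v * (p ^ (l : ℕ) * m j) = p ^ (l : ℕ) * ∑ j, E j v * m j := by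
      rw [Finset.mul_sum]
      exact Finset.sum_congr rfl fun j _ => by ring
    rw [h3]
    exact dvd_mul_of_dvd_right (hw v) _
  · intro j
    have : NeZero a := ⟨ha.ne'⟩
    have h1 (s : ℕ) : ∑ l : Fin a, p ^ ((s + l) % a) = ∑ l ∈ range a, p ^ l := by
      rw [Finset.sum_range]
      refine Fintype.sum_equiv (Equiv.addLeft (Fin.ofNat a s)) _ _ fun l => ?_
      simp [Fin.val_add, Nat.add_mod]
    rw [Finset.sum_comm]
    simp_rw [h1]
    rw [Finset.sum_const, Finset.card_univ, Fintype.card_fin, smul_eq_mul, mul_left_comm]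
    congr 1
    obtain ⟨c, rfl⟩ : ∃ c, p = c + 1 := ⟨p - 1, by omega⟩
    rw [Nat.add_sub_cancel, mul_comm, ← geom_sum_mul_add, Nat.add_sub_cancel]

/-- The degree count behind the theorem of Ax and Katz, for one exponent system. Here `K i` is the
weight of the `i`-th dual variable and `X v` that of the `v`-th coordinate, both divided by
`q - 1`. -/
theorem weight_ineq {r n κ : ℕ} (hr : 0 < r) (d : Fin r → ℕ) (hd1 : ∀ i, 1 ≤ d i)
    (hmax : ∀ i, d i ≤ d ⟨0, hr⟩)
    (hκ : κ = 0 ∨ d ⟨0, hr⟩ * κ + ∑ i ∈ Finset.univ.erase (⟨0, hr⟩ : Fin r), d i ≤ n)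
    (K : Fin r → ℕ) (X : Fin (n + 1) → ℕ) (hXK : ∑ v, X v ≤ ∑ i, d i * K i) :
    r + κ ≤ ∑ i, K i + (#{i | K i = 0} + #{v | X v = 0}) := by
  set d₁ := d ⟨0, hr⟩
  have hx : n + 1 ≤ ∑ v, X v + #{v | X v = 0} := by
    rw [Finset.card_filter, ← Finset.sum_add_distrib]
    calc n + 1 = ∑ v : Fin (n + 1), 1 := by simp
      _ ≤ _ := Finset.sum_le_sum fun v _ => by split_ifs <;> omega
  have hy : ∃ W, r + W = ∑ i, K i + #{i | K i = 0} ∧ ∑ i, d i * K i ≤ ∑ i, d i + d₁ * W := by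
    refine ⟨∑ i, (K i - 1), ?_, ?_⟩
    · rw [Finset.card_filter, ← Finset.sum_add_distrib]
      calc r + ∑ i, (K i - 1) = ∑ i : Fin r, (1 + (K i - 1)) := by
            rw [Finset.sum_add_distrib]; simp
        _ = _ := Finset.sum_congr rfl fun i _ => by split_ifs <;> omega
    · rw [Finset.mul_sum, ← Finset.sum_add_distrib]
      refine Finset.sum_le_sum fun i _ => ?_
      rcases Nat.eq_zero_or_pos (K i) with h | h
      · simp [h]
      · obtain ⟨c, hc⟩ := Nat.exists_eq_add_of_lt h
        have : K i = c + 1 := by omega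
        rw [this, Nat.add_sub_cancel, mul_add, mul_one, add_comm]
        exact Nat.add_le_add_left (Nat.mul_le_mul_right _ (hmax i)) _
  obtain ⟨W, hW1, hW2⟩ := hy
  have hsum : ∑ i, d i = d₁ + ∑ i ∈ Finset.univ.erase (⟨0, hr⟩ : Fin r), d i :=
    (Finset.add_sum_erase _ _ (Finset.mem_univ _)).symm
  suffices κ ≤ W + #{v | X v = 0} by omega
  rcases hκ with h0 | hκ
  · omega
  by_contra! hlt
  have h1 : d₁ * (W + #{v | X v = 0} + 1) ≤ d₁ * κ := Nat.mul_le_mul_left _ hlt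
  have h2 : #{v | X v = 0} ≤ d₁ * #{v | X v = 0} := Nat.le_mul_of_pos_left _ (hd1 _)
  rw [mul_add, mul_add, mul_one] at h1
  omega

/-- The exponent of the variables `(y, x)` in the monomials `y i * x ^ e` of `∑ i, y i * f i x`. -/
def expo {r n : ℕ} (f : Fin r → Finset (Fin (n + 1) →₀ ℕ)) (j : Σ i, f i) :
    Fin r ⊕ Fin (n + 1) → ℕ :=
  Sum.elim (fun i => if j.1 = i then 1 else 0) (fun v => (j.2 : Fin (n + 1) →₀ ℕ) v)

theorem sum_expo_inl {r n : ℕ} (f : Fin r → Finset (Fin (n + 1) →₀ ℕ)) (M : (Σ i, f i) → ℕ)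
    (i : Fin r) : ∑ j, expo f j (Sum.inl i) * M j = ∑ e, M ⟨i, e⟩ := by
  rw [Fintype.sum_sigma, Finset.sum_eq_single i]
  · simp [expo]
  · intro b _ hb
    simp [expo, hb]
  · simp

/-- `weight_ineq` for the monomials `y i * x ^ e` taken with multiplicities `M`, when all weights are
divisible by `Q`. Each such monomial has degree `1` in `y i` and `d i` in `x`, so the weights of the
`x v` add up to the sum of the weights of the `y i` multiplied by `d i`. -/
theorem total_weight_ineq {r n κ Q : ℕ} (hQ : 0 < Q) (hr : 0 < r) (d : Fin r → ℕ)
    (hd1 : ∀ i, 1 ≤ d i) (hmax : ∀ i, d i ≤ d ⟨0, hr⟩)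
    (hκ : κ = 0 ∨ d ⟨0, hr⟩ * κ + ∑ i ∈ Finset.univ.erase (⟨0, hr⟩ : Fin r), d i ≤ n)
    (f : Fin r → Finset (Fin (n + 1) →₀ ℕ)) (hf : ∀ i, ∀ e ∈ f i, ∑ v, e v = d i)
    (M : (Σ i, f i) → ℕ) (hM : ∀ v, Q ∣ ∑ j, expo f j v * M j) :
    Q * (r + κ) ≤ ∑ j, M j + Q * #{v | ∑ j, expo f j v * M j = 0} := by
  choose w hw using hM
  have hw0 (v) : ∑ j, expo f j v * M j = 0 ↔ w v = 0 := by
    rw [hw]; simp [hQ.ne']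
  have hMsum : ∑ j, M j = Q * ∑ i, w (Sum.inl i) := by
    rw [Fintype.sum_sigma, Finset.mul_sum]
    exact Finset.sum_congr rfl fun i _ => by rw [← hw, sum_expo_inl]
  have hdeg : ∑ v, w (Sum.inr v) = ∑ i, d i * w (Sum.inl i) := by
    apply Nat.eq_of_mul_eq_mul_left hQ
    rw [Finset.mul_sum, Finset.mul_sum]
    have h1 (i) : Q * (d i * w (Sum.inl i)) = ∑ e : f i, d i * M ⟨i, e⟩ := by
      rw [mul_left_comm, ← hw, sum_expo_inl, Finset.mul_sum]
    simp_rw [h1, ← hw]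
    rw [Finset.sum_comm, Fintype.sum_sigma]
    refine Finset.sum_congr rfl fun i _ => Finset.sum_congr rfl fun e _ => ?_
    rw [← Finset.sum_mul, ← hf i e e.2]
    rfl
  have h := weight_ineq hr d hd1 hmax hκ (fun i => w (Sum.inl i)) (fun v => w (Sum.inr v)) hdeg.le
  have hcard : #{v | ∑ j, expo f j v * M j = 0}
      = #{i | w (Sum.inl i) = 0} + #{v | w (Sum.inr v) = 0} := by
    simp_rw [hw0, Finset.card_filter]
    rw [Fintype.sum_sum_type]
  rw [hMsum, hcard, ← mul_add]
  exact Nat.mul_le_mul_left _ h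

/-- The valuation estimate for a single surviving exponent system, obtained by averaging the degree
count over the `a` shifts by powers of `p`. -/
theorem shifted_weight_ineq {p a r n κ : ℕ} (hp : 1 < p) (ha : 0 < a) (hr : 0 < r) (d : Fin r → ℕ)
    (hd1 : ∀ i, 1 ≤ d i) (hmax : ∀ i, d i ≤ d ⟨0, hr⟩)
    (hκ : κ = 0 ∨ d ⟨0, hr⟩ * κ + ∑ i ∈ Finset.univ.erase (⟨0, hr⟩ : Fin r), d i ≤ n)
    (f : Fin r → Finset (Fin (n + 1) →₀ ℕ)) (hf : ∀ i, ∀ e ∈ f i, ∑ v, e v = d i)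
    (m k : (Σ i, f i) → ℕ) (hk : ∀ j, IsPowSum p a (m j) (k j)) (hk0 : ∀ j, k j = 0 ↔ m j = 0)
    (hm : ∀ v, p ^ a - 1 ∣ ∑ j, expo f j v * m j) :
    (p - 1) * (a * (r + κ)) ≤ ∑ j, k j + (p - 1) * (a * #{v | ∑ j, expo f j v * m j = 0}) := by
  have hQ : 0 < p ^ a - 1 := Nat.sub_pos_of_lt (Nat.one_lt_pow ha.ne' hp)
  obtain ⟨M, hM0, hMd, hMs⟩ := exists_shifts hp ha (expo f) m k hk hm
  set Z := #{v | ∑ j, expo f j v * m j = 0} with hZ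
  have h1 (l : Fin a) : (p ^ a - 1) * (r + κ) ≤ ∑ j, M l j + (p ^ a - 1) * Z := by
    have h := total_weight_ineq hQ hr d hd1 hmax hκ f hf (M l) (hMd l)
    convert h using 4
    ext v
    simp only [Finset.mem_filter, Finset.mem_univ, true_and, Finset.sum_eq_zero_iff, mul_eq_zero,
      hM0, hk0]
  have h2 := Finset.sum_le_sum fun l (_ : l ∈ Finset.univ) => h1 l
  rw [Finset.sum_add_distrib, Finset.sum_comm] at h2
  rw [Finset.sum_const, Finset.sum_const, Finset.card_univ, Fintype.card_fin, smul_eq_mul,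
    smul_eq_mul] at h2
  have h3 := Nat.mul_le_mul_left (p - 1) h2
  rw [mul_add (p - 1), Finset.mul_sum] at h3
  simp_rw [hMs] at h3
  rw [← Finset.sum_mul] at h3
  apply Nat.le_of_mul_le_mul_left _ hQ
  calc _ = (p - 1) * (a * ((p ^ a - 1) * (r + κ))) := by ring
    _ ≤ _ := h3
    _ = _ := by ring

/-! ### Point counts -/

theorem sum_eq_of_mem_support {F σ : Type} [Field F] [Fintype σ] {f : MvPolynomial σ F} {D : ℕ}
    (hf : f.IsHomogeneous D) {e : σ →₀ ℕ} (he : e ∈ f.support) : ∑ v, e v = D := by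
  rw [← hf (MvPolynomial.mem_support_iff.mp he), Finsupp.weight_apply,
    Finsupp.sum_fintype _ _ (by simp)]
  simp

theorem addChar_sum {F R ι : Type} [Field F] [CommRing R] (ψ : AddChar F R) (s : Finset ι)
    (g : ι → F) : ψ (∑ i ∈ s, g i) = ∏ i ∈ s, ψ (g i) := by
  classical
  induction s using Finset.induction_on with
  | empty => simp
  | insert i s hi ih => rw [Finset.sum_insert hi, Finset.prod_insert hi, ψ.map_add_eq_mul, ih]

/-- Orthogonality of additive characters: introducing one dual variable `y i` for each equation
turns the number of common zeros into an exponential sum. -/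
theorem expSum_eq_card {F : Type} [Field F] [Fintype F] [DecidableEq F]
    {R : Type} [CommRing R] [IsDomain R] {ψ : AddChar F R} (hψ : ψ.IsPrimitive) {n r : ℕ}
    (f : Fin r → MvPolynomial (Fin (n + 1)) F) :
    ∑ z : Fin r ⊕ Fin (n + 1) → F, ∏ j : Σ i, (f i).support,
        ψ ((f j.1).coeff j.2 * ∏ v, z v ^ expo (fun i => (f i).support) j v)
      = ((Fintype.card F ^ r * #{x : Fin (n + 1) → F | ∀ i, MvPolynomial.eval x (f i) = 0} : ℕ)
          : R) := by
  have h1 (z : Fin r ⊕ Fin (n + 1) → F) : ∏ j : Σ i, (f i).support,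
        ψ ((f j.1).coeff j.2 * ∏ v, z v ^ expo (fun i => (f i).support) j v)
      = ∏ i, ψ (z (Sum.inl i) * MvPolynomial.eval (fun v => z (Sum.inr v)) (f i)) := by
    rw [Fintype.prod_sigma]
    refine Finset.prod_congr rfl fun i _ => ?_
    rw [MvPolynomial.eval_eq', Finset.mul_sum, ← Finset.sum_coe_sort, addChar_sum]
    refine Finset.prod_congr rfl fun e _ => ?_
    congr 1
    rw [Fintype.prod_sum_type, Finset.prod_eq_single i]
    · simp only [expo, Sum.elim_inl, Sum.elim_inr, if_true, pow_one]
      ring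
    · intro b _ hb
      simp [expo, hb.symm]
    · simp
  simp_rw [h1]
  rw [← (Equiv.sumArrowEquivProdArrow (Fin r) (Fin (n + 1)) F).symm.sum_comp, Fintype.sum_prod_type,
    Finset.sum_comm]
  have h2 (x : Fin (n + 1) → F) : ∑ y : Fin r → F, ∏ i, ψ (y i * MvPolynomial.eval x (f i))
      = if ∀ i, MvPolynomial.eval x (f i) = 0 then (Fintype.card F : R) ^ r else 0 := by
    rw [← Fintype.piFinset_univ,
      ← Finset.prod_univ_sum (fun _ => Finset.univ) (fun i y => ψ (y * MvPolynomial.eval x (f i)))]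
    simp_rw [AddChar.sum_mulShift _ hψ]
    split_ifs with h
    · simp [h]
    · push Not at h
      obtain ⟨i, hi⟩ := h
      exact Finset.prod_eq_zero (Finset.mem_univ i) (by simp [hi])
  change ∑ x : Fin (n + 1) → F, ∑ y : Fin r → F, ∏ i, ψ (y i * MvPolynomial.eval x (f i)) = _
  simp_rw [h2]
  rw [← Finset.sum_filter, Finset.sum_const, nsmul_eq_mul]
  push_cast
  ring

/-- The affine theorem of Ax and Katz for homogeneous polynomials. In the nontrivial case the
hypothesis on `κ` reads `d₁ * κ + (d₂ + ⋯ + d_r) ≤ n`, which is equivalent to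
`κ ≤ ⌈(n + 1 - ∑ i, d i) / d₁⌉`. -/
theorem affine {F : Type} [Field F] [Fintype F] [DecidableEq F] {n r κ : ℕ} (hr : 0 < r)
    (f : Fin r → MvPolynomial (Fin (n + 1)) F) (d : Fin r → ℕ)
    (hhom : ∀ i, (f i).IsHomogeneous (d i)) (hd1 : ∀ i, 1 ≤ d i)
    (hmax : ∀ i, d i ≤ d ⟨0, hr⟩)
    (hκ : κ = 0 ∨ d ⟨0, hr⟩ * κ + ∑ i ∈ Finset.univ.erase (⟨0, hr⟩ : Fin r), d i ≤ n) :
    Fintype.card F ^ κ ∣ #{x : Fin (n + 1) → F | ∀ i, MvPolynomial.eval x (f i) = 0} := by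
  obtain ⟨p, hchar⟩ := CharP.exists F
  obtain ⟨⟨a, ha⟩, hp, hq⟩ := FiniteField.card F p
  rw [PNat.mk_coe] at hq
  have : Fact p.Prime := ⟨hp⟩
  obtain ⟨R, _, _, ⟨ℓ⟩⟩ := exists_lift p a F hq
  obtain ⟨ψ, hψprim, hψ⟩ := exists_addChar ℓ hq
  obtain ⟨c, k, hexp, hc, hk, hk0⟩ := exists_expansion ℓ hq ψ ψ.map_zero_eq_one hψ
  have hdvd := dvd_expSum ℓ hq ψ hexp hc (J := Σ i, (f i).support)
    (fun j => (f j.1).coeff j.2) (expo fun i => (f i).support) (a * (r + κ)) ?_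
  · rw [expSum_eq_card hψprim] at hdvd
    have h := pow_dvd_of_cast_dvd ℓ _ _ hdvd
    rw [pow_mul, ← hq, pow_add] at h
    exact Nat.dvd_of_mul_dvd_mul_left (pow_pos Fintype.card_pos r) h
  -- `ψ` contributes `(ζ - 1) ^ ∑ k (m j)`, and `p ∣ (ζ - 1) ^ (p - 1)`; the variables of weight zero
  -- contribute the remaining `p ^ (a * Z)`.
  intro m hm
  have hineq := shifted_weight_ineq hp.one_lt ha hr d hd1 hmax hκ (fun i => (f i).support)
    (fun i e he => sum_eq_of_mem_support (hhom i) he)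
    m (fun j => k (m j)) (fun j => hk _) (fun j => hk0 _) hm
  set Z := #{v | ∑ j, expo (fun i => (f i).support) j v * m j = 0}
  have hsplit : (p - 1) * (a * (r + κ) - a * Z) ≤ ∑ j, k (m j) := by
    rw [Nat.mul_sub]; omega
  calc (p : R) ^ (a * (r + κ)) ∣ (p : R) ^ (a * (r + κ) - a * Z) * (p : R) ^ (a * Z) := by
        rw [← pow_add]; exact pow_dvd_pow _ (by omega)
    _ ∣ (ℓ.ζ - 1) ^ (∑ j, k (m j)) * ((p ^ a : ℕ) : R) ^ Z := by
        refine mul_dvd_mul ?_ (by rw [Nat.cast_pow, pow_mul])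
        refine (pow_dvd_pow_of_dvd (p_dvd_pi_pow ℓ) _).trans ?_
        rw [← pow_mul]
        exact pow_dvd_pow _ hsplit

/-- The affine cone over a projective zero locus consists of the origin and of `q - 1` nonzero
vectors on each line. -/
theorem card_cone {F : Type} [Field F] [Fintype F] [DecidableEq F] {n r : ℕ}
    (f : Fin r → MvPolynomial (Fin (n + 1)) F) (d : Fin r → ℕ)
    (hhom : ∀ i, (f i).IsHomogeneous (d i)) (hd1 : ∀ i, 1 ≤ d i) :
    #{x : Fin (n + 1) → F | ∀ i, MvPolynomial.eval x (f i) = 0}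
      = 1 + (Fintype.card F - 1) *
        Nat.card {P : Projectivization F (Fin (n + 1) → F) //
          ∀ i, ∀ (v : Fin (n + 1) → F) (hv : v ≠ 0), Projectivization.mk F v hv = P →
            MvPolynomial.eval v (f i) = 0} := by
  have hscale (i : Fin r) (u : F) (x : Fin (n + 1) → F) :
      MvPolynomial.eval (u • x) (f i) = u ^ d i * MvPolynomial.eval x (f i) := by
    rw [MvPolynomial.eval_eq', MvPolynomial.eval_eq', Finset.mul_sum]
    refine Finset.sum_congr rfl fun e he => ?_
    simp_rw [Pi.smul_apply, smul_eq_mul, mul_pow]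
    rw [Finset.prod_mul_distrib, Finset.prod_pow_eq_pow_sum, sum_eq_of_mem_support (hhom i) he]
    ring
  let X := {P : Projectivization F (Fin (n + 1) → F) //
          ∀ i, ∀ (v : Fin (n + 1) → F) (hv : v ≠ 0), Projectivization.mk F v hv = P →
            MvPolynomial.eval v (f i) = 0}
  let Y := {x : Fin (n + 1) → F // x ≠ 0 ∧ ∀ i, MvPolynomial.eval x (f i) = 0}
  -- A nonzero point of the cone is a unit multiple of the chosen representative of its line.
  let φ : Fˣ × X → Y := fun w => ⟨(w.1 : F) • w.2.1.rep,
    smul_ne_zero w.1.ne_zero w.2.1.rep_nonzero, fun i => by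
      rw [hscale, w.2.2 i _ w.2.1.rep_nonzero (Projectivization.mk_rep _), mul_zero]⟩
  have hφ : Function.Bijective φ := by
    have hmk (w : Fˣ × X) : Projectivization.mk F (φ w).1 (φ w).2.1 = w.2.1 := by
      exact ((Projectivization.mk_eq_mk_iff F _ _ _ w.2.1.rep_nonzero).mpr ⟨w.1, rfl⟩).trans
        (Projectivization.mk_rep _)
    constructor
    · intro w w' h
      have h2 : w.2 = w'.2 := by
        apply Subtype.ext
        rw [← hmk w, ← hmk w']
        congr 1
        exact congrArg Subtype.val h
      have h3 : (w.1 : F) • w.2.1.rep = (w'.1 : F) • w'.2.1.rep := congrArg Subtype.val h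
      rw [h2] at h3
      exact Prod.ext (Units.ext (smul_left_injective F w'.2.1.rep_nonzero h3)) h2
    · rintro ⟨x, hx0, hx⟩
      obtain ⟨u, hu⟩ := Projectivization.exists_smul_eq_mk_rep F x hx0
      refine ⟨(u⁻¹, ⟨Projectivization.mk F x hx0, fun i v hv h => ?_⟩), Subtype.ext ?_⟩
      · obtain ⟨c, hc⟩ := (Projectivization.mk_eq_mk_iff F v x hv hx0).mp h
        rw [← hc, Units.smul_def, hscale, hx i, mul_zero]
      · change ((u⁻¹ : Fˣ) : F) • (Projectivization.mk F x hx0).rep = x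
        rw [← hu, ← Units.smul_def, inv_smul_smul]
  have hcard := Nat.card_eq_of_bijective φ hφ
  rw [Nat.card_prod, Nat.card_eq_fintype_card, Fintype.card_units] at hcard
  change _ = 1 + (Fintype.card F - 1) * Nat.card X
  rw [hcard, Nat.card_eq_fintype_card, Fintype.card_subtype]
  have h0 (i : Fin r) : MvPolynomial.eval (0 : Fin (n + 1) → F) (f i) = 0 := by
    have h := hscale i 0 0
    rwa [zero_smul, zero_pow (by have := hd1 i; omega), zero_mul] at h
  rw [← Finset.card_erase_add_one (a := (0 : Fin (n + 1) → F)) (by simpa using h0), add_comm]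
  congr 2
  ext x
  simp

end AxKatz



/-- **The Ax–Katz theorem, projective form.** Let `Fq` be a finite field with `q` elements
(`q` a prime power), and let `f 0, …, f (r-1)` be nonzero homogeneous polynomials in
`Fq[x₀, …, xₙ]` of degrees `d₁ ≥ d₂ ≥ … ≥ d_r ≥ 1`.  Let `X(Fq)` be the set of points of
`ℙⁿ(Fq)` (one-dimensional subspaces of `Fq^{n+1}`) on whose nonzero representatives all
the `f i` vanish.  Set `κ = max {0, ⌊(n − d₂ − … − d_r) / d₁⌋}`.  Then
`|X(Fq)| ≡ 1 + q + q² + … + qⁿ (mod q ^ κ)`, i.e. the number of `Fq`-rational points of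
`X` is congruent to `|ℙⁿ(Fq)|` modulo `q ^ κ`. -/
theorem ax_katz_projective (Fq : Type) [Field Fq] [Fintype Fq]
    (n r : ℕ) (hr : 0 < r)
    (f : Fin r → MvPolynomial (Fin (n + 1)) Fq)
    (hne : ∀ i, f i ≠ 0)
    (d : Fin r → ℕ)
    (hhom : ∀ i, (f i).IsHomogeneous (d i))
    (hd1 : ∀ i, 1 ≤ d i)
    (hsorted : ∀ i j : Fin r, i ≤ j → d j ≤ d i)
    (κ : ℕ)
    (hκ : (κ : ℤ) = max 0
      ⌊((n : ℚ) - ∑ i ∈ Finset.univ.erase (⟨0, hr⟩ : Fin r), (d i : ℚ)) /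
        ((d ⟨0, hr⟩ : ℚ))⌋) :
    (Nat.card {P : Projectivization Fq (Fin (n + 1) → Fq) //
        ∀ i, ∀ (v : Fin (n + 1) → Fq) (hv : v ≠ 0), Projectivization.mk Fq v hv = P →
          MvPolynomial.eval v (f i) = 0} : ℤ) ≡
      ∑ j ∈ Finset.range (n + 1), (Fintype.card Fq : ℤ) ^ j
        [ZMOD (Fintype.card Fq : ℤ) ^ κ] := by
  classical
  have hκ' : κ = 0 ∨
      d ⟨0, hr⟩ * κ + ∑ i ∈ Finset.univ.erase (⟨0, hr⟩ : Fin r), d i ≤ n := by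
    rcases Nat.eq_zero_or_pos κ with h0 | h0
    · exact Or.inl h0
    right
    have h1 : (κ : ℤ) ≤ ⌊((n : ℚ) - ∑ i ∈ Finset.univ.erase (⟨0, hr⟩ : Fin r), (d i : ℚ)) /
        ((d ⟨0, hr⟩ : ℚ))⌋ := by
      rcases le_max_iff.mp hκ.le with h | h
      · omega
      · exact h
    have hd : (0 : ℚ) < d ⟨0, hr⟩ := by exact_mod_cast hd1 ⟨0, hr⟩
    rw [Int.le_floor, le_div_iff₀ hd] at h1
    have h2 : (d ⟨0, hr⟩ : ℚ) * κ
        + ∑ i ∈ Finset.univ.erase (⟨0, hr⟩ : Fin r), (d i : ℚ) ≤ n := by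
      push_cast at h1
      linarith
    exact_mod_cast h2
  have hdvd := AxKatz.affine hr f d hhom hd1 (fun i => hsorted _ i (Fin.mk_le_mk.mpr (Nat.zero_le _)))
    hκ'
  rw [AxKatz.card_cone f d hhom hd1] at hdvd
  have hq1 : 1 ≤ Fintype.card Fq := Fintype.card_pos
  have hκn : κ ≤ n + 1 := by
    rcases hκ' with h | h
    · omega
    · have := Nat.le_mul_of_pos_left κ (hd1 ⟨0, hr⟩)
      omega
  generalize Nat.card _ = N at hdvd ⊢
  generalize Fintype.card Fq = q at hdvd hq1 ⊢
  -- As `q - 1` is prime to `q ^ κ`, the congruence may be multiplied by it.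
  rw [Int.modEq_iff_dvd]
  have hcop : IsCoprime ((q : ℤ) ^ κ) ((q : ℤ) - 1) :=
    IsCoprime.pow_left ⟨1, -1, by ring⟩
  apply hcop.dvd_of_dvd_mul_right
  have h1 : ((q : ℤ) ^ κ) ∣ 1 + ((q : ℤ) - 1) * N := by
    have := Int.natCast_dvd_natCast.mpr hdvd
    push_cast [Nat.cast_sub hq1] at this
    exact this
  have h2 : (∑ j ∈ Finset.range (n + 1), (q : ℤ) ^ j - N) * ((q : ℤ) - 1)
      = (q : ℤ) ^ (n + 1) - (1 + ((q : ℤ) - 1) * N) := by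
    rw [sub_mul, geom_sum_mul]; ring
  rw [h2]
  exact dvd_sub (pow_dvd_pow _ hκn) h1
end

section
/- Let q be a power of a prime, let n ≥ 1, and let f ∈ F_q[x_0, ..., x_n] be a nonzero homogeneous polynomial of degree d with 1 ≤ d ≤ n. Let X(F_q) denote the set of points of P^n(F_q) on whose nonzero representatives f vanishes. Then |X(F_q)| ≡ 1 (mod q); in particular X(F_q) is nonempty, i.e. the projective hypersurface of degree at most n in P^n has an F_q-rational point. -/
/-!
Write `q = p ^ a`. The projective congruence follows from the affine one `q ∣ N`, where `N` is the
number of zeros of `f` in `F_q^(n+1)`: since `f` is homogeneous of positive degree,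
`N = 1 + (q - 1) |X(F_q)|`.

For the affine congruence, lift `f` to the Witt vectors `W(F_q)`, a domain of characteristic zero
with residue field `F_q` and maximal ideal `(p)`, by means of the Teichmüller map `τ`: put
`F(v) = ∑ₘ τ(coeffₘ f · vᵐ)`. With `M = (q - 1) p ^ a`, the element `1 - F(v) ^ M` is congruent
modulo `p ^ a` to the indicator of `f(v) = 0`, so it suffices that `p ^ a ∣ ∑ᵥ F(v) ^ M`.
Expanding by the multinomial theorem and summing over `v` gives terms
`multinomial(j) · const · ∏_c ∑ₓ τ(x) ^ (∑ₘ jₘ m_c)` with `∑ₘ jₘ = M`. If some exponent is zero,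
its inner sum is `q`; if some exponent is not divisible by `q - 1`, its inner sum vanishes.

In the remaining case all `n + 1` exponents are positive multiples of `q - 1`, and the multinomial
coefficient itself is divisible by `p ^ a`. By Legendre's formula its valuation is
`(∑ₘ s(jₘ) - s(M)) / (p - 1)`, where `s` is the base-`p` digit sum and `s(M) ≤ a (p - 1)`, so the
claim is `∑ₘ s(jₘ) ≥ 2 a (p - 1)` (`two_mul_le_digits_sum`). To see this, replace each `jₘ` by its
`a` cyclic digit rotations `wₘ(t) ≡ p ^ t jₘ mod (q - 1)`, which satisfy
`∑ₜ wₘ(t) = s(jₘ) (q - 1) / (p - 1)`. For fixed `t`, every `∑ₘ wₘ(t) m_c` is still a positive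
multiple of `q - 1`, so `d ∑ₘ wₘ(t) ≥ (n + 1) (q - 1) > d (q - 1)`; as `∑ₘ wₘ(t)` is itself a
multiple of `q - 1`, it is at least `2 (q - 1)`. Summing over `t` gives the bound.
-/

/-! ### Digit sums and multinomial coefficients -/

/-- Cyclic rotation of base-`p` digits: writing `j = ∑ₗ bₗ p ^ l`, the function `w` is
`w t = ∑ₗ bₗ p ^ ((l + t) % a)`. It is built one digit at a time. -/
theorem exists_digit_rotation (p a : ℕ) (hp : 1 < p) (j : ℕ) :
    ∃ w : ℕ → ℕ, (∀ t, w t ≡ p ^ t * j [MOD p ^ a - 1]) ∧ (∀ t, w (t + a) = w t) ∧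
      (p - 1) * ∑ t ∈ Finset.range a, w t = (p.digits j).sum * (p ^ a - 1) ∧
      (0 < j → ∀ t, 0 < w t) := by
  induction j using Nat.strong_induction_on with
  | _ j ih =>
    rcases Nat.eq_zero_or_pos j with rfl | hj
    · exact ⟨fun _ => 0, by simp [Nat.ModEq.refl]⟩
    obtain ⟨w, hmod, hper, hsum, hpos⟩ := ih (j / p) (Nat.div_lt_self hj hp)
    have hqa : p ^ a ≡ 1 [MOD p ^ a - 1] := by
      have h1 : 1 ≤ p ^ a := Nat.one_le_pow _ _ (by omega)
      exact ((Nat.modEq_iff_dvd' h1).2 dvd_rfl).symm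
    refine ⟨fun t => j % p * p ^ (t % a) + w (t + 1), fun t => ?_, fun t => ?_, ?_, fun _ t => ?_⟩
    · have h1 : p ^ (t % a) ≡ p ^ t [MOD p ^ a - 1] := by
        conv_rhs => rw [← Nat.mod_add_div t a, pow_add, pow_mul]
        simpa using ((hqa.pow (t / a)).mul_left (p ^ (t % a))).symm
      calc _ ≡ j % p * p ^ t + p ^ (t + 1) * (j / p) [MOD p ^ a - 1] :=
            (h1.mul_left _).add (hmod _)
        _ = p ^ t * (j % p + p * (j / p)) := by ring
        _ = _ := by rw [Nat.mod_add_div]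
    · simp only [Nat.add_mod_right]
      rw [show t + a + 1 = t + 1 + a by ring, hper]
    · have hshift : ∑ t ∈ Finset.range a, w (t + 1) = ∑ t ∈ Finset.range a, w t := by
        have h1 := Finset.sum_range_succ w a
        have h2 := Finset.sum_range_succ' w a
        have h3 := hper 0
        simp only [zero_add] at h3
        omega
      have hgeom : (p - 1) * ∑ t ∈ Finset.range a, p ^ (t % a) = p ^ a - 1 := by
        rw [Finset.sum_congr rfl fun t ht => by rw [Nat.mod_eq_of_lt (Finset.mem_range.1 ht)],
          mul_comm]
        have h := Nat.geomSum_eq (m := p) (by omega) a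
        rw [h]
        exact Nat.div_mul_cancel (by simpa using Nat.sub_dvd_pow_sub_pow p 1 a)
      rw [Finset.sum_add_distrib, hshift, mul_add, hsum, ← Finset.mul_sum, mul_left_comm, hgeom,
        Nat.digits_def' hp hj, List.sum_cons, add_mul]
    · rcases Nat.eq_zero_or_pos (j % p) with h0 | h0
      · have : 0 < j / p := Nat.div_pos (Nat.le_of_dvd hj (Nat.dvd_of_mod_eq_zero h0)) (by omega)
        have := hpos this (t + 1)
        exact Nat.add_pos_right _ this
      · have : 0 < j % p * p ^ (t % a) := by positivity
        exact Nat.add_pos_left this _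

theorem digits_sum_le (p a A : ℕ) (hp : 1 < p) :
    (p.digits ((p ^ a - 1) * p ^ A)).sum ≤ a * (p - 1) := by
  rcases Nat.eq_zero_or_pos (p ^ a - 1) with h0 | h0
  · simp [h0]
  rw [mul_comm, Nat.digits_base_pow_mul hp h0]
  simp only [List.sum_append, List.sum_replicate, smul_zero, zero_add]
  have h1 : (p.digits (p ^ a - 1)).length ≤ a := by
    rw [Nat.digits_length_le_iff hp]
    omega
  calc _ ≤ (p.digits (p ^ a - 1)).length • (p - 1) :=
        List.sum_le_card_nsmul _ _ fun x hx => by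
          have := Nat.digits_lt_base hp hx
          omega
    _ ≤ _ := Nat.mul_le_mul_right _ h1

/-- Legendre's formula for a multinomial coefficient with top entry `(p ^ a - 1) * p ^ A`, whose
digit sum is at most `a * (p - 1)`. -/
theorem pow_dvd_multinomial {ι : Type*} (p a A : ℕ) [hp : Fact p.Prime] (s : Finset ι) (j : ι → ℕ)
    (hsum : ∑ i ∈ s, j i = (p ^ a - 1) * p ^ A)
    (h : 2 * (a * (p - 1)) ≤ ∑ i ∈ s, (p.digits (j i)).sum) :
    p ^ a ∣ Nat.multinomial s j := by
  have hp1 := hp.out.one_lt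
  have hm : Nat.multinomial s j ≠ 0 := (Nat.multinomial_pos s j).ne'
  rw [padicValNat_dvd_iff_le hm]
  have hv : ∀ t : Finset ι, (p - 1) * padicValNat p (∏ i ∈ t, (j i).factorial) +
      ∑ i ∈ t, (p.digits (j i)).sum = ∑ i ∈ t, j i := by
    classical
    intro t
    induction t using Finset.induction_on with
    | empty => simp
    | insert i t hi ih =>
      rw [Finset.prod_insert hi, Finset.sum_insert hi, Finset.sum_insert hi,
        padicValNat.mul (Nat.factorial_ne_zero _)
          (Finset.prod_ne_zero_iff.2 fun _ _ => Nat.factorial_ne_zero _), mul_add,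
        sub_one_mul_padicValNat_factorial]
      have := Nat.digit_sum_le p (j i)
      omega
  have hspec := congrArg (padicValNat p) (Nat.multinomial_spec s j)
  rw [padicValNat.mul (Finset.prod_ne_zero_iff.2 fun _ _ => Nat.factorial_ne_zero _) hm] at hspec
  have hM := sub_one_mul_padicValNat_factorial (p := p) (∑ i ∈ s, j i)
  have hds := digits_sum_le p a A hp1
  rw [← hsum] at hds
  rw [← hspec, mul_add] at hM
  have hvs := hv s
  have h2 := Nat.digit_sum_le p (∑ i ∈ s, j i)
  have : (p - 1) * a ≤ (p - 1) * padicValNat p (Nat.multinomial s j) := by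
    rw [mul_comm (p - 1) a]
    omega
  exact Nat.le_of_mul_le_mul_left this (by omega)

/-- The combinatorial core: if the weights `j i` on exponent vectors `m i` of degree
`d < |κ|` have total weight divisible by `p ^ a - 1`, and every coordinate of `∑ j i • m i` is a
positive multiple of `p ^ a - 1`, then the digit sums of the `j i` add up to at least
`2 a (p - 1)`. -/
theorem two_mul_le_digits_sum {ι κ : Type*} [Fintype κ] (p a d : ℕ) (hp : 1 < p) (ha : 0 < a)
    (s : Finset ι) (j : ι → ℕ) (m : ι → κ → ℕ) (hdeg : ∀ i ∈ s, ∑ c, m i c = d)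
    (hd : d < Fintype.card κ)
    (hj : p ^ a - 1 ∣ ∑ i ∈ s, j i) (hdvd : ∀ c, p ^ a - 1 ∣ ∑ i ∈ s, j i * m i c)
    (hpos : ∀ c, 0 < ∑ i ∈ s, j i * m i c) :
    2 * (a * (p - 1)) ≤ ∑ i ∈ s, (p.digits (j i)).sum := by
  have hQ : 0 < p ^ a - 1 := by
    have := Nat.one_lt_pow ha.ne' hp
    omega
  choose w hmod _ hsum hwpos using fun i => exists_digit_rotation p a hp (j i)
  have key : ∀ t, 2 * (p ^ a - 1) ≤ ∑ i ∈ s, w i t := by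
    intro t
    have hS : p ^ a - 1 ∣ ∑ i ∈ s, w i t := by
      rw [← Nat.modEq_zero_iff_dvd] at hj ⊢
      calc _ ≡ ∑ i ∈ s, p ^ t * j i [MOD p ^ a - 1] := Nat.ModEq.sum fun i _ => hmod i t
        _ = p ^ t * ∑ i ∈ s, j i := by rw [Finset.mul_sum]
        _ ≡ p ^ t * 0 [MOD p ^ a - 1] := hj.mul_left _
    have hc : ∀ c, p ^ a - 1 ≤ ∑ i ∈ s, w i t * m i c := by
      intro c
      apply Nat.le_of_dvd
      · obtain ⟨i, hi, hne⟩ := Finset.exists_ne_zero_of_sum_ne_zero (hpos c).ne'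
        refine Finset.sum_pos' (fun _ _ => Nat.zero_le _) ⟨i, hi, ?_⟩
        have h1 := hwpos i (Nat.pos_of_ne_zero (left_ne_zero_of_mul hne)) t
        exact Nat.mul_pos h1 (Nat.pos_of_ne_zero (right_ne_zero_of_mul hne))
      · have := hdvd c
        rw [← Nat.modEq_zero_iff_dvd] at this ⊢
        calc _ ≡ ∑ i ∈ s, p ^ t * j i * m i c [MOD p ^ a - 1] :=
              Nat.ModEq.sum fun i _ => (hmod i t).mul_right _
          _ = p ^ t * ∑ i ∈ s, j i * m i c := by simp only [Finset.mul_sum, mul_assoc]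
          _ ≡ p ^ t * 0 [MOD p ^ a - 1] := this.mul_left _
    have htot : Fintype.card κ * (p ^ a - 1) ≤ (∑ i ∈ s, w i t) * d := by
      calc _ = ∑ _c : κ, (p ^ a - 1) := by simp
        _ ≤ ∑ c, ∑ i ∈ s, w i t * m i c := Finset.sum_le_sum fun c _ => hc c
        _ = _ := by
          rw [Finset.sum_comm, Finset.sum_mul]
          exact Finset.sum_congr rfl fun i hi => by rw [← Finset.mul_sum, hdeg i hi]
    -- The divisibility of the total weight improves the bound `> p ^ a - 1` to `2 * (p ^ a - 1)`.
    obtain ⟨k, hk⟩ := hS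
    rw [hk, mul_comm 2]
    refine Nat.mul_le_mul_left _ ?_
    by_contra hlt
    have hk1 : k ≤ 1 := by omega
    have : Fintype.card κ * (p ^ a - 1) ≤ d * (p ^ a - 1) := by
      calc _ ≤ _ := htot
        _ = k * (d * (p ^ a - 1)) := by rw [hk]; ring
        _ ≤ 1 * (d * (p ^ a - 1)) := Nat.mul_le_mul_right _ hk1
        _ = _ := one_mul _
    have := Nat.le_of_mul_le_mul_right this hQ
    omega
  refine Nat.le_of_mul_le_mul_right ?_ hQ
  calc 2 * (a * (p - 1)) * (p ^ a - 1) = (p - 1) * ∑ _t ∈ Finset.range a, 2 * (p ^ a - 1) := by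
        simp; ring
    _ ≤ (p - 1) * ∑ t ∈ Finset.range a, ∑ i ∈ s, w i t :=
        Nat.mul_le_mul_left _ (Finset.sum_le_sum fun t _ => key t)
    _ = ∑ i ∈ s, (p - 1) * ∑ t ∈ Finset.range a, w i t := by
        rw [Finset.sum_comm, Finset.mul_sum]
    _ = _ := by rw [Finset.sum_mul]; exact Finset.sum_congr rfl fun i _ => hsum i

/-! ### Counting affine zeros through a characteristic zero lift -/

/-- Orthogonality for the lifted power `x ↦ τ x ^ e`. An `e` not divisible by `|k| - 1` is nonzero,
so no convention for `0 ^ 0` interferes. -/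
theorem sum_lift_pow_eq_zero {k R : Type*} [Field k] [Fintype k] [CommRing R] [IsDomain R]
    (τ : k →* R) (π : R →+* k) (hπ : ∀ x, π (τ x) = x) (e : ℕ)
    (he : ¬ Fintype.card k - 1 ∣ e) : ∑ x : k, τ x ^ e = 0 := by
  rw [← FiniteField.forall_pow_eq_one_iff k e] at he
  push Not at he
  obtain ⟨g, hg⟩ := he
  have hne : τ g ^ e - 1 ≠ 0 := by
    intro h
    apply hg
    have h2 := congrArg π (sub_eq_zero.1 h)
    rw [map_pow, hπ, map_one] at h2
    exact Units.ext (by simpa using h2)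
  have hinv : ∑ x : k, τ x ^ e = τ g ^ e * ∑ x : k, τ x ^ e := by
    rw [Finset.mul_sum, ← Equiv.sum_comp (Units.mulLeft g)]
    simp [mul_pow]
  have : (τ g ^ e - 1) * ∑ x : k, τ x ^ e = 0 := by
    rw [sub_mul, one_mul, ← hinv, sub_self]
  exact (mul_eq_zero.1 this).resolve_left hne

/-- Divisibility of an integer by a power of `p` descends from a domain in which `p ≠ 0` and which
has a residue field of characteristic `p`. -/
theorem pow_dvd_of_pow_dvd_cast {k R : Type*} [Field k] [CommRing R] [IsDomain R] (p : ℕ)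
    [CharP k p] (π : R →+* k) (hp : (p : R) ≠ 0) (a N : ℕ) (h : (p : R) ^ a ∣ (N : R)) :
    p ^ a ∣ N := by
  induction a generalizing N with
  | zero => simp
  | succ a ih =>
    have h1 : p ∣ N := by
      rw [← CharP.cast_eq_zero_iff k p]
      obtain ⟨c, hc⟩ := h
      rw [← map_natCast π N, hc]
      simp [pow_succ]
    obtain ⟨N', rfl⟩ := h1
    rw [pow_succ']
    rw [pow_succ', Nat.cast_mul] at h
    exact Nat.mul_dvd_mul_left _ (ih _ ((mul_dvd_mul_iff_left hp).1 h))

/-- The affine congruence, given a domain `R` whose nonzero element `p` generates the kernel of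
`π : R →+* k`, together with a multiplicative section `τ` of `π`. -/
theorem card_zeros_of_lift {k R κ : Type*} [Field k] [Fintype k] [CommRing R] [IsDomain R]
    [Fintype κ] [DecidableEq κ] [DecidableEq k] (p a : ℕ) [Fact p.Prime] [CharP k p] (ha : 0 < a)
    (hq : Fintype.card k = p ^ a)
    (τ : k →* R) (π : R →+* k) (hπ : ∀ x, π (τ x) = x) (hker : ∀ x, π x = 0 → (p : R) ∣ x)
    (hp0 : (p : R) ≠ 0) (f : MvPolynomial κ k) (d : ℕ) (hf : f.IsHomogeneous d)
    (hd : d < Fintype.card κ) :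
    p ^ a ∣ Fintype.card {v : κ → k // MvPolynomial.eval v f = 0} := by
  have hp1 : 1 < p := (Fact.out : p.Prime).one_lt
  have hq1 : 1 < p ^ a := Nat.one_lt_pow ha.ne' hp1
  refine pow_dvd_of_pow_dvd_cast p π hp0 a _ ?_
  set F : (κ → k) → R := fun v => ∑ m ∈ f.support, τ (f.coeff m * ∏ c, v c ^ m c) with hF
  have hπF : ∀ v, π (F v) = MvPolynomial.eval v f := by
    intro v
    rw [hF, MvPolynomial.eval_eq']
    simp only [map_sum, hπ]
  set M := (p ^ a - 1) * p ^ a with hM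
  -- The indicator of `f v = 0` is congruent to `1 - F v ^ M` modulo `p ^ a`.
  have hterm : ∀ v, (p : R) ^ a ∣
      (if MvPolynomial.eval v f = 0 then (1 : R) else 0) - (1 - F v ^ M) := by
    intro v
    split_ifs with h0
    · rw [sub_sub_cancel]
      have h1 : (p : R) ∣ F v := hker _ (by rw [hπF, h0])
      refine (pow_dvd_pow_of_dvd h1 a).trans (pow_dvd_pow _ ?_)
      calc a ≤ p ^ a := (Nat.lt_pow_self hp1).le
        _ ≤ M := Nat.le_mul_of_pos_left _ (by omega)
    · have h1 : (p : R) ∣ F v ^ (p ^ a - 1) - 1 := hker _ (by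
        rw [map_sub, map_pow, hπF, map_one, ← hq, FiniteField.pow_card_sub_one_eq_one _ h0,
          sub_self])
      have h2 := dvd_sub_pow_of_dvd_sub h1 a
      rw [one_pow, ← pow_mul] at h2
      rw [zero_sub, neg_sub]
      exact (pow_dvd_pow _ (Nat.le_succ a)).trans h2
  have hsumF : (p : R) ^ a ∣ ∑ v, F v ^ M := by
    have hexp : ∀ v, F v ^ M = ∑ j ∈ Finset.piAntidiag f.support M,
        (Nat.multinomial f.support j : R) * ((∏ m ∈ f.support, τ (f.coeff m) ^ j m) *
          ∏ c, τ (v c) ^ ∑ m ∈ f.support, j m * m c) := by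
      intro v
      rw [hF, Finset.sum_pow_eq_sum_piAntidiag]
      refine Finset.sum_congr rfl fun j _ => ?_
      congr 1
      simp only [map_mul, mul_pow, map_prod, map_pow, Finset.prod_mul_distrib]
      congr 1
      simp only [← Finset.prod_pow, ← pow_mul]
      rw [Finset.prod_comm]
      refine Finset.prod_congr rfl fun c _ => ?_
      rw [Finset.prod_pow_eq_pow_sum]
      simp only [mul_comm]
    simp only [hexp]
    rw [Finset.sum_comm]
    refine Finset.dvd_sum fun j hj => ?_
    rw [← Finset.mul_sum, ← Finset.mul_sum]
    have hprod : ∑ v : κ → k, ∏ c, τ (v c) ^ ∑ m ∈ f.support, j m * m c =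
        ∏ c, ∑ x : k, τ x ^ ∑ m ∈ f.support, j m * m c := by
      rw [Finset.prod_univ_sum, Fintype.piFinset_univ]
    rw [hprod]
    -- The exponent `0` contributes `∑ₓ τ x ^ 0 = q`, including the term `x = 0`.
    by_cases hz : ∃ c, ∑ m ∈ f.support, j m * m c = 0
    · obtain ⟨c, hc⟩ := hz
      refine Dvd.dvd.mul_left (Dvd.dvd.mul_left ?_ _) _
      refine Dvd.dvd.trans ?_ (Finset.dvd_prod_of_mem _ (Finset.mem_univ c))
      rw [hc]
      simp [hq]
    by_cases hnd : ∃ c, ¬ p ^ a - 1 ∣ ∑ m ∈ f.support, j m * m c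
    · obtain ⟨c, hc⟩ := hnd
      rw [Finset.prod_eq_zero (Finset.mem_univ c)
        (sum_lift_pow_eq_zero τ π hπ _ (by rwa [hq]))]
      simp
    push Not at hz hnd
    refine Dvd.dvd.mul_right ?_ _
    rw [← Nat.cast_pow]
    apply Nat.cast_dvd_cast
    have hjM : ∑ m ∈ f.support, j m = M := (Finset.mem_piAntidiag.1 hj).1
    refine pow_dvd_multinomial p a a _ _ hjM ?_
    refine two_mul_le_digits_sum p a d hp1 ha _ j (fun m c => m c) (fun m hm => ?_) hd
      (by rw [hjM]; exact Dvd.intro _ rfl) hnd (fun c => Nat.pos_of_ne_zero (hz c))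
    have := hf (MvPolynomial.mem_support_iff.1 hm)
    rw [← this, Finsupp.weight_apply, Finsupp.sum_fintype _ _ (by simp)]
    simp
  have hcard : (p : R) ^ a ∣ (Fintype.card (κ → k) : R) := by
    rw [Fintype.card_fun, hq, ← Nat.cast_pow]
    exact Nat.cast_dvd_cast (dvd_pow_self _ (by omega))
  have htot := Finset.dvd_sum (s := Finset.univ) fun v _ => hterm v
  rw [Finset.sum_sub_distrib, Finset.sum_sub_distrib] at htot
  rw [Fintype.card_subtype]
  have : (p : R) ^ a ∣ ∑ v : κ → k, (1 : R) - ∑ v, F v ^ M := by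
    refine dvd_sub ?_ hsumF
    simpa using hcard
  have := (dvd_sub_left this).1 htot
  simpa using this

/-- The affine form of Ax's theorem, for one homogeneous polynomial and modulo `q`. -/
theorem card_dvd_card_zeros {k κ : Type*} [Field k] [Fintype k] [Fintype κ]
    (f : MvPolynomial κ k) (d : ℕ) (hf : f.IsHomogeneous d) (hd : d < Fintype.card κ) :
    Fintype.card k ∣ Nat.card {v : κ → k // MvPolynomial.eval v f = 0} := by
  classical
  obtain ⟨p, hchar⟩ := CharP.exists k
  obtain ⟨a, hp, hq⟩ := FiniteField.card k p
  have : Fact p.Prime := ⟨hp⟩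
  rw [hq, Nat.card_eq_fintype_card]
  refine card_zeros_of_lift (R := WittVector p k) p a a.pos hq (WittVector.teichmuller p)
    WittVector.constantCoeff (fun x => WittVector.teichmuller_coeff_zero p x) (fun x hx => ?_)
    (WittVector.p_nonzero p k) f d hf hd
  rw [← Ideal.mem_span_singleton]
  exact (WittVector.mem_span_p_iff_coeff_zero_eq_zero x).2 hx

/-! ### Passage to projective space -/

theorem eval_smul_of_isHomogeneous {k κ : Type*} [Field k] [Fintype κ] {f : MvPolynomial κ k}
    {d : ℕ} (hf : f.IsHomogeneous d) (t : k) (v : κ → k) :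
    MvPolynomial.eval (t • v) f = t ^ d * MvPolynomial.eval v f := by
  rw [MvPolynomial.eval_eq', MvPolynomial.eval_eq', Finset.mul_sum]
  refine Finset.sum_congr rfl fun m hm => ?_
  have hmd : ∑ c, m c = d := by
    rw [← hf (MvPolynomial.mem_support_iff.1 hm), Finsupp.weight_apply,
      Finsupp.sum_fintype _ _ (by simp)]
    simp
  simp only [Pi.smul_apply, smul_eq_mul, mul_pow, Finset.prod_mul_distrib,
    Finset.prod_pow_eq_pow_sum, hmd]
  ring

/-- **Ax's theorem** (generalizing Chevalley–Warning from mod `p` to mod `q`).  Let `Fq`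
be a finite field with `q` elements (`q` a prime power), `n ≥ 1`, and let
`f ∈ Fq[x₀, …, xₙ]` be a nonzero homogeneous polynomial of degree `d` with `1 ≤ d ≤ n`.
Let `X(Fq)` be the set of points of `ℙⁿ(Fq)` on whose nonzero representatives `f`
vanishes.  Then `|X(Fq)| ≡ 1 (mod q)`; in particular `X(Fq)` is nonempty, i.e. a
projective hypersurface of degree at most `n` in `ℙⁿ` has an `Fq`-rational point. -/
theorem ax_hypersurface (Fq : Type) [Field Fq] [Fintype Fq]
    (n : ℕ) (hn : 1 ≤ n)
    (f : MvPolynomial (Fin (n + 1)) Fq) (hne : f ≠ 0)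
    (d : ℕ) (hhom : f.IsHomogeneous d) (hd1 : 1 ≤ d) (hdn : d ≤ n) :
    ((Nat.card {P : Projectivization Fq (Fin (n + 1) → Fq) //
        ∀ (v : Fin (n + 1) → Fq) (hv : v ≠ 0), Projectivization.mk Fq v hv = P →
          MvPolynomial.eval v f = 0} : ℤ) ≡ 1 [ZMOD (Fintype.card Fq : ℤ)]) ∧
      Nonempty {P : Projectivization Fq (Fin (n + 1) → Fq) //
        ∀ (v : Fin (n + 1) → Fq) (hv : v ≠ 0), Projectivization.mk Fq v hv = P →
          MvPolynomial.eval v f = 0} := by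
  classical
  set V := Fin (n + 1) → Fq
  set Q : Projectivization Fq V → Prop := fun P => ∀ (v : V) (hv : v ≠ 0),
    Projectivization.mk Fq v hv = P → MvPolynomial.eval v f = 0 with hQ
  have hdvd := card_dvd_card_zeros f d hhom (by simp; omega)
  have hscale : ∀ (u : Fqˣ) (v : V), MvPolynomial.eval (u • v) f = 0 ↔
      MvPolynomial.eval v f = 0 := by
    intro u v
    have h : MvPolynomial.eval (u • v) f = (u : Fq) ^ d * MvPolynomial.eval v f :=
      eval_smul_of_isHomogeneous hhom (u : Fq) v
    rw [h]
    simp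
  have hmk : ∀ (v : V) (hv : v ≠ 0), Q (Projectivization.mk Fq v hv) ↔
      MvPolynomial.eval v f = 0 := by
    refine fun v hv => ⟨fun h => h v hv rfl, fun h w hw hwv => ?_⟩
    obtain ⟨u, rfl⟩ := (Projectivization.mk_eq_mk_iff Fq w v hw hv).1 hwv
    exact (hscale u v).2 h
  -- The first component of the equivalence sends `v` to its class definitionally.
  have e1 : {v : {v : V // v ≠ 0} // MvPolynomial.eval v.1 f = 0} ≃ {P // Q P} × Fqˣ :=
    ((Projectivization.nonZeroEquivProjectivizationProdUnits Fq V).subtypeEquiv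
      (q := fun x => Q x.1) (fun v => (hmk v.1 v.2).symm)).trans
      Equiv.prodSubtypeFstEquivSubtypeProd
  have hzero : MvPolynomial.eval (0 : V) f = 0 := by
    have h := eval_smul_of_isHomogeneous hhom (0 : Fq) (0 : V)
    rwa [zero_pow (by omega), zero_mul, smul_zero] at h
  have hN : Nat.card {v : V // MvPolynomial.eval v f = 0} =
      Nat.card {P // Q P} * (Fintype.card Fq - 1) + 1 := by
    have h1 := Nat.card_congr e1
    rw [Nat.card_prod, Nat.card_eq_fintype_card (α := Fqˣ), Fintype.card_units] at h1
    have e2 : {v : {v : V // v ≠ 0} // MvPolynomial.eval v.1 f = 0} ≃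
        {v : V // v ≠ 0 ∧ MvPolynomial.eval v f = 0} :=
      Equiv.subtypeSubtypeEquivSubtypeInter (fun v : V => v ≠ 0)
        (fun v => MvPolynomial.eval v f = 0)
    rw [← h1, Nat.card_congr e2, Nat.card_eq_fintype_card, Nat.card_eq_fintype_card,
      Fintype.card_subtype, Fintype.card_subtype,
      ← Finset.card_erase_add_one (a := (0 : V)) (by simpa using hzero)]
    congr 2
    ext v
    simp
  have hmod : (Nat.card {P // Q P} : ℤ) ≡ 1 [ZMOD (Fintype.card Fq : ℤ)] := by
    rw [hN] at hdvd
    obtain ⟨c, hc⟩ := hdvd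
    have hpos : 1 ≤ Fintype.card Fq := Fintype.card_pos
    zify [hpos] at hc
    rw [Int.modEq_iff_dvd]
    exact ⟨c - Nat.card {P // Q P}, by linear_combination hc⟩
  refine ⟨hmod, ?_⟩
  by_contra hemp
  rw [not_nonempty_iff] at hemp
  rw [Nat.card_of_isEmpty, Int.modEq_iff_dvd] at hmod
  have h1 : 1 < Fintype.card Fq := Fintype.one_lt_card
  have := Int.le_of_dvd (by norm_num) hmod
  push_cast at this
  omega
end

section
/- Let p be a prime, R a commutative ring of characteristic p, F : R → R the Frobenius endomorphism r ↦ r^p, and f ∈ R. Form the tensor product R ⊗_{F,R} R_f, where R is viewed as a right R-module via F (so the balancing relation is r·s^p ⊗ m = r ⊗ s·m for r, s ∈ R and m ∈ R_f) and R_f carries its usual R-module structure. Then the map θ : R ⊗_{F,R} R_f → R_f determined by θ(r ⊗ a/f^k) = r·a^p/f^{pk} is a well-defined isomorphism of R-modules; an inverse is given by a/f^k ↦ a·f^{k(p−1)} ⊗ 1/f^k. In other words, the Frobenius pullback F^*(R_f) is canonically isomorphic to R_f, so R_f is a unit module for the Frobenius. -/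
/-!
The Frobenius of `R` maps the powers of `f` to powers of `f`, so it extends to a ring
endomorphism `φ` of `R_f` (`locFrob`), and `r ⊗ x ↦ r · φ x` is balanced, hence defines
`θ : F^*(R_f) → R_f`. It is surjective because
`a / f^k = (a f^{k(p-1)}) · 1 / f^{pk} = θ (a f^{k(p-1)} ⊗ 1 / f^k)`.

For injectivity, bringing fractions to a common denominator shows that every tensor is of the form
`r ⊗ 1 / f^k` (`exists_eq_tmul`). If `θ (r ⊗ 1 / f^k) = r / f^{pk}` vanishes, then `f^j r = 0` for
some `j`, so that `r ⊗ 1 / f^k = r f^{pj} ⊗ 1 / f^{k+j} = 0` (`tmul_shift`).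
The formula for the inverse is then the computation used for surjectivity.
-/

open TensorProduct

/-- `FrobTwist R p` is the ring `R` viewed as an algebra over itself via the Frobenius
endomorphism `r ↦ r ^ p`.  For an `R`-module `M`, the base change
`FrobTwist R p ⊗[R] M` is then the Frobenius pullback `F^* M`: its balancing relation
reads `(r • s) ⊗ m = s ⊗ (r • m)`, i.e. `r ^ p * s ⊗ m = s ⊗ r • m`. -/
def FrobTwist (R : Type*) (p : ℕ) : Type _ := R

instance (R : Type*) (p : ℕ) [CommRing R] : CommRing (FrobTwist R p) :=
  inferInstanceAs (CommRing R)

/-- The element of `FrobTwist R p` corresponding to `r : R`. -/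
def FrobTwist.of {R : Type*} (p : ℕ) (r : R) : FrobTwist R p := r

/-- The algebra structure on `FrobTwist R p` given by the Frobenius `r ↦ r ^ p`. -/
noncomputable instance (R : Type*) (p : ℕ) [CommRing R] [Fact p.Prime] [CharP R p] :
    Algebra R (FrobTwist R p) :=
  RingHom.toAlgebra (show R →+* FrobTwist R p from frobenius R p)

/-- `Localization.Away f` as a module over `FrobTwist R p` (which is `R` as a ring). -/
noncomputable instance (R : Type*) (p : ℕ) [CommRing R] (f : R) :
    Module (FrobTwist R p) (Localization.Away f) :=
  inferInstanceAs (Module R (Localization.Away f))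

namespace FrobTwist

variable {R : Type*} [CommRing R] {p : ℕ} (f : R)

/-- The fraction `a / f ^ k` in `R_f`. -/
noncomputable abbrev frac (a : R) (k : ℕ) : Localization.Away f :=
  Localization.mk a (⟨f ^ k, k, rfl⟩ : Submonoid.powers f)

theorem exists_frac (x : Localization.Away f) : ∃ a k, x = frac f a k := by
  induction x using Localization.induction_on with
  | H y =>
    obtain ⟨a, _, k, rfl⟩ := y
    exact ⟨a, k, rfl⟩

theorem frac_eq_of (a b : R) (k l : ℕ) (h : f ^ l * a = f ^ k * b) :
    frac f a k = frac f b l := by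
  rw [Localization.mk_eq_mk_iff, Localization.r_iff_exists]
  exact ⟨1, by simpa using h⟩

theorem of_smul (r a : R) (k : ℕ) : of p r • frac f a k = frac f (r * a) k :=
  Localization.smul_mk r a _

variable [Fact p.Prime] [CharP R p]

theorem smul_of (s r : R) : s • of p r = of p (s ^ p * r) := rfl

variable (p) in
/-- The ring endomorphism of `R_f` extending the Frobenius of `R`. It is obtained by functoriality
of localization rather than as the Frobenius of `R_f`, since `R_f` may be the zero ring, which
does not satisfy `CharP _ p`. -/
noncomputable def locFrob : Localization.Away f →+* Localization.Away f :=
  IsLocalization.map (M := Submonoid.powers f) (T := Submonoid.powers f) (Localization.Away f)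
    (frobenius R p) (by
      rintro _ ⟨k, rfl⟩
      exact ⟨k * p, by simp [frobenius_def, pow_mul]⟩)

theorem locFrob_frac (a : R) (k : ℕ) : locFrob p f (frac f a k) = frac f (a ^ p) (p * k) := by
  rw [frac, frac, Localization.mk_eq_mk', locFrob, IsLocalization.map_mk']
  congr 1
  ext
  simp [frobenius_def, ← pow_mul, mul_comm]

theorem locFrob_smul (s : R) (x : Localization.Away f) :
    locFrob p f (s • x) = of p (s ^ p) • locFrob p f x := by
  obtain ⟨a, k, rfl⟩ := exists_frac f x
  rw [frac, Localization.smul_mk, locFrob_frac, locFrob_frac, of_smul, smul_eq_mul, mul_pow]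

variable (p) in
/-- The structure map `F^*(R_f) → R_f`, `r ⊗ x ↦ r · φ x` with `φ = locFrob p f`. The `R`-action
on the target through which it is balanced is not the standard one, so the map is first built as
an additive map and then seen to be linear over `FrobTwist R p`. -/
noncomputable def theta :
    (FrobTwist R p ⊗[R] Localization.Away f) →ₗ[FrobTwist R p] Localization.Away f :=
  let g : FrobTwist R p ⊗[R] Localization.Away f →+ Localization.Away f :=
    TensorProduct.liftAddHom
      (AddMonoidHom.mk' (fun r : FrobTwist R p =>
          AddMonoidHom.mk' (fun x => r • locFrob p f x) (by intro x y; rw [map_add, smul_add]))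
        (by intro r s; ext x; exact add_smul _ _ _))
      (by
        intro s r x
        change (s • r) • locFrob p f x = r • locFrob p f (s • x)
        rw [locFrob_smul, smul_smul]
        congr 1
        exact mul_comm (s ^ p : R) r)
  { toFun := g
    map_add' := g.map_add
    map_smul' := by
      intro c t
      induction t using TensorProduct.induction_on with
      | zero => simp
      | tmul r x => exact mul_smul c r (locFrob p f x)
      | add x y hx hy => rw [smul_add, map_add, map_add, hx, hy, smul_add] }

theorem theta_tmul_frac (r a : R) (k : ℕ) :
    theta p f (of p r ⊗ₜ[R] frac f a k) = frac f (r * a ^ p) (p * k) := by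
  change of p r • locFrob p f (frac f a k) = _
  rw [locFrob_frac, of_smul]

theorem tmul_frac (r a : R) (k : ℕ) :
    of p r ⊗ₜ[R] frac f a k = of p (a ^ p * r) ⊗ₜ[R] frac f 1 k := by
  rw [← smul_of, TensorProduct.smul_tmul, frac, frac, Localization.smul_mk, smul_eq_mul, mul_one]

theorem tmul_shift (r : R) (k j : ℕ) :
    of p r ⊗ₜ[R] frac f 1 k = of p ((f ^ j) ^ p * r) ⊗ₜ[R] frac f 1 (k + j) := by
  rw [← tmul_frac, frac_eq_of f 1 (f ^ j) k (k + j) (by rw [pow_add, mul_one])]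

theorem exists_eq_tmul (t : FrobTwist R p ⊗[R] Localization.Away f) :
    ∃ (r : R) (k : ℕ), t = of p r ⊗ₜ[R] frac f 1 k := by
  induction t using TensorProduct.induction_on with
  | zero => exact ⟨0, 0, (TensorProduct.zero_tmul _ _).symm⟩
  | tmul r x =>
    obtain ⟨a, k, rfl⟩ := exists_frac f x
    exact ⟨_, k, tmul_frac f r a k⟩
  | add x y hx hy =>
    obtain ⟨r, k, rfl⟩ := hx
    obtain ⟨s, l, rfl⟩ := hy
    refine ⟨(f ^ l) ^ p * r + (f ^ k) ^ p * s, k + l, ?_⟩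
    rw [tmul_shift f r k l, tmul_shift f s l k, add_comm l k]
    exact (TensorProduct.add_tmul _ _ _).symm

theorem theta_preimage (a : R) (k : ℕ) :
    theta p f (of p (a * f ^ (k * (p - 1))) ⊗ₜ[R] frac f 1 k) = frac f a k := by
  rw [theta_tmul_frac]
  apply frac_eq_of
  obtain ⟨q, hq⟩ := Nat.exists_eq_succ_of_ne_zero (Fact.out : p.Prime).ne_zero
  rw [hq, Nat.succ_eq_add_one, Nat.add_sub_cancel]
  ring

theorem theta_bijective : Function.Bijective (theta p f) := by
  refine ⟨(injective_iff_map_eq_zero _).2 fun t ht => ?_, fun x => ?_⟩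
  · obtain ⟨r, k, rfl⟩ := exists_eq_tmul f t
    rw [theta_tmul_frac, one_pow, mul_one, frac, Localization.mk_eq_mk',
      IsLocalization.mk'_eq_zero_iff] at ht
    obtain ⟨⟨_, j, rfl⟩, hj⟩ := ht
    have hj : f ^ j * r = 0 := hj
    have h0 : (f ^ j) ^ p * r = 0 := by
      rw [← Nat.sub_add_cancel (Fact.out : p.Prime).one_le, pow_succ, mul_assoc, hj, mul_zero]
    rw [tmul_shift f r k j, h0]
    exact TensorProduct.zero_tmul _ _
  · obtain ⟨a, k, rfl⟩ := exists_frac f x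
    exact ⟨_, theta_preimage f a k⟩

end FrobTwist

/-- **The localization `R_f` is a unit module for the Frobenius.**  Let `R` be a
commutative ring of prime characteristic `p`, `F : R → R` the Frobenius `r ↦ r ^ p`,
and `f ∈ R`.  Then the map `θ : R ⊗_{F,R} R_f → R_f` determined by
`θ(r ⊗ a/fᵏ) = r·aᵖ/f^{pk}` is a well-defined isomorphism of modules (over the ring
`R`, realized here as `FrobTwist R p`), with inverse `a/fᵏ ↦ a·f^{k(p−1)} ⊗ 1/fᵏ`.
In other words the Frobenius pullback `F^*(R_f)` is canonically isomorphic to `R_f`. -/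
theorem localization_away_frobenius_unit
    (R : Type) [CommRing R] (p : ℕ) [Fact p.Prime] [CharP R p] (f : R) :
    ∃ θ : (FrobTwist R p ⊗[R] Localization.Away f) ≃ₗ[FrobTwist R p]
        Localization.Away f,
      (∀ (r a : R) (k : ℕ),
        θ (FrobTwist.of p r ⊗ₜ[R] Localization.mk a (⟨f ^ k, k, rfl⟩ : Submonoid.powers f)) =
          Localization.mk (r * a ^ p) (⟨f ^ (p * k), p * k, rfl⟩ : Submonoid.powers f)) ∧
      (∀ (a : R) (k : ℕ),
        θ.symm (Localization.mk a (⟨f ^ k, k, rfl⟩ : Submonoid.powers f)) =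
          FrobTwist.of p (a * f ^ (k * (p - 1))) ⊗ₜ[R]
            Localization.mk 1 (⟨f ^ k, k, rfl⟩ : Submonoid.powers f)) := by
  refine ⟨LinearEquiv.ofBijective _ (FrobTwist.theta_bijective f),
    fun r a k => FrobTwist.theta_tmul_frac f r a k, fun a k => ?_⟩
  rw [LinearEquiv.symm_apply_eq]
  exact (FrobTwist.theta_preimage f a k).symm
end

section
/- Let (R, m) be a regular local ring of dimension n, essentially of finite type over a field, with residue field k, let I ⊆ R be an ideal, and let A = R/I have Krull dimension d. Then the Lyubeznik invariants λ_{a,i}(A) can only be nonzero in the range 0 ≤ a ≤ d and 0 ≤ i ≤ d: if a > d or i > d then λ_{a,i}(A) = dim_k Hom_R(k, H^a_m(H^{n−i}_I(R))) = 0. -/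
/-!
Both vanishing statements come from a system of parameters `y₁, …, y_d` of `R / I`, lifted to `R`
(`exists_sop`), so that `𝔪` is the radical of `I + (y₁, …, y_d)`. In each case the local cohomology
module itself is zero, hence so is `Hom_R(k, -)` of it.

If `a > d`, only the fact that `M = H^{n-i}_I(R)` is `I`-power torsion (`lc_tors`) is used. For
every such `M` one has `H^a_𝔪(M) = 0` (`Z_main`), by induction on `d`: the kernel and cokernel of
`M → M_{y₁}` are torsion for `I + (y₁)`, and `M_{y₁}` has no local cohomology because `y₁ ∈ 𝔪` acts
invertibly on it. The base case `d = 0` says that an `𝔪`-power torsion module has no higher local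
cohomology (`Z_tors`); it rests on the existence of torsion injective overmodules
(`torsPart_injective`, through Artin–Rees).

If `i > d`, then `n - i < n - d`, and `H^{n-i}_I(R)` is already zero. A regular local ring of
dimension `n` has a regular sequence of length `n` (`regular_seq`), and Ischebeck's argument
(`ischebeck`) gives `Ext^j(R / I ^ t, R) = 0` for all `t` and all `j < n - d`.

`localCohomology` is a colimit of derived-functor `Ext` groups, while the long exact sequences are
available for `Abelian.Ext`; the lemma `bridge` transports vanishing from the latter to the former.
-/

open IsLocalRing

/-- A Noetherian local ring is *regular* if its maximal ideal can be generated by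
`dim R` elements. -/
def IsRegularLocal (R : Type*) [CommRing R] [IsLocalRing R] : Prop :=
  IsNoetherianRing R ∧ ∃ s : Finset R,
    Ideal.span (s : Set R) = maximalIdeal R ∧ (s.card : WithBot ℕ∞) = ringKrullDim R

/-- Local cohomology with an integer index, with the convention that local cohomology
in negative degrees is the zero module. -/
noncomputable def localCohomologyInt {R : Type} [CommRing R] (I : Ideal R) (j : ℤ)
    (M : ModuleCat R) : ModuleCat R :=
  if 0 ≤ j then (localCohomology I j.toNat).obj M else ModuleCat.of R PUnit

noncomputable instance residueFieldHomSMul (R : Type) [CommRing R] [IsLocalRing R]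
    (M : Type) [AddCommGroup M] [Module R M] :
    SMul (ResidueField R) (ResidueField R →ₗ[R] M) :=
  ⟨fun c φ => φ ∘ₗ LinearMap.mul R (ResidueField R) c⟩

/-- For a local ring `R` with residue field `k` and an `R`-module `M`, the group
`Hom_R(k, M)` is a `k`-vector space, `c : k` acting on `φ` by `(c • φ) x = φ (c * x)`. -/
noncomputable instance residueFieldHomModule (R : Type) [CommRing R] [IsLocalRing R]
    (M : Type) [AddCommGroup M] [Module R M] :
    Module (ResidueField R) (ResidueField R →ₗ[R] M) where
  smul := (· • ·)
  one_smul φ := LinearMap.ext fun x => show φ (1 * x) = φ x by rw [one_mul]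
  mul_smul c d φ := LinearMap.ext fun x =>
    show φ ((c * d) * x) = φ (d * (c * x)) by congr 1; ring
  smul_zero c := LinearMap.ext fun x => rfl
  smul_add c φ ψ := LinearMap.ext fun x => rfl
  add_smul c d φ := LinearMap.ext fun x =>
    show φ ((c + d) * x) = φ (c * x) + φ (d * x) by rw [add_mul, map_add]
  zero_smul φ := LinearMap.ext fun x =>
    show φ (0 * x) = 0 by rw [zero_mul, map_zero]

/-- **Lyubeznik's local cohomology invariant** `λ_{a,i}` of the quotient of an
`n`-dimensional regular local ring `(R, 𝔪)` (with residue field `k`) by an ideal `I`: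
the dimension `dim_k Hom_R(k, H^a_𝔪(H^{n−i}_I(R)))`. -/
noncomputable def lyubeznik (R : Type) [CommRing R] [IsLocalRing R] (I : Ideal R)
    (n : ℤ) (a i : ℕ) : ℕ :=
  Module.finrank (ResidueField R)
    (ResidueField R →ₗ[R]
      ((localCohomology (maximalIdeal R) a).obj
        (localCohomologyInt I (n - i) (ModuleCat.of R R))))

noncomputable section

namespace LyuAux

/-! ### Comparison of the two models of `Ext` -/

section

open CategoryTheory Limits Opposite
universe u
variable {R : Type u} [CommRing R]

/-- The map of cochain complexes `Hom(Q, Y) ⟶ Hom(P, Y)` given by precomposition with `φ : P ⟶ Q`. -/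
abbrev yonMap {P Q : ChainComplex (ModuleCat.{u} R) ℕ} (φ : P ⟶ Q) (Y : ModuleCat.{u} R) :
    Q.linearYonedaObj R Y ⟶ P.linearYonedaObj R Y :=
  (HomologicalComplex.unopFunctor _ _).map
    ((((linearYoneda R (ModuleCat.{u} R)).obj Y).rightOp.mapHomologicalComplex _).map φ).op

lemma iso_flip {V : Type*} [Category V] {A A' B B' : V} (e : A ≅ B) (e' : A' ≅ B')
    {m : A ⟶ A'} {m' : B ⟶ B'} (h : m ≫ e'.hom = e.hom ≫ m') : e.inv ≫ m = m' ≫ e'.inv := by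
  rw [Iso.inv_comp_eq, ← Category.assoc, ← h, Category.assoc, Iso.hom_inv_id, Category.comp_id]

lemma iso_comb {V : Type*} [Category V] {A A' B B' C C' : V} (e : A ≅ B) (e' : A' ≅ B')
    (f : B ≅ C) (f' : B' ≅ C')
    {m : A ⟶ A'} {m' : B ⟶ B'} {m'' : C ⟶ C'} (h : m ≫ e'.hom = e.hom ≫ m')
    (h' : m' ≫ f'.hom = f.hom ≫ m'') :
    m ≫ (e' ≪≫ f').hom = (e ≪≫ f).hom ≫ m'' := by
  simp [reassoc_of% h, h']

lemma homologyUnop_nat {V : Type*} [Category V] [Abelian V] {ι : Type*} {c : ComplexShape ι}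
    {K L : HomologicalComplex Vᵒᵖ c} (φ : K ⟶ L) (i : ι) :
    (HomologicalComplex.homologyMap φ i).unop ≫ (K.homologyUnop i).inv =
    (L.homologyUnop i).inv ≫ HomologicalComplex.homologyMap
      ((HomologicalComplex.unopFunctor _ _).map φ.op) i := by
  have := HomologicalComplex.homologyOp_hom_naturality
    ((HomologicalComplex.unopFunctor _ _).map φ.op) i
  have h2 := congrArg Quiver.Hom.unop this
  exact (iso_flip (L.homologyUnop i) (K.homologyUnop i) h2.symm).symm

/-- Naturality in the first variable of the computation of the derived-functor `Ext` by a
projective resolution. -/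
lemma isoExt_nat {X' X : ModuleCat.{u} R} (g : X' ⟶ X) (P' : ProjectiveResolution X')
    (P : ProjectiveResolution X) (φ : P'.complex ⟶ P.complex)
    (comm : φ.f 0 ≫ P.π.f 0 = P'.π.f 0 ≫ g) (n : ℕ) (Y : ModuleCat.{u} R) :
    ((Ext R (ModuleCat.{u} R) n).map g.op).app Y ≫ (P'.isoExt n Y).hom =
      (P.isoExt n Y).hom ≫ HomologicalComplex.homologyMap (yonMap φ Y) n := by
  have h := ProjectiveResolution.isoLeftDerivedObj_inv_naturality g P' P φ comm
    ((linearYoneda R (ModuleCat.{u} R)).obj Y).rightOp n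
  have h2 := congrArg Quiver.Hom.unop h
  have h3 := homologyUnop_nat ((((linearYoneda R (ModuleCat.{u} R)).obj
    Y).rightOp.mapHomologicalComplex _).map φ) n
  exact iso_comb (P.isoLeftDerivedObj ((linearYoneda R (ModuleCat.{u} R)).obj Y).rightOp n).unop.symm
    (P'.isoLeftDerivedObj ((linearYoneda R (ModuleCat.{u} R)).obj Y).rightOp n).unop.symm
    (HomologicalComplex.homologyUnop _ _).symm (HomologicalComplex.homologyUnop _ _).symm h2 h3

/-- The morphism `P_n ⟶ Y` underlying an `n`-cocycle of the complex `Hom(P, Y)`. -/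
def toHom {P : ChainComplex (ModuleCat.{u} R) ℕ} {Y : ModuleCat.{u} R} {n : ℕ}
   (z : (P.linearYonedaObj R Y).cycles n) : P.X n ⟶ Y := (P.linearYonedaObj R Y).iCycles n z

lemma toHom_cocycle {P : ChainComplex (ModuleCat.{u} R) ℕ} {Y : ModuleCat.{u} R} {n : ℕ}
   (z : (P.linearYonedaObj R Y).cycles n) (m : ℕ) : P.d m n ≫ toHom z = 0 := by
  have := congrArg (fun f => f.hom z) ((P.linearYonedaObj R Y).iCycles_d n m)
  exact this

lemma toHom_inj {P : ChainComplex (ModuleCat.{u} R) ℕ} {Y : ModuleCat.{u} R} {n : ℕ}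
   (z z' : (P.linearYonedaObj R Y).cycles n) (h : toHom z = toHom z') : z = z' :=
  (ModuleCat.mono_iff_injective ((P.linearYonedaObj R Y).iCycles n)).1 inferInstance h

lemma toHom_smul {P : ChainComplex (ModuleCat.{u} R) ℕ} {Y : ModuleCat.{u} R} {n : ℕ}
   (z : (P.linearYonedaObj R Y).cycles n) (r : R) : toHom (r • z) = r • toHom z :=
  map_smul ((P.linearYonedaObj R Y).iCycles n).hom r z

lemma toHom_map {P Q : ChainComplex (ModuleCat.{u} R) ℕ} (φ : P ⟶ Q) {Y : ModuleCat.{u} R} {n : ℕ}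
   (z : (Q.linearYonedaObj R Y).cycles n) :
    toHom (HomologicalComplex.cyclesMap (yonMap φ Y) n z) = φ.f n ≫ toHom z := by
  have := congrArg (fun f => f.hom z) (HomologicalComplex.cyclesMap_i (yonMap φ Y) n)
  exact this

lemma homologyπ_eq_zero {P : ChainComplex (ModuleCat.{u} R) ℕ} {Y : ModuleCat.{u} R} {n p : ℕ}
   (z : (P.linearYonedaObj R Y).cycles n) (g : P.X p ⟶ Y) (h : P.d n p ≫ g = toHom z) :
    (P.linearYonedaObj R Y).homologyπ n z = 0 := by
  have h1 : z = (P.linearYonedaObj R Y).toCycles p n g := by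
    apply toHom_inj
    rw [← h]
    have := congrArg (fun f => f.hom g) ((P.linearYonedaObj R Y).toCycles_i p n)
    exact this.symm
  rw [h1]
  have := congrArg (fun f => f.hom g) ((P.linearYonedaObj R Y).toCycles_comp_homologyπ p n)
  exact this

lemma yon_exists (P : ChainComplex (ModuleCat.{u} R) ℕ) (Y : ModuleCat.{u} R) (n : ℕ)
   (x : (P.linearYonedaObj R Y).homology n) : ∃ (z : (P.linearYonedaObj R Y).cycles n),
     (P.linearYonedaObj R Y).homologyπ n z = x :=
  (ModuleCat.epi_iff_surjective _).1 inferInstance x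

lemma homologyπ_eq_zero_of_extMk {X : ModuleCat.{u} R} (P : ProjectiveResolution X)
   {Y : ModuleCat.{u} R} {n : ℕ} (z : (P.complex.linearYonedaObj R Y).cycles n)
   (h : P.extMk (toHom z) (n+1) rfl (toHom_cocycle z _) = 0) :
    (P.complex.linearYonedaObj R Y).homologyπ n z = 0 := by
  rcases n with _ | p
  · suffices toHom z = 0 by
      rw [toHom_inj z 0 (this.trans (map_zero ((P.complex.linearYonedaObj R Y).iCycles 0).hom).symm)]
      exact map_zero ((P.complex.linearYonedaObj R Y).homologyπ 0).hom
    rw [← P.extEquivCohomologyClass.apply_eq_iff_eq,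
      ProjectiveResolution.extEquivCohomologyClass_extMk,
      ProjectiveResolution.extEquivCohomologyClass_zero,
      CochainComplex.HomComplex.CohomologyClass.mk_eq_zero_iff] at h
    rw [CochainComplex.HomComplex.Cocycle.toSingleMk_mem_coboundaries_iff _ _ _ _ _ 1 (by lia)] at h
    obtain ⟨g, hg⟩ := h
    have hz : IsZero (P.cochainComplex.X 1) := P.cochainComplex.isZero_of_isStrictlyLE 0 1 (by lia)
    rw [hz.eq_of_src g 0, comp_zero] at hg
    simpa using (cancel_epi _).1 (hg.symm.trans comp_zero.symm)
  · obtain ⟨g, hg⟩ := (P.extMk_eq_zero_iff _ _ _ (toHom_cocycle z _) p rfl).1 h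
    exact homologyπ_eq_zero z g hg

lemma iso_inj {A B : ModuleCat.{u} R} (e : A ≅ B) : Function.Injective e.hom :=
  (ModuleCat.mono_iff_injective e.hom).1 inferInstance

/-- Comparison of the derived-functor `_root_.Ext`, in terms of which `localCohomology` is defined,
with `Abelian.Ext`, which carries the long exact sequences. Every old class `ξ` has a counterpart
`η` such that `g^* η = 0` implies `g^* ξ = 0`, and `r η = 0` implies `r ξ = 0`; the counterpart is
the class of a cocycle representing `ξ` on a projective resolution. This one-directional statement
suffices for the vanishing and torsion results below, so no isomorphism of groups is constructed. -/
lemma bridge {X Y : ModuleCat.{u} R} {n : ℕ}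
    (ξ : (((_root_.Ext R (ModuleCat.{u} R) n).obj (op X)).obj Y)) :
    ∃ η : Abelian.Ext.{u} X Y n, (∀ (X' : ModuleCat.{u} R) (g : X' ⟶ X),
      (Abelian.Ext.mk₀ g).comp η (zero_add n) = 0 →
        ((_root_.Ext R (ModuleCat.{u} R) n).map g.op).app Y ξ = 0) ∧
      ∀ r : R, r • η = 0 → r • ξ = 0 := by
  let P := projectiveResolution X
  obtain ⟨z, hz⟩ := yon_exists P.complex Y n ((P.isoExt n Y).hom ξ)
  refine ⟨P.extMk (toHom z) (n+1) rfl (toHom_cocycle z _), fun X' g hg => ?_, fun r hr => ?_⟩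
  · let P' := projectiveResolution X'
    let φ := ProjectiveResolution.lift g P' P
    have comm := ProjectiveResolution.lift_commutes_zero g P' P
    rw [ProjectiveResolution.mk₀_comp_extMk (R' := P') (toHom z) _ _ _ ⟨φ, comm⟩] at hg
    have h1 := congrArg (fun f => f.hom ξ) (isoExt_nat g P' P φ comm n Y)
    have h1' : (P'.isoExt n Y).hom (((_root_.Ext R (ModuleCat.{u} R) n).map g.op).app Y ξ) =
      HomologicalComplex.homologyMap (yonMap φ Y) n ((P.isoExt n Y).hom ξ) := h1
    rw [← hz] at h1'
    have h2 := congrArg (fun f => f.hom z) (HomologicalComplex.homologyπ_naturality (yonMap φ Y) n)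
    have h2' : HomologicalComplex.homologyMap (yonMap φ Y) n ((P.complex.linearYonedaObj R Y).homologyπ n z) =
      (P'.complex.linearYonedaObj R Y).homologyπ n (HomologicalComplex.cyclesMap (yonMap φ Y) n z) := h2
    rw [h2', homologyπ_eq_zero_of_extMk] at h1'
    · apply iso_inj (P'.isoExt n Y)
      rw [h1']; exact (map_zero (P'.isoExt n Y).hom.hom).symm
    · convert hg using 2
      exact toHom_map φ z
  · apply iso_inj (P.isoExt n Y)
    refine (map_smul (P.isoExt n Y).hom.hom r ξ).trans (Eq.trans ?_ (map_zero (P.isoExt n Y).hom.hom).symm)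
    have : (P.isoExt n Y).hom.hom ξ = _ := hz.symm
    rw [this]
    refine (map_smul ((P.complex.linearYonedaObj R Y).homologyπ n).hom r z).symm.trans ?_
    apply homologyπ_eq_zero_of_extMk
    rw [← hr, Abelian.Ext.smul_eq_comp_mk₀, ProjectiveResolution.extMk_comp_mk₀]
    congr 1
    rw [toHom_smul]
    simp

end

/-! ### Elements of local cohomology modules -/

section

open CategoryTheory Limits Opposite
variable {R : Type} [CommRing R]

/-- The module `R / J ^ t`. -/
abbrev Q (J : Ideal R) (t : ℕ) : ModuleCat.{0} R := ModuleCat.of R (R ⧸ J ^ t)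

/-- The transition map `R / J ^ s ⟶ R / J ^ t` for `t ≤ s`. -/
def tr (J : Ideal R) {t s : ℕ} (h : t ≤ s) : Q J s ⟶ Q J t :=
  ModuleCat.ofHom (Submodule.mapQ _ _ LinearMap.id (Ideal.pow_le_pow_right h))

/-- `Ext^n(X, Y)` as a derived functor in the first variable, as used in `localCohomology`. -/
abbrev OldExt (X Y : ModuleCat.{0} R) (n : ℕ) : ModuleCat.{0} R :=
  ((_root_.Ext R (ModuleCat.{0} R) n).obj (op X)).obj Y

/-- The structure map `Ext^i(R / J ^ t, M) ⟶ H^i_J(M)` of the colimit defining local cohomology. -/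
def toLC (J : Ideal R) (i : ℕ) (M : ModuleCat.{0} R) (t : ℕ) :
    OldExt (Q J t) M i ⟶ (localCohomology J i).obj M :=
  (colimit.ι (localCohomology.diagram (localCohomology.idealPowersDiagram J) i) (op (op t))).app M

lemma toLC_tr (J : Ideal R) (i : ℕ) (M : ModuleCat.{0} R) {t s : ℕ} (h : t ≤ s) :
    ((_root_.Ext R (ModuleCat.{0} R) i).map (tr J h).op).app M ≫ toLC J i M s = toLC J i M t :=
  congrArg (fun f => f.app M) (colimit.w
    (localCohomology.diagram (localCohomology.idealPowersDiagram J) i) (homOfLE h).op.op)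

lemma toLC_rep (J : Ideal R) (i : ℕ) (M : ModuleCat.{0} R) (x : (localCohomology J i).obj M) :
    ∃ t ξ, toLC J i M t ξ = x := by
  let F := localCohomology.diagram (localCohomology.idealPowersDiagram J) i
  have hc := isColimitOfPreserves ((evaluation _ _).obj M) (colimit.isColimit F)
  obtain ⟨j, y, hy⟩ := Concrete.isColimit_exists_rep _ hc x
  exact ⟨j.unop.unop, y, hy⟩

/-- `H^a_J(M)` vanishes when each class in `Ext^a(R / J ^ t, M)` dies in some `Ext^a(R / J ^ s, M)`,
`s ≥ t`. -/
lemma lc_zero (J : Ideal R) (i : ℕ) (M : ModuleCat.{0} R)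
    (h : ∀ (t : ℕ) (η : Abelian.Ext.{0} (Q J t) M i), ∃ (s : ℕ) (hs : t ≤ s),
      (Abelian.Ext.mk₀ (tr J hs)).comp η (zero_add i) = 0) :
    Subsingleton ((localCohomology J i).obj M) := by
  refine subsingleton_of_forall_eq 0 fun x => ?_
  obtain ⟨t, ξ, rfl⟩ := toLC_rep J i M x
  obtain ⟨η, h1, -⟩ := bridge ξ
  obtain ⟨s, hs, h2⟩ := h t η
  have h3 := congrArg (fun f => f.hom ξ) (toLC_tr J i M hs)
  have h4 : (toLC J i M s).hom ((((_root_.Ext R (ModuleCat.{0} R) i).map (tr J hs).op).app M) ξ)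
    = toLC J i M t ξ := h3
  rw [h1 _ _ h2] at h4
  exact h4.symm.trans (map_zero (toLC J i M s).hom)

/-- `M` is `I`-power torsion: each element is killed by some power of `I`. -/
def Tors (I : Ideal R) (M : Type) [AddCommGroup M] [Module R M] : Prop :=
  ∀ x : M, ∃ t : ℕ, ∀ r ∈ I ^ t, r • x = 0

lemma smul_ext_eq_zero (J : Ideal R) {i t : ℕ} {M : ModuleCat.{0} R} {r : R} (hr : r ∈ J ^ t)
    (η : Abelian.Ext.{0} (Q J t) M i) : r • η = 0 := by
  have h2 : r • (𝟙 (Q J t)) = 0 := by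
    refine ModuleCat.hom_ext (LinearMap.ext fun x => ?_)
    obtain ⟨x, rfl⟩ := Ideal.Quotient.mk_surjective x
    change Ideal.Quotient.mk _ (r • x) = 0
    exact Ideal.Quotient.eq_zero_iff_mem.2 (Ideal.mul_mem_right _ _ hr)
  rw [← Abelian.Ext.mk₀_id_comp η, ← Abelian.Ext.smul_comp, ← Abelian.Ext.mk₀_smul, h2]
  simp

/-- `H^i_J(M)` is `J`-power torsion, since `J ^ t` kills `Ext^i(R / J ^ t, M)`. -/
lemma lc_tors (J : Ideal R) (i : ℕ) (M : ModuleCat.{0} R) :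
    Tors J ((localCohomology J i).obj M) := by
  intro x
  obtain ⟨t, ξ, rfl⟩ := toLC_rep J i M x
  obtain ⟨η, -, h1⟩ := bridge ξ
  refine ⟨t, fun r hr => ?_⟩
  have := smul_ext_eq_zero J hr η
  have := h1 r this
  exact (map_smul (toLC J i M t).hom r ξ).symm.trans
    ((congrArg _ this).trans (map_zero (toLC J i M t).hom))

end

/-! ### Local cohomology of torsion modules -/

section

open CategoryTheory Limits Opposite Abelian
variable {R : Type} [CommRing R]

/-- The ind-system `t ↦ Ext^a(R / J ^ t, M)` is essentially zero; this is the vanishing of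
`H^a_J(M)`, phrased with `Abelian.Ext` (see `lc_zero`). -/
def Z (J : Ideal R) (a : ℕ) (M : ModuleCat.{0} R) : Prop :=
  ∀ (t : ℕ) (η : Abelian.Ext.{0} (Q J t) M a), ∃ (s : ℕ) (hs : t ≤ s),
      (Abelian.Ext.mk₀ (tr J hs)).comp η (zero_add a) = 0

lemma tr_comp (J : Ideal R) {t s r : ℕ} (h : t ≤ s) (h' : s ≤ r) :
    tr J h' ≫ tr J h = tr J (h.trans h') := by
  refine ModuleCat.hom_ext (LinearMap.ext fun x => ?_)
  obtain ⟨x, rfl⟩ := Ideal.Quotient.mk_surjective x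
  rfl

/-- Half-exactness of the vanishing of `H^a_J` along a short exact sequence. -/
lemma Z_mid {J : Ideal R} {a : ℕ} {S : ShortComplex (ModuleCat.{0} R)} (hS : S.ShortExact)
    (h1 : Z J a S.X₁) (h3 : Z J a S.X₃) : Z J a S.X₂ := by
  intro t η
  obtain ⟨s, hs, h⟩ := h3 t (η.comp (Ext.mk₀ S.g) (add_zero a))
  rw [← Ext.comp_assoc_of_third_deg_zero] at h
  obtain ⟨ζ, hζ⟩ := Ext.covariant_sequence_exact₂ _ hS _ h
  obtain ⟨s', hs', h'⟩ := h1 s ζ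
  refine ⟨s', hs.trans hs', ?_⟩
  rw [← tr_comp J hs hs', ← Ext.mk₀_comp_mk₀_assoc, ← hζ, ← Ext.comp_assoc_of_third_deg_zero,
    h', Ext.zero_comp]

/-- Dimension shift: in `0 → X₁ → X₂ → X₃ → 0`, if `Ext^{a+1}(R / J ^ t, X₂) = 0` for all `t`, then
vanishing of `H^a_J(X₃)` gives vanishing of `H^{a+1}_J(X₁)`. -/
lemma Z_shift {J : Ideal R} {a : ℕ} {S : ShortComplex (ModuleCat.{0} R)} (hS : S.ShortExact)
    (h2 : ∀ t (η : Ext.{0} (Q J t) S.X₂ (a+1)), η = 0) (h3 : Z J a S.X₃) : Z J (a+1) S.X₁ := by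
  intro t η
  obtain ⟨ζ, hζ⟩ := Ext.covariant_sequence_exact₁ _ hS η (h2 _ _) rfl
  obtain ⟨s, hs, h⟩ := h3 t ζ
  refine ⟨s, hs, ?_⟩
  rw [← hζ, ← Ext.comp_assoc _ _ _ (zero_add a) rfl (by lia), h, Ext.zero_comp]

lemma shortExact_mk {A B C : Type} [AddCommGroup A] [AddCommGroup B] [AddCommGroup C]
    [Module R A] [Module R B] [Module R C] (f : A →ₗ[R] B) (g : B →ₗ[R] C)
    (hf : Function.Injective f) (hg : Function.Surjective g) (h : Function.Exact f g) :
    (ShortComplex.mk (ModuleCat.ofHom f) (ModuleCat.ofHom g)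
      (ModuleCat.hom_ext (LinearMap.ext fun x => (h _).2 ⟨x, rfl⟩))).ShortExact where
  exact := (ShortComplex.ShortExact.moduleCat_exact_iff_function_exact _).2 h
  mono_f := (ModuleCat.mono_iff_injective _).2 hf
  epi_g := (ModuleCat.epi_iff_surjective _).2 hg

/-- The submodule `Γ_J(E)` of `J`-power torsion elements. -/
def torsPart (J : Ideal R) (E : Type) [AddCommGroup E] [Module R E] : Submodule R E where
  carrier := {x | ∃ t : ℕ, ∀ r ∈ J ^ t, r • x = 0}
  zero_mem' := ⟨0, by simp⟩
  add_mem' := by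
    rintro x y ⟨t, ht⟩ ⟨s, hs⟩
    refine ⟨t + s, fun r hr => ?_⟩
    rw [smul_add, ht r (Ideal.pow_le_pow_right (by lia) hr),
      hs r (Ideal.pow_le_pow_right (by lia) hr), add_zero]
  smul_mem' := by
    rintro c x ⟨t, ht⟩
    exact ⟨t, fun r hr => by rw [smul_comm, ht r hr, smul_zero]⟩

lemma tors_torsPart (J : Ideal R) (E : Type) [AddCommGroup E] [Module R E] :
    Tors J (torsPart J E) := by
  rintro ⟨x, t, ht⟩
  exact ⟨t, fun r hr => Subtype.ext (ht r hr)⟩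

lemma tors_surj {J : Ideal R} {A B : Type} [AddCommGroup A] [AddCommGroup B] [Module R A]
    [Module R B] (f : A →ₗ[R] B) (hf : Function.Surjective f) (h : Tors J A) : Tors J B := by
  intro y
  obtain ⟨x, rfl⟩ := hf y
  obtain ⟨t, ht⟩ := h x
  exact ⟨t, fun r hr => by rw [← map_smul, ht r hr, map_zero]⟩

lemma tors_fg {J : Ideal R} {A : Type} [AddCommGroup A] [Module R A] [Module.Finite R A]
    (h : Tors J A) : ∃ t : ℕ, ∀ r ∈ J ^ t, ∀ x : A, r • x = 0 := by
  obtain ⟨s, hs⟩ := (Module.Finite.fg_top : (⊤ : Submodule R A).FG)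
  choose t ht using h
  refine ⟨s.sup t, fun r hr x => ?_⟩
  have : (⊤ : Submodule R A) ≤ LinearMap.ker (LinearMap.lsmul R A r) := by
    rw [← hs, Submodule.span_le]
    intro y hy
    exact ht y r (Ideal.pow_le_pow_right (Finset.le_sup hy) hr)
  exact this (Submodule.mem_top : x ∈ ⊤)

/-- Over a Noetherian ring `Γ_J(E)` is injective when `E` is. By Baer's criterion it suffices to
extend `f : 𝔞 → Γ_J(E)` to `R`. The image of `f` is killed by some `J ^ k`, and by Artin–Rees
`J ^ (k + c) ∩ 𝔞 ⊆ J ^ k 𝔞 ⊆ ker f`, so `f` factors through the image of `𝔞` in `R / J ^ (k + c)`.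
Extending from there to a map `R / J ^ (k + c) → E` yields a map with values in `Γ_J(E)`. -/
lemma torsPart_injective [IsNoetherianRing R] (J : Ideal R) (E : Type) [AddCommGroup E]
    [Module R E] [hE : Module.Injective R E] : Module.Injective R (torsPart J E) := by
  refine Module.Baer.injective fun 𝔞 f => ?_
  have hr : Tors J (LinearMap.range f) := fun x => by
    obtain ⟨t, ht⟩ := tors_torsPart J E x.1
    exact ⟨t, fun r hr => Subtype.ext (ht r hr)⟩
  obtain ⟨k, hk⟩ := tors_fg hr
  obtain ⟨c, hc⟩ := J.exists_pow_inf_eq_pow_smul (M := R) 𝔞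
  have h1 := hc (k + c) (by lia)
  let φ : 𝔞 →ₗ[R] R ⧸ J ^ (k + c) := (J ^ (k + c)).mkQ ∘ₗ 𝔞.subtype
  have hker : LinearMap.ker φ ≤ LinearMap.ker ((torsPart J E).subtype ∘ₗ f) := by
    rintro ⟨x, hx⟩ h
    have hx' : x ∈ J ^ (k + c) := Ideal.Quotient.eq_zero_iff_mem.1 h
    have h2 : x ∈ J ^ (k + c) • (⊤ : Submodule R R) ⊓ 𝔞 := ⟨by simpa using hx', hx⟩
    rw [h1, Nat.add_sub_cancel] at h2
    have h3 : J ^ k • 𝔞 ≤ (LinearMap.ker f).map 𝔞.subtype := Submodule.smul_le.2 fun r hr n hn =>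
      ⟨⟨r • n, 𝔞.smul_mem r hn⟩, (map_smul f r ⟨n, hn⟩).trans
        (congrArg Subtype.val (hk r hr ⟨f ⟨n, hn⟩, ⟨n, hn⟩, rfl⟩)), rfl⟩
    obtain ⟨⟨x', hx''⟩, h4, rfl⟩ := h3 (Submodule.smul_mono le_rfl inf_le_right h2)
    have h5 : f ⟨x', hx⟩ = 0 := h4
    simp [h5]
  obtain ⟨h, hh⟩ := hE.out ((LinearMap.ker φ).liftQ φ le_rfl)
    (LinearMap.ker_eq_bot.1 (Submodule.ker_liftQ_eq_bot _ _ _ le_rfl))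
    ((LinearMap.ker φ).liftQ ((torsPart J E).subtype ∘ₗ f) hker)
  have hmem : ∀ r, h r ∈ torsPart J E := fun r => by
    obtain ⟨r, rfl⟩ := Submodule.mkQ_surjective _ r
    refine ⟨k + c, fun s hs => ?_⟩
    rw [← map_smul, ← map_smul]
    have : (J ^ (k + c)).mkQ (s • r) = 0 :=
      Ideal.Quotient.eq_zero_iff_mem.2 (Ideal.mul_mem_right _ _ hs)
    rw [this, map_zero]
  refine ⟨(h.codRestrict _ hmem) ∘ₗ (J ^ (k + c)).mkQ, fun x hx => Subtype.ext ?_⟩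
  exact hh (Submodule.Quotient.mk ⟨x, hx⟩)

/-- A `J`-power torsion module embeds in a `J`-power torsion injective module. -/
lemma exists_tors_injective [IsNoetherianRing R] (J : Ideal R) (M : ModuleCat.{0} R)
    (hM : Tors J M) : ∃ (S : ShortComplex (ModuleCat.{0} R)) (_ : S.ShortExact),
      S.X₁ = M ∧ Injective S.X₂ ∧ Tors J S.X₂ := by
  -- the embedding into an injective module `E` lands in `Γ_J(E)` as `M` is torsion
  let E := Injective.under M
  have hE : Module.Injective R E := Module.injective_module_of_injective_object R E
    (inj := Injective.injective_under M)
  have hι : Function.Injective (Injective.ι M).hom :=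
    (ModuleCat.mono_iff_injective (Injective.ι M)).1 inferInstance
  let f : M →ₗ[R] torsPart J E := (Injective.ι M).hom.codRestrict _ fun x => by
    obtain ⟨t, ht⟩ := hM x
    exact ⟨t, fun r hr => by rw [← map_smul, ht r hr, map_zero]⟩
  have := torsPart_injective J E
  exact ⟨_, shortExact_mk f (LinearMap.range f).mkQ
    (fun x y h => hι (congrArg Subtype.val h)) (Submodule.mkQ_surjective _)
    (LinearMap.exact_map_mkQ_range f), rfl, Module.injective_object_of_injective_module R _,
    tors_torsPart J E⟩

/-- `J`-power torsion modules have no local cohomology `H^i_J` in degrees `i > 0`. -/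
lemma Z_tors [IsNoetherianRing R] (J : Ideal R) (a : ℕ) (M : ModuleCat.{0} R)
    (hM : Tors J M) : Z J (a + 1) M := by
  induction a generalizing M with
  | zero =>
    obtain ⟨S, hS, rfl, hinj, ht⟩ := exists_tors_injective J M hM
    intro t η
    obtain ⟨ζ, hζ⟩ := Ext.covariant_sequence_exact₁ _ hS η (Ext.eq_zero_of_injective _) rfl
    obtain ⟨φ, rfl⟩ := (Ext.mk₀_bijective _ _).2 ζ
    -- lift the image of `1` under `φ : R / J ^ t → X₃` to `X₂`, where it is killed by some `J ^ s`
    obtain ⟨z, hz⟩ := (ModuleCat.epi_iff_surjective S.g).1 hS.epi_g (φ (1 : R ⧸ J ^ t))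
    obtain ⟨s, hs⟩ := ht z
    have hle : J ^ (max s t) ≤ LinearMap.ker (LinearMap.toSpanSingleton R S.X₂ z) :=
      fun r hr => hs r (Ideal.pow_le_pow_right (le_max_left _ _) hr)
    let ψ : Q J (max s t) ⟶ S.X₂ :=
      ModuleCat.ofHom ((J ^ (max s t)).liftQ (LinearMap.toSpanSingleton R S.X₂ z) hle)
    have hψ : tr J (le_max_right s t) ≫ φ = ψ ≫ S.g := by
      refine ModuleCat.hom_ext (LinearMap.ext fun x => ?_)
      obtain ⟨x, rfl⟩ := Ideal.Quotient.mk_surjective x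
      change φ.hom (Ideal.Quotient.mk _ x) = S.g.hom (x • z)
      rw [map_smul]
      refine Eq.trans ?_ (congrArg (x • ·) hz.symm)
      change _ = x • φ.hom 1
      rw [← map_smul]
      congr 1
      exact (mul_one _).symm
    refine ⟨_, le_max_right s t, ?_⟩
    rw [← hζ, Ext.mk₀_comp_mk₀_assoc, hψ, ← Ext.mk₀_comp_mk₀_assoc, hS.comp_extClass, Ext.comp_zero]
  | succ a ih =>
    obtain ⟨S, hS, rfl, hinj, ht⟩ := exists_tors_injective J M hM
    refine Z_shift hS (fun t η => Ext.eq_zero_of_injective _) (ih _ ?_)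
    exact tors_surj S.g.hom ((ModuleCat.epi_iff_surjective S.g).1 hS.epi_g) ht

end

/-! ### Vanishing above the dimension of the support -/

section

open CategoryTheory Limits Opposite Abelian
variable {R : Type} [CommRing R]

lemma tors_sup {I : Ideal R} {y : R} {M : Type} [AddCommGroup M] [Module R M]
    (h1 : Tors I M) (h2 : ∀ x : M, ∃ k : ℕ, y ^ k • x = 0) : Tors (I ⊔ Ideal.span {y}) M := by
  intro x
  obtain ⟨t, ht⟩ := h1 x
  obtain ⟨k, hk⟩ := h2 x
  refine ⟨t + k, fun r hr => ?_⟩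
  obtain ⟨u, hu, v, hv, rfl⟩ := Submodule.mem_sup.1 (Ideal.sup_pow_add_le_pow_sup_pow hr)
  rw [Ideal.span_singleton_pow, Ideal.mem_span_singleton] at hv
  obtain ⟨w, rfl⟩ := hv
  rw [add_smul, ht u hu, mul_comm, mul_smul, hk, smul_zero, add_zero]

/-- `Ext^a(R / J ^ t, M_y) = 0` for `y ∈ J`: the element `y ^ t` acts on it both as zero and
invertibly. -/
lemma ext_localized_eq_zero {J : Ideal R} {y : R} (hy : y ∈ J) (M : Type) [AddCommGroup M]
    [Module R M] (t a : ℕ)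
    (η : Ext.{0} (Q J t) (ModuleCat.of R (LocalizedModule (Submonoid.powers y) M)) a) :
    η = 0 := by
  obtain ⟨u, hu⟩ := IsLocalizedModule.map_units (S := Submonoid.powers y)
    (LocalizedModule.mkLinearMap (Submonoid.powers y) M) ⟨y ^ t, t, rfl⟩
  let N := ModuleCat.of R (LocalizedModule (Submonoid.powers y) M)
  let g : N ⟶ N := ModuleCat.ofHom (u⁻¹).1
  have hg : y ^ t • g = 𝟙 N := by
    refine ModuleCat.hom_ext ?_
    have h1 : (u : Module.End R _) * (u⁻¹).1 = 1 := u.mul_inv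
    rw [hu] at h1
    exact h1
  have h2 := smul_ext_eq_zero J (Ideal.pow_mem_pow hy t) (η.comp (Ext.mk₀ g) (add_zero a))
  rwa [← Ext.comp_smul, ← Ext.mk₀_smul, hg, Ext.comp_mk₀_id] at h2

/-- If `M` is `I`-power torsion and `J` is, up to radical, generated modulo `I` by elements
`y₁, …, y_d` of `J`, then `H^a_J(M) = 0` for `a > d`. Induction on `d`: the kernel and cokernel of
`M → M_{y₁}` are `(I + y₁)`-power torsion, whereas `H^*_J(M_{y₁}) = 0`. -/
theorem Z_main [IsNoetherianRing R] (J : Ideal R) (ys : List R) : ∀ (_ : ∀ y ∈ ys, y ∈ J)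
    (I : Ideal R) (M : ModuleCat.{0} R) (_ : Tors I M)
    (_ : J ≤ (I ⊔ Ideal.ofList ys).radical) (b : ℕ), Z J (ys.length + 1 + b) M := by
  induction ys with
  | nil =>
    intro _ I M hM hJ b
    have hT : Tors J M := by
      obtain ⟨c, hc⟩ := Ideal.exists_pow_le_of_le_radical_of_fg hJ (IsNoetherian.noetherian J)
      intro x
      obtain ⟨t, ht⟩ := hM x
      refine ⟨c * t, fun r hr => ht r ?_⟩
      rw [pow_mul] at hr
      exact Ideal.pow_right_mono (by simpa using hc) t hr
    have := Z_tors J b M hT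
    rwa [List.length_nil, zero_add, add_comm 1 b]
  | cons y ys ih =>
    intro hys I M hM hJ b
    have hJ' : J ≤ (I ⊔ Ideal.span {y} ⊔ Ideal.ofList ys).radical := by
      rwa [sup_assoc, ← Ideal.ofList_cons]
    have ih' := ih (fun z hz => hys z (List.mem_cons_of_mem _ hz)) (I ⊔ Ideal.span {y})
    let f := LocalizedModule.mkLinearMap (Submonoid.powers y) M
    -- the kernel of `M → M_y`
    have hK : Tors (I ⊔ Ideal.span {y}) (LinearMap.ker f) := by
      refine tors_sup (fun x => ?_) fun x => ?_
      · obtain ⟨t, ht⟩ := hM x.1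
        exact ⟨t, fun r hr => Subtype.ext (ht r hr)⟩
      · obtain ⟨⟨c, k, rfl⟩, hc⟩ := (IsLocalizedModule.eq_zero_iff (Submonoid.powers y) f).1 x.2
        exact ⟨k, Subtype.ext hc⟩
    -- its cokernel
    have hC : Tors (I ⊔ Ideal.span {y})
        (LocalizedModule (Submonoid.powers y) M ⧸ LinearMap.range f) := by
      refine tors_sup (fun x => ?_) fun x => ?_
      · obtain ⟨x, rfl⟩ := Submodule.mkQ_surjective _ x
        obtain ⟨⟨m, s⟩, rfl⟩ := IsLocalizedModule.mk'_surjective (Submonoid.powers y) f x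
        obtain ⟨t, ht⟩ := hM m
        refine ⟨t, fun r hr => ?_⟩
        rw [← map_smul]
        simp only [Function.uncurry]
        rw [← IsLocalizedModule.mk'_smul, ht r hr, IsLocalizedModule.mk'_zero, map_zero]
      · obtain ⟨x, rfl⟩ := Submodule.mkQ_surjective _ x
        obtain ⟨⟨m, ⟨s, k, rfl⟩⟩, rfl⟩ := IsLocalizedModule.mk'_surjective (Submonoid.powers y) f x
        refine ⟨k, ?_⟩
        rw [← map_smul]
        refine (Submodule.Quotient.mk_eq_zero _).2 ⟨m, ?_⟩
        exact (IsLocalizedModule.mk'_cancel' (S := Submonoid.powers y) f m ⟨y ^ k, k, rfl⟩).symm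
    have hS1 := shortExact_mk (LinearMap.ker f).subtype f.rangeRestrict
      (Submodule.injective_subtype _) f.surjective_rangeRestrict
      (by rw [LinearMap.exact_iff, LinearMap.ker_rangeRestrict, Submodule.range_subtype])
    have hS2 := shortExact_mk (LinearMap.range f).subtype (LinearMap.range f).mkQ
      (Submodule.injective_subtype _) (Submodule.mkQ_surjective _)
      (by rw [LinearMap.exact_iff, Submodule.ker_mkQ, Submodule.range_subtype])
    have z1 : Z J (ys.length + 1 + b + 1) (ModuleCat.of R (LinearMap.ker f)) :=
      ih' _ hK hJ' (b + 1)
    have z2 : Z J (ys.length + 1 + b + 1) (ModuleCat.of R (LinearMap.range f)) :=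
      Z_shift hS2 (fun t η => ext_localized_eq_zero (hys y List.mem_cons_self) M t _ η)
        (ih' _ hC hJ' b)
    have := Z_mid hS1 z1 z2
    rwa [List.length_cons, show ys.length + 1 + 1 + b = ys.length + 1 + b + 1 by lia]

end

/-! ### Regular sequences in regular local rings -/

section

open RingTheory.Sequence

lemma maximalIdeal_quotient_eq {R : Type} [CommRing R] [IsLocalRing R] (I : Ideal R)
    [IsLocalRing (R ⧸ I)] :
    maximalIdeal (R ⧸ I) = (maximalIdeal R).map (Ideal.Quotient.mk I) := by
  have h1 : (maximalIdeal (R ⧸ I)).comap (Ideal.Quotient.mk I) = maximalIdeal R :=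
    eq_maximalIdeal (Ideal.comap_isMaximal_of_surjective _ Ideal.Quotient.mk_surjective)
  rw [← h1, Ideal.map_comap_of_surjective _ Ideal.Quotient.mk_surjective]

/-- Prime avoidance: in positive dimension some `x ∈ 𝔪 ∖ 𝔪²` avoids all minimal primes. -/
lemma exists_regular_aux {R : Type} [CommRing R] [IsLocalRing R] [IsNoetherianRing R]
    (h : 0 < ringKrullDim R) : ∃ x ∈ maximalIdeal R, x ∉ maximalIdeal R ^ 2 ∧
      ∀ p ∈ minimalPrimes R, x ∉ p := by
  classical
  by_contra! hc
  have hfin := minimalPrimes.finite_of_isNoetherianRing R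
  have hmin : ∀ p ∈ minimalPrimes R, ¬ maximalIdeal R ≤ p := by
    intro p hp hle
    have : p.IsPrime := hp.1.1
    have hpm : p = maximalIdeal R := le_antisymm (le_maximalIdeal this.ne_top) hle
    rw [← maximalIdeal_height_eq_ringKrullDim, ← hpm, Ideal.height_eq_zero_iff.2 hp] at h
    exact lt_irrefl _ h
  have hsub : ((maximalIdeal R : Ideal R) : Set R) ⊆
      ⋃ p ∈ (↑(insert (maximalIdeal R ^ 2) hfin.toFinset) : Set (Ideal R)), (p : Set R) := by
    intro x hx
    simp only [Finset.coe_insert, Set.mem_iUnion, Set.mem_insert_iff]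
    by_cases h2 : x ∈ maximalIdeal R ^ 2
    · exact ⟨_, Or.inl rfl, h2⟩
    · obtain ⟨p, hp, hxp⟩ := hc x hx h2
      exact ⟨p, Or.inr (by simpa using hp), hxp⟩
  obtain ⟨p, hp, hle⟩ := (Ideal.subset_union_prime (f := fun p : Ideal R => p)
    (maximalIdeal R ^ 2) (maximalIdeal R ^ 2) (fun p hp hne _ => by
      rw [Finset.mem_insert] at hp
      have := hp.resolve_left hne
      rw [Set.Finite.mem_toFinset] at this
      exact this.1.1)).1 hsub
  rw [Finset.mem_insert, Set.Finite.mem_toFinset] at hp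
  rcases hp with rfl | hp
  · have h0 : maximalIdeal R = ⊥ := Submodule.eq_bot_of_le_smul_of_le_jacobson_bot (maximalIdeal R)
      (maximalIdeal R) (IsNoetherian.noetherian _) (by rwa [smul_eq_mul, ← pow_two])
      (maximalIdeal_le_jacobson _)
    obtain ⟨p, hp, -⟩ := Ideal.exists_minimalPrimes_le (bot_le : ⊥ ≤ maximalIdeal R)
    exact hmin p hp (h0 ▸ bot_le)
  · exact hmin p hp hle

/-- A Noetherian local ring of dimension at least `n` whose maximal ideal has at most `n` generators
is a domain, and has a weakly regular sequence of length `n` in its maximal ideal. Induction on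
`n`, passing to `R / x` with `x ∈ 𝔪 ∖ 𝔪²` outside all minimal primes: since `R / x` is a domain,
`(x)` is prime, and a minimal prime `p ⊆ (x)` satisfies `p = x p`, so `p = 0` by Nakayama.
The ring is quantified inside the statement as the induction changes it. -/
theorem regular_seq (n : ℕ) : ∀ (R : Type) [CommRing R] [IsLocalRing R] [IsNoetherianRing R]
    (s : Finset R) (_ : Ideal.span (s : Set R) = maximalIdeal R) (_ : s.card ≤ n)
    (_ : (n : WithBot ℕ∞) ≤ ringKrullDim R),
    IsDomain R ∧ ∃ rs : List R, rs.length = n ∧ (∀ r ∈ rs, r ∈ maximalIdeal R) ∧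
      IsWeaklyRegular R rs := by
  classical
  induction n with
  | zero =>
    intro R _ _ _ s hs hc _
    obtain rfl : s = ∅ := by simpa using hc
    have : maximalIdeal R = ⊥ := by simpa using hs.symm
    have hf := isField_iff_maximalIdeal_eq.2 this
    exact ⟨hf.isDomain, [], rfl, by simp, IsWeaklyRegular.nil R R⟩
  | succ n ih =>
    intro R _ _ _ s hs hc hdim
    obtain ⟨x, hxm, hx2, hxp⟩ := exists_regular_aux (R := R) (lt_of_lt_of_le (by
      exact_mod_cast Nat.succ_pos n) hdim)
    obtain ⟨f, -, hf⟩ := Submodule.mem_span_finset.1 (hs.symm ▸ hxm : x ∈ Ideal.span (s : Set R))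
    -- some coefficient is a unit, as `x ∉ 𝔪²`
    obtain ⟨i, his, hiu⟩ : ∃ i ∈ s, IsUnit (f i) := by
      by_contra! hcon
      refine hx2 (hf ▸ Ideal.sum_mem _ fun a ha => ?_)
      rw [pow_two, smul_eq_mul]
      exact Ideal.mul_mem_mul ((mem_maximalIdeal _).2 (hcon a ha))
        (hs ▸ Ideal.subset_span ha)
    have hne : Ideal.span {x} ≠ (⊤ : Ideal R) := fun h =>
      (maximalIdeal.isMaximal R).ne_top (top_le_iff.1 (h ▸ (Ideal.span_singleton_le_iff_mem _).2 hxm))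
    have hnt : Nontrivial (R ⧸ Ideal.span {x}) := Ideal.Quotient.nontrivial_iff.2 hne
    have hloc : IsLocalRing (R ⧸ Ideal.span {x}) :=
      IsLocalRing.of_surjective' _ Ideal.Quotient.mk_surjective
    let q := Ideal.Quotient.mk (Ideal.span {x})
    have hqi : q i ∈ Ideal.span (((s.erase i).image q : Finset _) : Set (R ⧸ Ideal.span {x})) := by
      have h1 : q (f i) * q i + ∑ a ∈ s.erase i, q (f a) * q a = 0 := by
        have hx0 : q x = 0 := Ideal.Quotient.eq_zero_iff_mem.2 (Ideal.mem_span_singleton_self x)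
        refine Eq.trans ?_ ((congrArg q hf).trans hx0)
        rw [map_sum, ← Finset.add_sum_erase _ _ his]
        simp
      have h2 := (hiu.map q)
      rw [← Ideal.unit_mul_mem_iff_mem _ h2, eq_neg_of_add_eq_zero_left h1]
      exact neg_mem (Ideal.sum_mem _ fun a ha => Ideal.mul_mem_left _ _
        (Ideal.subset_span (Finset.mem_coe.2 (Finset.mem_image_of_mem _ ha))))
    have hspan : Ideal.span (((s.erase i).image q : Finset _) : Set (R ⧸ Ideal.span {x})) =
        maximalIdeal _ := by
      rw [maximalIdeal_quotient_eq, ← hs, Ideal.map_span]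
      refine le_antisymm (Ideal.span_mono ?_) (Ideal.span_le.2 ?_)
      · rw [Finset.coe_image]
        exact Set.image_mono (Finset.coe_subset.2 (Finset.erase_subset _ _))
      · rintro _ ⟨a, ha, rfl⟩
        by_cases hai : a = i
        · exact hai ▸ hqi
        · exact Ideal.subset_span (Finset.mem_coe.2 (Finset.mem_image_of_mem _
            (Finset.mem_erase.2 ⟨hai, ha⟩)))
    have hcard : ((s.erase i).image q).card ≤ n := by
      refine Finset.card_image_le.trans ?_
      rw [Finset.card_erase_of_mem his]; lia
    have hdim' : (n : WithBot ℕ∞) ≤ ringKrullDim (R ⧸ Ideal.span {x}) := by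
      have := ringKrullDim_le_ringKrullDim_quotient_add_card (R := R) {x} (by
        rw [IsLocalRing.ringJacobson_eq_maximalIdeal]; simpa using hxm)
      rw [Finset.coe_singleton, Finset.card_singleton] at this
      have h3 := hdim.trans this
      generalize ringKrullDim (R ⧸ Ideal.span {x}) = D at h3
      cases D with
      | bot => simp at h3
      | coe D =>
        norm_cast at h3 ⊢
        push_cast at h3
        exact (ENat.add_le_add_iff_right (by simp)).1 h3
    obtain ⟨hdom, rs', hlen, hmem, hreg⟩ := ih _ _ hspan hcard hdim'
    obtain ⟨rs, rfl⟩ := List.map_surjective_iff.2 (Ideal.Quotient.mk_surjective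
      (I := Ideal.span {x})) rs'
    have hpr : (Ideal.span {x}).IsPrime := (Ideal.Quotient.isDomain_iff_prime _).1 hdom
    obtain ⟨p, hp, hple⟩ := Ideal.exists_minimalPrimes_le (bot_le : ⊥ ≤ Ideal.span {x})
    have hpp : p.IsPrime := hp.1.1
    have hp0 : p = ⊥ := Submodule.eq_bot_of_le_smul_of_le_jacobson_bot (maximalIdeal R) p
      (IsNoetherian.noetherian _) (fun y hy => by
        obtain ⟨z, rfl⟩ := Ideal.mem_span_singleton.1 (hple hy)
        exact Ideal.mul_mem_mul hxm ((hpp.mem_or_mem hy).resolve_left (hxp p hp)))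
      (maximalIdeal_le_jacobson _)
    have hD : IsDomain R := by
      rw [hp0] at hpp
      exact IsDomain.of_bot_isPrime R
    refine ⟨hD, x :: rs, by simpa using hlen, ?_, ?_⟩
    · intro r hr
      rcases List.mem_cons.1 hr with rfl | hr
      · exact hxm
      · have := hmem _ (List.mem_map_of_mem hr)
        rw [mem_maximalIdeal, mem_nonunits_iff] at this ⊢
        exact fun h => this (h.map _)
    · have hx0 : x ≠ 0 := fun h => hxp p hp (h ▸ p.zero_mem)
      refine IsWeaklyRegular.cons (fun a b hab => mul_left_cancel₀ hx0 hab) ?_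
      have e : QuotSMulTop x R ≃ₗ[R] R ⧸ Ideal.span {x} :=
        Submodule.quotEquivOfEq _ _ (by
          rw [← Submodule.ideal_span_singleton_smul, smul_eq_mul, Ideal.mul_top])
      rw [e.isWeaklyRegular_congr]
      exact (isWeaklyRegular_map_algebraMap_iff (S := R ⧸ Ideal.span {x}) _ rs).1 hreg

/-- A regular local ring of dimension `n` has a regular sequence of length `n` in its maximal ideal. -/
theorem regular_seq' {R : Type} [CommRing R] [IsLocalRing R] [IsNoetherianRing R] {n : ℕ}
    (s : Finset R) (h : Ideal.span (s : Set R) = maximalIdeal R) (hc : s.card ≤ n)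
    (hn : (n : WithBot ℕ∞) ≤ ringKrullDim R) :
    ∃ rs : List R, rs.length = n ∧ (∀ r ∈ rs, r ∈ maximalIdeal R) ∧ IsRegular R rs := by
  obtain ⟨-, rs, h1, h2, h3⟩ := regular_seq n R s h hc hn
  refine ⟨rs, h1, h2, h3, fun h => (maximalIdeal.isMaximal R).ne_top (top_le_iff.1 ?_)⟩
  rw [h, smul_eq_mul, Ideal.mul_top]
  exact Ideal.span_le.2 h2

end

/-! ### Vanishing of `Ext` below the grade -/

section

open CategoryTheory Limits Opposite RingTheory.Sequence Abelian

/-- A form of Ischebeck's vanishing theorem: `Ext^j(N, R) = 0` for `j < depth R - d`, where `N` is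
finite and `y₁, …, y_d ∈ 𝔪` is a system of parameters modulo `ann N`. Induction on `d`: the kernel
and cokernel of `y₁ : N → N` are covered by the induction hypothesis, so `y₁` acts surjectively on
the finite module `Ext^j(N, R)`, which is zero by Nakayama. -/
theorem ischebeck {R : Type} [CommRing R] [IsLocalRing R] [IsNoetherianRing R] (rs : List R)
    (hrs : ∀ r ∈ rs, r ∈ maximalIdeal R) (hreg : IsRegular R rs) (ys : List R) :
    ∀ (_ : ∀ y ∈ ys, y ∈ maximalIdeal R) (N : Type) [AddCommGroup N] [Module R N]
    [Module.Finite R N] (_ : maximalIdeal R ≤ (Module.annihilator R N ⊔ Ideal.ofList ys).radical)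
    (j : ℕ) (_ : j + ys.length < rs.length),
    Subsingleton (Ext.{0} (ModuleCat.of R N) (ModuleCat.of R R) j) := by
  induction ys with
  | nil =>
    intro _ N _ _ _ hN j hj
    refine ModuleCat.subsingleton_ext_of_exists_isRegular (maximalIdeal R) (ModuleCat.of R N) ?_
      (ModuleCat.of R R) ?_ rs hrs hreg j (by simpa using hj)
    · change Module.support R N ⊆ _
      rw [Module.support_eq_zeroLocus, PrimeSpectrum.zeroLocus_subset_zeroLocus_iff]
      simpa using hN
    · change maximalIdeal R • (⊤ : Ideal R) < ⊤
      rw [smul_eq_mul, Ideal.mul_top]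
      exact (maximalIdeal.isMaximal R).ne_top.lt_top
  | cons y ys ih =>
    intro hys N _ _ _ hN j hj
    rw [List.length_cons] at hj
    have ih' := ih (fun z hz => hys z (List.mem_cons_of_mem _ hz))
    have key : ∀ (P : Type) [AddCommGroup P] [Module R P] [Module.Finite R P],
        Module.annihilator R N ≤ Module.annihilator R P → y ∈ Module.annihilator R P →
        ∀ j, j + ys.length < rs.length →
          Subsingleton (Ext.{0} (ModuleCat.of R P) (ModuleCat.of R R) j) := by
      intro P _ _ _ h1 h2 j hj
      refine ih' P (hN.trans (Ideal.radical_mono ?_)) j hj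
      rw [Ideal.ofList_cons, ← sup_assoc]
      exact sup_le_sup_right (sup_le h1 ((Ideal.span_singleton_le_iff_mem _).2 h2)) _
    let φ : N →ₗ[R] N := LinearMap.lsmul R N y
    have hS1 := shortExact_mk (LinearMap.ker φ).subtype φ.rangeRestrict
      (Submodule.injective_subtype _) φ.surjective_rangeRestrict
      (by rw [LinearMap.exact_iff, LinearMap.ker_rangeRestrict, Submodule.range_subtype])
    have hS2 := shortExact_mk (LinearMap.range φ).subtype (LinearMap.range φ).mkQ
      (Submodule.injective_subtype _) (Submodule.mkQ_surjective _)
      (by rw [LinearMap.exact_iff, Submodule.ker_mkQ, Submodule.range_subtype])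
    have k1 := key (LinearMap.ker φ)
      (LinearMap.annihilator_le_of_injective _ (Submodule.injective_subtype _))
      (Module.mem_annihilator.2 fun x => Subtype.ext x.2) j (by lia)
    have k2 := key (N ⧸ LinearMap.range φ)
      (LinearMap.annihilator_le_of_surjective _ (Submodule.mkQ_surjective _))
      (Module.mem_annihilator.2 fun x => by
        obtain ⟨x, rfl⟩ := Submodule.mkQ_surjective _ x
        rw [← map_smul]
        exact (Submodule.Quotient.mk_eq_zero _).2 ⟨x, rfl⟩) (1 + j) (by lia)
    -- `y` factors as `N → range φ → N`, and both maps are surjective on `Ext^j(-, R)`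
    have hsurj : ∀ η : Ext.{0} (ModuleCat.of R N) (ModuleCat.of R R) j, ∃ η', y • η' = η := by
      intro η
      obtain ⟨x₁, rfl⟩ := Ext.contravariant_sequence_exact₂ hS1 _ η (k1.elim _ _)
      obtain ⟨x₂, rfl⟩ := Ext.contravariant_sequence_exact₁ hS2 _ x₁ rfl (k2.elim _ _)
      refine ⟨x₂, ?_⟩
      refine Eq.symm ((Ext.mk₀_comp_mk₀_assoc (ModuleCat.ofHom φ.rangeRestrict)
        (ModuleCat.ofHom (LinearMap.range φ).subtype) x₂).trans ?_)
      have : ModuleCat.ofHom φ.rangeRestrict ≫ ModuleCat.ofHom (LinearMap.range φ).subtype =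
        y • 𝟙 (ModuleCat.of R N) := rfl
      rw [this, Ext.mk₀_smul, Ext.smul_comp, Ext.mk₀_id_comp]
    have htop : (⊤ : Submodule R (Ext.{0} (ModuleCat.of R N) (ModuleCat.of R R) j)) = ⊥ := by
      refine Submodule.eq_bot_of_le_smul_of_le_jacobson_bot (maximalIdeal R) ⊤
        Module.Finite.fg_top (fun η _ => ?_) (maximalIdeal_le_jacobson _)
      obtain ⟨η', rfl⟩ := hsurj η
      exact Submodule.smul_mem_smul (hys y List.mem_cons_self) Submodule.mem_top
    exact (Submodule.subsingleton_iff R).1 (subsingleton_of_bot_eq_top htop.symm)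

/-- Lifts to `R` of a system of parameters of `R / I`. -/
lemma exists_sop {R : Type} [CommRing R] [IsLocalRing R] [IsNoetherianRing R] (I : Ideal R)
    {d : ℕ} (hd : ringKrullDim (R ⧸ I) = d) : ∃ ys : List R, ys.length = d ∧
      (∀ y ∈ ys, y ∈ maximalIdeal R) ∧ maximalIdeal R ≤ (I ⊔ Ideal.ofList ys).radical := by
  classical
  have hnt : Nontrivial (R ⧸ I) := by
    by_contra h
    rw [not_nontrivial_iff_subsingleton] at h
    rw [ringKrullDim_eq_bot_of_subsingleton] at hd
    exact WithBot.bot_ne_coe hd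
  have hloc : IsLocalRing (R ⧸ I) := IsLocalRing.of_surjective' _ Ideal.Quotient.mk_surjective
  obtain ⟨s, hs, hc⟩ :=
    (maximalIdeal (R ⧸ I)).exists_finset_card_eq_height_of_isNoetherianRing
  have hcard : s.card = d := by
    have h1 := maximalIdeal_height_eq_ringKrullDim (R := R ⧸ I)
    rw [hd, ← hc] at h1
    exact_mod_cast h1
  obtain ⟨ys, hys⟩ := List.map_surjective_iff.2 (Ideal.Quotient.mk_surjective (I := I)) s.toList
  have hmem : ∀ y ∈ ys, y ∈ maximalIdeal R := fun y hy => by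
    have h1 : Ideal.Quotient.mk I y ∈ s := by
      rw [← Finset.mem_toList, ← hys]
      exact List.mem_map_of_mem hy
    have h2 : Ideal.Quotient.mk I y ∈ maximalIdeal (R ⧸ I) := hs.1.2 (Ideal.subset_span h1)
    rw [mem_maximalIdeal, mem_nonunits_iff] at h2 ⊢
    exact fun h => h2 (h.map _)
  refine ⟨ys, ?_, hmem, ?_⟩
  · rw [← hcard, ← Finset.length_toList, ← hys, List.length_map]
  · rw [Ideal.radical_eq_sInf]
    refine le_sInf fun p ⟨hp, hpp⟩ => ?_
    have hIp : I ≤ p := le_sup_left.trans hp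
    have hpr : (p.map (Ideal.Quotient.mk I)).IsPrime :=
      Ideal.map_isPrime_of_surjective Ideal.Quotient.mk_surjective (by rwa [Ideal.mk_ker])
    have h1 : Ideal.span (s : Set (R ⧸ I)) ≤ p.map (Ideal.Quotient.mk I) := by
      refine Ideal.span_le.2 fun z hz => ?_
      rw [Finset.mem_coe, ← Finset.mem_toList, ← hys] at hz
      obtain ⟨y, hy, rfl⟩ := List.mem_map.1 hz
      exact Ideal.mem_map_of_mem _ (hp (Ideal.mem_sup_right (Ideal.subset_span hy)))
    have h2 := hs.2 ⟨hpr, h1⟩ (le_maximalIdeal hpr.ne_top)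
    rw [maximalIdeal_quotient_eq] at h2
    have h3 := (Ideal.le_comap_map.trans (Ideal.comap_mono h2))
    rwa [Ideal.comap_map_of_surjective _ Ideal.Quotient.mk_surjective, ← RingHom.ker_eq_comap_bot,
      Ideal.mk_ker, sup_eq_left.2 hIp] at h3

end

/-! ### The two vanishing statements for local cohomology -/

section

open CategoryTheory Limits Opposite RingTheory.Sequence Abelian

lemma lc_of_subsingleton {R : Type} [CommRing R] (J : Ideal R) (a : ℕ) (M : ModuleCat.{0} R)
    [Subsingleton M] : Subsingleton ((localCohomology J a).obj M) := by
  refine lc_zero J a M fun t η => ⟨t, le_rfl, ?_⟩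
  have hM : 𝟙 M = 0 := (ModuleCat.isZero_of_subsingleton M).eq_of_src _ _
  rw [← Ext.comp_mk₀_id η, hM, Ext.mk₀_zero, Ext.comp_zero, Ext.comp_zero]

/-- `H^j_I(R) = 0` for `j < depth R - dim R / I`, with `ys` a system of parameters modulo `I`. -/
lemma lc_ring_zero {R : Type} [CommRing R] [IsLocalRing R] [IsNoetherianRing R] (rs : List R)
    (hrs : ∀ r ∈ rs, r ∈ maximalIdeal R) (hreg : IsRegular R rs) (ys : List R)
    (hys : ∀ y ∈ ys, y ∈ maximalIdeal R) (I : Ideal R)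
    (hI : maximalIdeal R ≤ (I ⊔ Ideal.ofList ys).radical) (j : ℕ)
    (hj : j + ys.length < rs.length) :
    Subsingleton ((localCohomology I j).obj (ModuleCat.of R R)) := by
  refine lc_zero I j _ fun t η => ⟨t, le_rfl, ?_⟩
  have hsub := ischebeck rs hrs hreg ys hys (R ⧸ I ^ t) (by
    rw [Ideal.annihilator_quotient]
    refine hI.trans (Ideal.radical_le_radical_iff.2 (sup_le (fun x hx => ?_)
      (le_sup_right.trans Ideal.le_radical)))
    exact ⟨t, Ideal.mem_sup_left (Ideal.pow_mem_pow hx t)⟩) j hj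
  rw [hsub.elim η 0, Ext.comp_zero]

lemma localCohomologyInt_induction {R : Type} [CommRing R] (I : Ideal R) (j : ℤ)
    (M : ModuleCat.{0} R) (p : ModuleCat.{0} R → Prop)
    (h : 0 ≤ j → p ((localCohomology I j.toNat).obj M)) (h' : p (ModuleCat.of R PUnit)) :
    p (localCohomologyInt I j M) := by
  unfold localCohomologyInt
  split_ifs with h0
  · exact h h0
  · exact h'

end

end LyuAux

end

/-- **Vanishing range of Lyubeznik's invariants.**  Let `(R, 𝔪)` be a regular local
ring of dimension `n`, essentially of finite type over a field, with residue field `k`,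
let `I ⊆ R` be an ideal and let `A = R/I` have Krull dimension `d`.  Then the Lyubeznik
invariants `λ_{a,i}(A)` can only be nonzero in the range `0 ≤ a ≤ d`, `0 ≤ i ≤ d`: if
`a > d` or `i > d` then `λ_{a,i}(A) = dim_k Hom_R(k, H^a_𝔪(H^{n−i}_I(R))) = 0`. -/
theorem lyubeznik_invariant_vanishes_outside_range
    (R : Type) [CommRing R] [IsLocalRing R] (hreg : IsRegularLocal R)
    (K : Type) [Field K] [Algebra K R] [Algebra.EssFiniteType K R]
    (n : ℕ) (hn : ringKrullDim R = n)
    (I : Ideal R) (d : ℕ) (hd : ringKrullDim (R ⧸ I) = d)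
    (a i : ℕ) (h : d < a ∨ d < i) :
    lyubeznik R I n a i = 0 := by
  obtain ⟨hnoeth, s, hs, hc⟩ := hreg
  obtain ⟨ys, hlen, hys, hrad⟩ := LyuAux.exists_sop I hd
  suffices hsub : Subsingleton ((localCohomology (maximalIdeal R) a).obj
      (localCohomologyInt I (n - i) (ModuleCat.of R R))) from
    Module.finrank_zero_of_subsingleton
  rcases h with h | h
  · have hT : LyuAux.Tors I (localCohomologyInt I (n - i) (ModuleCat.of R R)) :=
      LyuAux.localCohomologyInt_induction I _ _ (fun X => LyuAux.Tors I X)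
        (fun _ => LyuAux.lc_tors I _ _)
        (fun x => ⟨0, fun r _ => Subsingleton.elim (α := PUnit) _ _⟩)
    obtain ⟨b, rfl⟩ : ∃ b, a = ys.length + 1 + b := ⟨a - (d + 1), by lia⟩
    exact LyuAux.lc_zero _ _ _ (LyuAux.Z_main _ ys hys I _ hT hrad b)
  · have hM : Subsingleton (localCohomologyInt I (n - i) (ModuleCat.of R R)) := by
      refine LyuAux.localCohomologyInt_induction I _ _ (fun X => Subsingleton X) (fun h0 => ?_)
        (inferInstanceAs (Subsingleton PUnit))
      obtain ⟨rs, hrl, hrs, hreg⟩ := LyuAux.regular_seq' (n := n) s hs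
        (by rw [hn] at hc; exact_mod_cast hc.le) hn.ge
      exact LyuAux.lc_ring_zero rs hrs hreg ys hys I hrad _ (by lia)
    exact LyuAux.lc_of_subsingleton _ _ _
end
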